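/- There exists an absolute constant c > 0 such that for every integer n ≥ 2, every family of n pairwise disjoint segments in ℝ² in general position contains a subfamily of at least c·√n segments that admits a circumscribing polygon. -/

import Mathlib

noncomputable section

/-- A point of the plane. -/
abbrev Pt : Type := ℝ × ℝ

/-- The closed segment with endpoints `a` and `b`. -/
def Seg (a b : Pt) : Set Pt := segment ℝ a b

/-- The set of endpoints of the segments of a family `S`. -/
def SegEndpoints (S : Finset (Pt × Pt)) : Set Pt :=
  ⋃ s ∈ (S : Set (Pt × Pt)), ({s.1, s.2} : Set Pt)

/-- `S` is a family of (nondegenerate) pairwise disjoint segments. -/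
def DisjointFamily (S : Finset (Pt × Pt)) : Prop :=
  (∀ s ∈ S, s.1 ≠ s.2) ∧
  (S : Set (Pt × Pt)).Pairwise (fun s t => Disjoint (Seg s.1 s.2) (Seg t.1 t.2))

/-- No three endpoints of segments of `S` are collinear. -/
def GeneralPosition (S : Finset (Pt × Pt)) : Prop :=
  ∀ p ∈ SegEndpoints S, ∀ q ∈ SegEndpoints S, ∀ r ∈ SegEndpoints S,
    p ≠ q → p ≠ r → q ≠ r → ¬ Collinear ℝ ({p, q, r} : Set Pt)

/-- A simple polygon: a cyclic sequence of `k ≥ 3` pairwise distinct vertices such that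
two edges intersect iff they are consecutive, and consecutive edges meet exactly in
their common endpoint. -/
structure SimplePolygon : Type where
  k : ℕ
  three_le : 3 ≤ k
  vtx : ZMod k → Pt
  inj : Function.Injective vtx
  edge_inter : ∀ i j : ZMod k, i ≠ j →
    ((Seg (vtx i) (vtx (i + 1)) ∩ Seg (vtx j) (vtx (j + 1))).Nonempty ↔
      (j = i + 1 ∨ i = j + 1))
  edge_consec : ∀ i : ZMod k,
    Seg (vtx i) (vtx (i + 1)) ∩ Seg (vtx (i + 1)) (vtx (i + 2)) = {vtx (i + 1)}

/-- The union of the edges of a simple polygon. -/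
def SimplePolygon.edgeUnion (P : SimplePolygon) : Set Pt :=
  ⋃ i : ZMod P.k, Seg (P.vtx i) (P.vtx (i + 1))

/-- The closed region of a simple polygon: the union of its edges together with all
bounded connected components of the complement of the union of the edges. -/
def SimplePolygon.closedRegion (P : SimplePolygon) : Set Pt :=
  P.edgeUnion ∪
    {x | x ∉ P.edgeUnion ∧ Bornology.IsBounded (connectedComponentIn (P.edgeUnion)ᶜ x)}

/-- `P` is a circumscribing polygon for `S`: its vertex set is exactly the set of
endpoints of segments of `S`, and every segment of `S` lies in the closed region of `P`. -/
def IsCircumscribing (S : Finset (Pt × Pt)) (P : SimplePolygon) : Prop :=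
  Set.range P.vtx = SegEndpoints S ∧ ∀ s ∈ S, Seg s.1 s.2 ⊆ P.closedRegion

noncomputable section
open Set

def slp (p q : Pt) : ℝ := (q.2 - p.2) / (q.1 - p.1)

def ev (p q : Pt) (x : ℝ) : ℝ := p.2 + slp p q * (x - p.1)

def IsAff (f : ℝ → ℝ) : Prop := ∃ A B : ℝ, ∀ x, f x = A * x + B

lemma isAff_ev (p q : Pt) : IsAff (ev p q) :=
  ⟨slp p q, p.2 - slp p q * p.1, fun x => by unfold ev; ring⟩

lemma aff_le {f g : ℝ → ℝ} (hf : IsAff f) (hg : IsAff g) {a b x : ℝ} (ha : a ≤ x) (hb : x ≤ b)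
    (h1 : f a ≤ g a) (h2 : f b ≤ g b) : f x ≤ g x := by
  obtain ⟨A, B, hf⟩ := hf
  obtain ⟨C, D, hg⟩ := hg
  simp only [hf, hg] at *
  rcases le_total A C with h | h
  · nlinarith
  · nlinarith

lemma aff_lt {f g : ℝ → ℝ} (hf : IsAff f) (hg : IsAff g) {a b x : ℝ} (ha : a ≤ x) (hb : x ≤ b)
    (h1 : f a < g a) (h2 : f b < g b) : f x < g x := by
  obtain ⟨A, B, hf⟩ := hf
  obtain ⟨C, D, hg⟩ := hg
  simp only [hf, hg] at *
  rcases le_total A C with h | h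
  · nlinarith
  · nlinarith

lemma isAff_sub {f g : ℝ → ℝ} (hf : IsAff f) (hg : IsAff g) : IsAff (fun x => f x - g x) := by
  obtain ⟨A, B, hf⟩ := hf
  obtain ⟨C, D, hg⟩ := hg
  exact ⟨A - C, B - D, fun x => by simp only [hf, hg]; ring⟩

lemma isAff_smul {f : ℝ → ℝ} (c : ℝ) (hf : IsAff f) : IsAff (fun x => c * f x) := by
  obtain ⟨A, B, hf⟩ := hf
  exact ⟨c * A, c * B, fun x => by simp only [hf]; ring⟩

lemma isAff_const (c : ℝ) : IsAff (fun _ => c) := ⟨0, c, fun x => by ring⟩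

lemma isAff_cont {f : ℝ → ℝ} (hf : IsAff f) : Continuous f := by
  obtain ⟨A, B, hf⟩ := hf
  have : f = fun x => A * x + B := funext hf
  rw [this]; fun_prop

@[simp] lemma ev_left (p q : Pt) : ev p q p.1 = p.2 := by simp [ev]

lemma ev_right {p q : Pt} (h : p.1 ≠ q.1) : ev p q q.1 = q.2 := by
  have : q.1 - p.1 ≠ 0 := sub_ne_zero.2 h.symm
  unfold ev slp; field_simp; ring

lemma ev_symm {p q : Pt} (h : p.1 ≠ q.1) (x : ℝ) : ev p q x = ev q p x := by
  have h1 : q.1 - p.1 ≠ 0 := sub_ne_zero.2 h.symm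
  have h2 : p.1 - q.1 ≠ 0 := sub_ne_zero.2 h
  unfold ev slp; field_simp; ring

lemma Seg_symm (p q : Pt) : Seg p q = Seg q p := segment_symm ℝ p q

lemma mem_Seg {p q z : Pt} (h : p.1 < q.1) :
    z ∈ Seg p q ↔ p.1 ≤ z.1 ∧ z.1 ≤ q.1 ∧ z.2 = ev p q z.1 := by
  have h1 : q.1 - p.1 ≠ 0 := (sub_pos.2 h).ne'
  unfold Seg
  rw [segment_eq_image']
  constructor
  · rintro ⟨t, ⟨ht0, ht1⟩, rfl⟩
    simp only [Prod.fst_add, Prod.smul_fst, Prod.fst_sub, smul_eq_mul, Prod.snd_add, Prod.smul_snd,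
      Prod.snd_sub]
    refine ⟨by nlinarith, by nlinarith, ?_⟩
    unfold ev slp; field_simp; ring
  · rintro ⟨ha, hb, hc⟩
    refine ⟨(z.1 - p.1) / (q.1 - p.1), ⟨by apply div_nonneg <;> linarith, ?_⟩, ?_⟩
    · rw [div_le_one (by linarith)]; linarith
    · ext
      · simp; field_simp; ring
      · simp [hc, ev, slp]; field_simp

/-- Weak comparability of two edges on their common range. -/
def Below (p q r s : Pt) : Prop :=
  ∀ x, p.1 ≤ x → x ≤ q.1 → r.1 ≤ x → x ≤ s.1 → ev p q x ≤ ev r s x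

lemma below_of_ends {p q r s : Pt} (hpq : p.1 < q.1) (hrs : r.1 < s.1)
    (h1 : r.1 ≤ p.1 → p.1 ≤ s.1 → p.2 ≤ ev r s p.1)
    (h2 : r.1 ≤ q.1 → q.1 ≤ s.1 → q.2 ≤ ev r s q.1)
    (h3 : p.1 ≤ r.1 → r.1 ≤ q.1 → ev p q r.1 ≤ r.2)
    (h4 : p.1 ≤ s.1 → s.1 ≤ q.1 → ev p q s.1 ≤ s.2) : Below p q r s := by
  intro x hx1 hx2 hx3 hx4
  apply aff_le (isAff_ev p q) (isAff_ev r s) (a := max p.1 r.1) (b := min q.1 s.1)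
  · exact max_le hx1 hx3
  · exact le_min hx2 hx4
  · rcases le_total p.1 r.1 with h | h
    · rw [max_eq_right h, ev_left]; exact h3 h (by linarith)
    · rw [max_eq_left h, ev_left]; exact h1 h (by linarith)
  · rcases le_total q.1 s.1 with h | h
    · rw [min_eq_left h, ev_right hpq.ne]; exact h2 (by linarith) h
    · rw [min_eq_right h, ev_right hrs.ne]; exact h4 (by linarith) h

/-- The three points are not on a line. -/
def NonCol (p q r : Pt) : Prop := (q.1 - p.1) * (r.2 - p.2) ≠ (r.1 - p.1) * (q.2 - p.2)

def GPos (E : Set Pt) : Prop :=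
  (∀ p ∈ E, ∀ q ∈ E, p.1 = q.1 → p = q) ∧
  ∀ p ∈ E, ∀ q ∈ E, ∀ r ∈ E, p ≠ q → p ≠ r → q ≠ r → NonCol p q r

lemma GPos.ne_ev {E : Set Pt} (hE : GPos E) {p q r : Pt} (hp : p ∈ E) (hq : q ∈ E) (hr : r ∈ E)
    (hpq : p ≠ q) (hpr : p ≠ r) (hqr : q ≠ r) : r.2 ≠ ev p q r.1 := by
  intro h
  have hx : p.1 ≠ q.1 := fun h => hpq (hE.1 p hp q hq h)
  have h1 : q.1 - p.1 ≠ 0 := sub_ne_zero.2 hx.symm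
  apply hE.2 p hp q hq r hr hpq hpr hqr
  rw [h]; unfold ev slp; field_simp; ring

lemma disj_of_below {E : Set Pt} (hE : GPos E) {p q r s : Pt} (hp : p ∈ E) (hq : q ∈ E)
    (hr : r ∈ E) (hs : s ∈ E) (hpq : p.1 < q.1) (hrs : r.1 < s.1)
    (hpr : p ≠ r) (hps : p ≠ s) (hqr : q ≠ r) (hqs : q ≠ s) (hB : Below p q r s) :
    Disjoint (Seg p q) (Seg r s) := by
  have npq : p ≠ q := fun h => by rw [h] at hpq; exact lt_irrefl _ hpq
  have nrs : r ≠ s := fun h => by rw [h] at hrs; exact lt_irrefl _ hrs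
  rw [Set.disjoint_left]
  intro z hz hz'
  rw [mem_Seg hpq] at hz
  rw [mem_Seg hrs] at hz'
  obtain ⟨a1, a2, a3⟩ := hz
  obtain ⟨b1, b2, b3⟩ := hz'
  have : ev p q z.1 < ev r s z.1 := by
    apply aff_lt (isAff_ev p q) (isAff_ev r s) (a := max p.1 r.1) (b := min q.1 s.1)
    · exact max_le a1 b1
    · exact le_min a2 b2
    · apply lt_of_le_of_ne
      · exact hB _ (le_max_left _ _) (max_le hpq.le (by linarith)) (le_max_right _ _) (max_le (by linarith) hrs.le)
      · rcases le_total p.1 r.1 with h | h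
        · rw [max_eq_right h, ev_left]; exact (hE.ne_ev hp hq hr npq hpr hqr).symm
        · rw [max_eq_left h, ev_left]; exact (hE.ne_ev hr hs hp nrs hpr.symm hps.symm)
    · apply lt_of_le_of_ne
      · exact hB _ (le_min hpq.le (by linarith)) (min_le_left _ _) (le_min (by linarith) hrs.le) (min_le_right _ _)
      · rcases le_total q.1 s.1 with h | h
        · rw [min_eq_left h, ev_right hpq.ne]; exact (hE.ne_ev hr hs hq nrs hqr.symm hqs.symm)
        · rw [min_eq_right h, ev_right hrs.ne]; exact (hE.ne_ev hp hq hs npq hps hqs).symm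
  linarith

lemma mem_Seg_ev {p q z : Pt} (h : p.1 ≠ q.1) (hz : z ∈ Seg p q) : z.2 = ev p q z.1 := by
  rcases lt_or_gt_of_ne h with h | h
  · exact ((mem_Seg h).1 hz).2.2
  · rw [Seg_symm] at hz; rw [ev_symm h.ne']; exact ((mem_Seg h).1 hz).2.2

lemma inter_share {E : Set Pt} (hE : GPos E) {p q r : Pt} (hp : p ∈ E) (hq : q ∈ E)
    (hr : r ∈ E) (hpq : p ≠ q) (hpr : p ≠ r) (hqr : q ≠ r) :
    Seg p q ∩ Seg p r = {p} := by
  have xpq : p.1 ≠ q.1 := fun h => hpq (hE.1 p hp q hq h)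
  have xpr : p.1 ≠ r.1 := fun h => hpr (hE.1 p hp r hr h)
  apply Set.eq_singleton_iff_unique_mem.2
  refine ⟨⟨left_mem_segment ℝ p q, left_mem_segment ℝ p r⟩, ?_⟩
  rintro z ⟨hz, hz'⟩
  have e1 := mem_Seg_ev xpq hz
  have e2 := mem_Seg_ev xpr hz'
  have e3 : (slp p q - slp p r) * (z.1 - p.1) = 0 := by
    unfold ev at e1 e2; linarith
  rcases mul_eq_zero.1 e3 with h | h
  · exfalso
    have h1 : q.1 - p.1 ≠ 0 := sub_ne_zero.2 xpq.symm
    have h2 : r.1 - p.1 ≠ 0 := sub_ne_zero.2 xpr.symm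
    apply hE.2 p hp q hq r hr hpq hpr hqr
    unfold slp at h
    field_simp at h
    linarith
  · have hx : z.1 = p.1 := by linarith
    ext
    · exact hx
    · rw [e1, hx, ev_left]

end

noncomputable section
open Set

def csum (F : Pt → Pt → ZMod 2) : List Pt → ZMod 2
  | a :: b :: l => F a b + csum F (b :: l)
  | _ => 0

lemma csum_append (F : Pt → Pt → ZMod 2) (l : List Pt) (m : Pt) (r : List Pt) :
    csum F (l ++ m :: r) = csum F (l ++ [m]) + csum F (m :: r) := by
  induction l with
  | nil => simp [csum]
  | cons a l ih =>
    cases l with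
    | nil => simp [csum]
    | cons b l =>
      simp only [List.cons_append, csum] at ih ⊢
      rw [ih]; ring

lemma csum_zero {F : Pt → Pt → ZMod 2} {l : List Pt} (h : l.IsChain (fun a b => F a b = 0)) :
    csum F l = 0 := by
  induction l with
  | nil => rfl
  | cons a l ih =>
    cases l with
    | nil => rfl
    | cons b l =>
      rw [List.isChain_cons_cons] at h
      simp only [csum, h.1, ih h.2, add_zero]

lemma csum_tel {F : Pt → Pt → ZMod 2} {φ : Pt → ZMod 2} (a : Pt) (l : List Pt) (z : Pt)
    (h : (a :: l).IsChain (fun a b => F a b = φ a + φ b)) (hz : (a :: l).getLast? = some z) :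
    csum F (a :: l) = φ a + φ z := by
  induction l generalizing a with
  | nil => simp at hz; subst hz; simp [csum]; exact (CharTwo.add_self_eq_zero _).symm
  | cons b l ih =>
    rw [List.isChain_cons_cons] at h
    have := ih b h.2 (by simpa using hz)
    rw [csum, this, h.1]
    have := CharTwo.add_self_eq_zero (φ b)
    linear_combination this

lemma csum_eq_sum (F : Pt → Pt → ZMod 2) (l : List Pt) :
    csum F l = ∑ k ∈ Finset.range (l.length - 1), F (l.getD k 0) (l.getD (k + 1) 0) := by
  induction l with
  | nil => rfl
  | cons a l ih =>
    cases l with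
    | nil => rfl
    | cons b l =>
      rw [csum, ih]
      simp only [List.length_cons, Nat.add_sub_cancel]
      rw [Finset.sum_range_succ']
      rw [add_comm]
      rfl

lemma sum_zmod {n : ℕ} [NeZero n] {M : Type*} [AddCommMonoid M] (g : ℕ → M) :
    ∑ i : ZMod n, g i.val = ∑ k ∈ Finset.range n, g k := by
  cases n with
  | zero => exact absurd rfl (NeZero.ne 0)
  | succ m => exact Fin.sum_univ_eq_sum_range g (m + 1)

lemma val_succ {n : ℕ} [NeZero n] (hn : 1 < n) (i : ZMod n) : (i + 1).val = (i.val + 1) % n := by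
  have : Fact (1 < n) := ⟨hn⟩
  rw [ZMod.val_add, ZMod.val_one]

lemma getD_last {W : List Pt} {z : Pt} (hz : W.getLast? = some z) : W.getD (W.length - 1) 0 = z := by
  rw [List.getLast?_eq_getElem?] at hz
  simp [List.getD, hz]

lemma sum_cyc (F : Pt → Pt → ZMod 2) (W : List Pt) (z : Pt) (hn : 1 < W.length)
    [NeZero W.length] (hz : W.getLast? = some z) :
    ∑ i : ZMod W.length, F (W.getD i.val 0) (W.getD (i + 1).val 0) = csum F (z :: W) := by
  have h1 : ∀ i : ZMod W.length, (i + 1).val = (i.val + 1) % W.length := val_succ hn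
  simp only [h1]
  rw [sum_zmod (fun k => F (W.getD k 0) (W.getD ((k + 1) % W.length) 0)), csum_eq_sum]
  obtain ⟨m, hm⟩ : ∃ m, W.length = m + 1 := ⟨W.length - 1, by omega⟩
  have h2 : (z :: W).length - 1 = m + 1 := by simp [hm]
  rw [h2, Finset.sum_range_succ', hm, Finset.sum_range_succ]
  congr 1
  · apply Finset.sum_congr rfl
    intro k hk
    rw [Finset.mem_range] at hk
    rw [Nat.mod_eq_of_lt (by omega)]
    simp
  · have := getD_last hz
    rw [hm, Nat.add_sub_cancel] at this
    simp only [List.getD_cons_zero, List.getD_cons_succ, this, Nat.mod_self]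

lemma chain_cyc {Q : Pt → Pt → Prop} (W : List Pt) (z : Pt) (hn : 1 < W.length)
    [NeZero W.length] (hz : W.getLast? = some z) (hQ : (z :: W).IsChain Q) (i : ZMod W.length) :
    Q (W.getD i.val 0) (W.getD (i + 1).val 0) := by
  rw [val_succ hn]
  rw [List.isChain_iff_getElem] at hQ
  have hi := ZMod.val_lt i
  rcases Nat.lt_or_ge (i.val + 1) W.length with h | h
  · rw [Nat.mod_eq_of_lt h]
    have := hQ (i.val + 1) (by simp; omega)
    simpa [List.getD, h, hi] using this
  · have h' : i.val + 1 = W.length := by omega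
    rw [h', Nat.mod_self]
    have h0 := getD_last hz
    have : i.val = W.length - 1 := by omega
    rw [this, h0]
    have := hQ 0 (by simp; omega)
    have h3 : 0 < W.length := by omega
    simpa [List.getD, h3] using this

lemma getD_inj {W : List Pt} (hnd : W.Nodup) [NeZero W.length] :
    Function.Injective (fun i : ZMod W.length => W.getD i.val 0) := by
  intro i j h
  have hi := ZMod.val_lt i
  have hj := ZMod.val_lt j
  simp only [List.getD, List.getElem?_eq_getElem hi, List.getElem?_eq_getElem hj, Option.getD_some] at h
  exact ZMod.val_injective _ ((List.Nodup.getElem_inj_iff hnd).1 h)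

lemma range_getD (W : List Pt) [NeZero W.length] :
    Set.range (fun i : ZMod W.length => W.getD i.val 0) = {p | p ∈ W} := by
  ext p
  simp only [Set.mem_range, Set.mem_ofPred_eq]
  constructor
  · rintro ⟨i, rfl⟩
    have hi := ZMod.val_lt i
    simp [List.getD, hi]
  · intro hp
    obtain ⟨k, hk, rfl⟩ := List.getElem_of_mem hp
    refine ⟨(k : ZMod W.length), ?_⟩
    rw [ZMod.val_cast_of_lt hk]
    simp [List.getD, hk]

def hb (p w : Pt) : ZMod 2 := if p.1 ≤ w.1 then 1 else 0

def ab (p q w : Pt) : ZMod 2 := if w.2 < ev p q w.1 then 1 else 0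

def Fpar (w p q : Pt) : ZMod 2 := (hb p w + hb q w) * ab p q w

lemma hb_ev {p w0 : Pt} (h : p.1 ≠ w0.1) : ∀ᶠ w in nhds w0, hb p w = hb p w0 := by
  rcases lt_or_gt_of_ne h with h | h
  · have : ∀ᶠ w : Pt in nhds w0, p.1 < w.1 := continuousAt_fst.eventually (lt_mem_nhds h)
    filter_upwards [this] with w hw
    simp [hb, hw.le, h.le]
  · have : ∀ᶠ w : Pt in nhds w0, w.1 < p.1 := continuousAt_fst.eventually (gt_mem_nhds h)
    filter_upwards [this] with w hw
    simp [hb, hw.not_ge, h.not_ge]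

lemma ab_ev {p q w0 : Pt} (h : w0.2 ≠ ev p q w0.1) : ∀ᶠ w in nhds w0, ab p q w = ab p q w0 := by
  have hc : Continuous (fun w : Pt => ev p q w.1 - w.2) :=
    ((isAff_cont (isAff_ev p q)).comp continuous_fst).sub continuous_snd
  rcases lt_or_gt_of_ne h with h | h
  · have : ∀ᶠ w : Pt in nhds w0, 0 < ev p q w.1 - w.2 :=
      hc.continuousAt.eventually (lt_mem_nhds (by linarith))
    filter_upwards [this] with w hw
    have hw' : w.2 < ev p q w.1 := by linarith
    simp [ab, hw', h]
  · have : ∀ᶠ w : Pt in nhds w0, ev p q w.1 - w.2 < 0 :=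
      hc.continuousAt.eventually (gt_mem_nhds (by linarith))
    filter_upwards [this] with w hw
    have hw' : ¬ w.2 < ev p q w.1 := by linarith
    simp [ab, hw', h.not_gt]

lemma ev_mem_of_between {p q w : Pt} (hx : p.1 ≠ q.1) (hb1 : hb p w + hb q w ≠ 0)
    (hw : w.2 = ev p q w.1) : w ∈ Seg p q := by
  rcases lt_or_gt_of_ne hx with h | h
  · rw [mem_Seg h]
    unfold hb at hb1
    split_ifs at hb1 with h1 h2 h2
    · exact absurd (CharTwo.add_self_eq_zero _) hb1
    · exact ⟨h1, by linarith, hw⟩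
    · linarith
    · simp at hb1
  · rw [Seg_symm, mem_Seg h]
    rw [ev_symm hx] at hw
    unfold hb at hb1
    split_ifs at hb1 with h1 h2 h2
    · exact absurd (CharTwo.add_self_eq_zero _) hb1
    · linarith
    · exact ⟨h2, by linarith, hw⟩
    · simp at hb1

lemma sum_shift {n : ℕ} [NeZero n] (g : ZMod n → ZMod 2) : ∑ i, g (i + 1) = ∑ i, g i :=
  Equiv.sum_comp (Equiv.addRight (1 : ZMod n)) g

lemma par_regroup {n : ℕ} [NeZero n] (a b : ZMod n → ZMod 2) :
    ∑ i, (a i + a (i + 1)) * b i = ∑ i, a (i + 1) * (b (i + 1) + b i) := by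
  have := sum_shift (fun i => a i * b i)
  simp only [add_mul, mul_add, Finset.sum_add_distrib]
  rw [← this]

lemma par_loc {n : ℕ} [NeZero n] (v : ZMod n → Pt) (hx : ∀ i, (v i).1 ≠ (v (i + 1)).1) (w0 : Pt)
    (hw0 : ∀ i, w0 ∉ Seg (v i) (v (i + 1))) :
    ∀ᶠ w in nhds w0, ∑ i, Fpar w (v i) (v (i + 1)) = ∑ i, Fpar w0 (v i) (v (i + 1)) := by
  have h1 : ∀ᶠ w in nhds w0, ∀ i, hb (v (i + 1)) w * (ab (v (i + 1)) (v (i + 1 + 1)) w + ab (v i) (v (i + 1)) w)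
      = hb (v (i + 1)) w0 * (ab (v (i + 1)) (v (i + 1 + 1)) w + ab (v i) (v (i + 1)) w) := by
    rw [Filter.eventually_all]
    intro i
    by_cases h : (v (i + 1)).1 = w0.1
    · have hne : w0.2 ≠ (v (i + 1)).2 := by
        intro h2
        apply hw0 (i + 1)
        have : w0 = v (i + 1) := Prod.ext h.symm h2
        rw [this]; exact left_mem_segment ℝ _ _
      have e1 : ev (v (i + 1)) (v (i + 1 + 1)) w0.1 = (v (i + 1)).2 := by rw [← h, ev_left]
      have e2 : ev (v i) (v (i + 1)) w0.1 = (v (i + 1)).2 := by rw [← h, ev_right (hx i)]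
      filter_upwards [ab_ev (p := v (i + 1)) (q := v (i + 1 + 1)) (by rwa [e1]),
        ab_ev (p := v i) (q := v (i + 1)) (by rwa [e2])] with w g1 g2
      have : ab (v (i + 1)) (v (i + 1 + 1)) w + ab (v i) (v (i + 1)) w = 0 := by
        rw [g1, g2]; unfold ab; rw [e1, e2]; exact CharTwo.add_self_eq_zero _
      rw [this, mul_zero, mul_zero]
    · filter_upwards [hb_ev h] with w g
      rw [g]
  have h2 : ∀ᶠ w in nhds w0, ∀ i, (hb (v i) w0 + hb (v (i + 1)) w0) * ab (v i) (v (i + 1)) w =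
      (hb (v i) w0 + hb (v (i + 1)) w0) * ab (v i) (v (i + 1)) w0 := by
    rw [Filter.eventually_all]
    intro i
    by_cases h : hb (v i) w0 + hb (v (i + 1)) w0 = 0
    · simp [h]
    · have : w0.2 ≠ ev (v i) (v (i + 1)) w0.1 := fun h3 => hw0 i (ev_mem_of_between (hx i) h h3)
      filter_upwards [ab_ev this] with w g
      rw [g]
  filter_upwards [h1, h2] with w g1 g2
  unfold Fpar
  rw [par_regroup (fun i => hb (v i) w) (fun i => ab (v i) (v (i + 1)) w), Finset.sum_congr rfl (fun i _ => g1 i),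
    ← par_regroup (fun i => hb (v i) w0) (fun i => ab (v i) (v (i + 1)) w), Finset.sum_congr rfl (fun i _ => g2 i)]

lemma between_of_hb {p q w : Pt} (h : hb p w + hb q w ≠ 0) :
    (p.1 ≤ w.1 ∧ w.1 < q.1) ∨ (q.1 ≤ w.1 ∧ w.1 < p.1) := by
  unfold hb at h
  split_ifs at h with h1 h2 h2
  · exact absurd (CharTwo.add_self_eq_zero _) h
  · left; exact ⟨h1, not_le.1 h2⟩
  · right; exact ⟨h2, not_le.1 h1⟩
  · simp at h

lemma par_far {n : ℕ} [NeZero n] (v : ZMod n → Pt) (hx : ∀ i, (v i).1 ≠ (v (i + 1)).1) (B : ℝ)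
    (hB : ∀ i, |(v i).1| ≤ B ∧ |(v i).2| ≤ B) (w : Pt) (hw : B < |w.1| ∨ B < |w.2|) :
    ∑ i, Fpar w (v i) (v (i + 1)) = 0 := by
  have hz : ∑ i, (hb (v i) w + hb (v (i + 1)) w) = 0 := by
    rw [Finset.sum_add_distrib, sum_shift (fun i => hb (v i) w)]
    exact CharTwo.add_self_eq_zero _
  have hbd : ∀ i, |w.1| ≤ B → hb (v i) w + hb (v (i + 1)) w ≠ 0 →
      -B ≤ ev (v i) (v (i + 1)) w.1 ∧ ev (v i) (v (i + 1)) w.1 ≤ B := by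
    intro i hw1 hne
    have ha := (hB i).2
    have hb' := (hB (i + 1)).2
    rw [abs_le] at ha hb'
    have e1 := ev_left (v i) (v (i + 1))
    have e2 := ev_right (hx i)
    rcases between_of_hb hne with h | h
    · exact ⟨aff_le (isAff_const (-B)) (isAff_ev _ _) h.1 h.2.le (by linarith) (by linarith),
        aff_le (isAff_ev _ _) (isAff_const B) h.1 h.2.le (by linarith) (by linarith)⟩
    · exact ⟨aff_le (isAff_const (-B)) (isAff_ev _ _) h.1 h.2.le (by linarith) (by linarith),
        aff_le (isAff_ev _ _) (isAff_const B) h.1 h.2.le (by linarith) (by linarith)⟩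
  by_cases h1 : B < |w.1|
  · apply Finset.sum_eq_zero
    intro i _
    unfold Fpar
    by_contra hne
    have := left_ne_zero_of_mul hne
    have ha := abs_le.1 (hB i).1
    have hb' := abs_le.1 (hB (i + 1)).1
    have : |w.1| ≤ B := by
      rw [abs_le]
      rcases between_of_hb this with h | h <;> constructor <;> linarith
    linarith
  · push Not at h1
    have h2 : B < |w.2| := by
      rcases hw with h | h
      · linarith
      · exact h
    rcases lt_abs.1 h2 with h3 | h3
    · apply Finset.sum_eq_zero
      intro i _
      unfold Fpar
      by_contra hne
      have h4 := hbd i h1 (left_ne_zero_of_mul hne)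
      apply right_ne_zero_of_mul hne
      unfold ab
      rw [if_neg]; linarith
    · rw [← hz]
      apply Finset.sum_congr rfl
      intro i _
      unfold Fpar
      by_cases h5 : hb (v i) w + hb (v (i + 1)) w = 0
      · rw [h5, zero_mul]
      · have h4 := hbd i h1 h5
        unfold ab
        rw [if_pos (by linarith), mul_one]

lemma par_bounded {n : ℕ} [NeZero n] (v : ZMod n → Pt) (hx : ∀ i, (v i).1 ≠ (v (i + 1)).1) (w0 : Pt)
    (hw0 : w0 ∉ ⋃ i, Seg (v i) (v (i + 1))) (hpar : ∑ i, Fpar w0 (v i) (v (i + 1)) = 1) :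
    Bornology.IsBounded (connectedComponentIn (⋃ i, Seg (v i) (v (i + 1)))ᶜ w0) := by
  obtain ⟨B, hB⟩ : ∃ B, ∀ i, |(v i).1| ≤ B ∧ |(v i).2| ≤ B := by
    refine ⟨∑ i, (|(v i).1| + |(v i).2|), fun i => ?_⟩
    have := Finset.single_le_sum (f := fun i => |(v i).1| + |(v i).2|) (fun i _ => by positivity)
      (Finset.mem_univ i)
    constructor
    · linarith [abs_nonneg (v i).2]
    · linarith [abs_nonneg (v i).1]
  let : TopologicalSpace (ZMod 2) := ⊥
  have : DiscreteTopology (ZMod 2) := ⟨rfl⟩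
  have hsub : connectedComponentIn (⋃ i, Seg (v i) (v (i + 1)))ᶜ w0 ⊆ Metric.closedBall 0 B := by
    intro w hw
    have hc : ContinuousOn (fun w => ∑ i, Fpar w (v i) (v (i + 1)))
        (connectedComponentIn (⋃ i, Seg (v i) (v (i + 1)))ᶜ w0) := by
      intro u hu
      have hu' := connectedComponentIn_subset _ _ hu
      apply ContinuousAt.continuousWithinAt
      have := par_loc v hx u (fun i hi => hu' (mem_iUnion.2 ⟨i, hi⟩))
      exact continuousAt_const.congr (this.mono fun _ h => h.symm)
    have heq := isPreconnected_connectedComponentIn.constant hc hw (mem_connectedComponentIn hw0)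
    rw [hpar] at heq
    rw [mem_closedBall_zero_iff, Prod.norm_def]
    apply max_le
    · by_contra hcon
      push Not at hcon
      rw [par_far v hx B hB w (Or.inl hcon)] at heq
      exact zero_ne_one heq
    · by_contra hcon
      push Not at hcon
      rw [par_far v hx B hB w (Or.inr hcon)] at heq
      exact zero_ne_one heq
  exact Metric.isBounded_closedBall.subset hsub

lemma chain_of_cyc {Q : Pt → Pt → Prop} (W : List Pt) (z : Pt) (hn : 1 < W.length)
    [NeZero W.length] (hz : W.getLast? = some z)
    (hQ : ∀ i : ZMod W.length, Q (W.getD i.val 0) (W.getD (i + 1).val 0)) :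
    (z :: W).IsChain Q := by
  rw [List.isChain_iff_getElem]
  intro k hk
  have hk' : k < W.length := by simpa using hk
  cases k with
  | zero =>
    have := hQ ((W.length - 1 : ℕ) : ZMod W.length)
    rw [val_succ hn, ZMod.val_cast_of_lt (by omega), getD_last hz, Nat.sub_add_cancel (by omega), Nat.mod_self] at this
    simpa [List.getD, hk'] using this
  | succ k =>
    have := hQ (k : ZMod W.length)
    rw [val_succ hn, ZMod.val_cast_of_lt (by omega), Nat.mod_eq_of_lt hk'] at this
    have h3 : k < W.length := by omega
    simpa [List.getD, hk', h3] using this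

lemma polygon_of_list {E : Set Pt} (hE : GPos E) {SG : Pt → Pt → Prop}
    (hNC : ∀ p q r s, SG p q → SG r s → p ≠ r → p ≠ s → q ≠ r → q ≠ s →
      Disjoint (Seg p q) (Seg r s))
    (W : List Pt) (hnd : W.Nodup) (hlen : 3 ≤ W.length) (hWE : ∀ p ∈ W, p ∈ E) (z : Pt)
    (hz : W.getLast? = some z) (hch : (z :: W).IsChain SG) :
    ∃ P : SimplePolygon, Set.range P.vtx = {p | p ∈ W} ∧
      (∀ Q : Pt → Pt → Prop, (∀ i, Q (P.vtx i) (P.vtx (i + 1))) ↔ (z :: W).IsChain Q) ∧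
      (∀ w, w ∉ P.edgeUnion → csum (Fpar w) (z :: W) = 1 →
        Bornology.IsBounded (connectedComponentIn (P.edgeUnion)ᶜ w)) := by
  have : NeZero W.length := ⟨by omega⟩
  have : Fact (1 < W.length) := ⟨by omega⟩
  set v : ZMod W.length → Pt := fun i => W.getD i.val 0 with hv
  have vinj : Function.Injective v := getD_inj hnd
  have vE : ∀ i, v i ∈ E := by
    intro i
    apply hWE
    have : v i ∈ Set.range v := ⟨i, rfl⟩
    rw [hv, range_getD] at this
    exact this
  have vSG : ∀ i, SG (v i) (v (i + 1)) := fun i => chain_cyc W z (by omega) hz hch i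
  have one_ne : (1 : ZMod W.length) ≠ 0 := one_ne_zero
  have two_ne : (2 : ZMod W.length) ≠ 0 := by
    intro h
    have h2 : ((2 : ℕ) : ZMod W.length) = 0 := by exact_mod_cast h
    rw [ZMod.natCast_eq_zero_iff] at h2
    have := Nat.le_of_dvd (by norm_num) h2
    omega
  refine ⟨⟨W.length, hlen, v, vinj, ?_, ?_⟩, range_getD W,
    fun Q => ⟨fun h => chain_of_cyc W z (by omega) hz h, fun h => chain_cyc W z (by omega) hz h⟩, ?_⟩
  · intro i j hij
    constructor
    · intro hne
      by_contra hcon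
      push Not at hcon
      have := hNC _ _ _ _ (vSG i) (vSG j) (fun h => hij (vinj h))
        (fun h => hcon.2 (vinj h)) (fun h => hcon.1 (vinj h).symm)
        (fun h => hij (by have := vinj h; exact add_right_cancel this))
      rw [Set.disjoint_iff_inter_eq_empty] at this
      rw [this] at hne
      exact Set.not_nonempty_empty hne
    · rintro (h | h)
      · subst h
        exact ⟨v (i + 1), right_mem_segment ℝ _ _, left_mem_segment ℝ _ _⟩
      · subst h
        exact ⟨v (j + 1), left_mem_segment ℝ _ _, right_mem_segment ℝ _ _⟩
  · intro i
    rw [Seg_symm (v i)]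
    apply inter_share hE (vE _) (vE _) (vE _)
    · intro h
      have := vinj h
      apply one_ne
      linear_combination this
    · intro h
      have := vinj h
      apply one_ne
      linear_combination -this
    · intro h
      have := vinj h
      apply two_ne
      linear_combination -this
  · intro w hw hs
    refine par_bounded v ?_ w hw ?_
    · intro i h
      have := vinj (hE.1 _ (vE _) _ (vE _) h)
      apply one_ne
      linear_combination -this
    · rw [← hs, ← sum_cyc _ W z (by omega) hz]

end

noncomputable section
open Set

def Ends {α : Type*} (K : Finset α) (L R : α → Pt) : Set Pt := {p | ∃ i ∈ K, p = L i ∨ p = R i}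

def Vis {α : Type*} (K : Finset α) (L R : α → Pt) (σ : ℝ) (v : Pt) : Prop :=
  v ∈ Ends K L R ∧ ∀ j ∈ K, (L j).1 ≤ v.1 → v.1 ≤ (R j).1 → σ * v.2 ≤ σ * ev (L j) (R j) v.1

def Adj (A : Pt → Prop) (p q : Pt) : Prop :=
  A p ∧ A q ∧ p.1 < q.1 ∧ ∀ v, A v → p.1 < v.1 → v.1 < q.1 → False

def Low {α : Type*} (K : Finset α) (L R : α → Pt) (v : Pt) : Prop :=
  Vis K L R (-1) v ∧ Vis K L R 1 v ∧
    ∃ a b, Adj (Vis K L R 1) a v ∧ Adj (Vis K L R 1) v b ∧ slp a v < slp v b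

def UU {α : Type*} (K : Finset α) (L R : α → Pt) (v : Pt) : Prop :=
  Vis K L R (-1) v ∧ ¬ Low K L R v

def LL {α : Type*} (K : Finset α) (L R : α → Pt) (v : Pt) : Prop :=
  Vis K L R 1 v ∧ (¬ Vis K L R (-1) v ∨ Low K L R v ∨ (∀ e ∈ Ends K L R, v.1 ≤ e.1) ∨
    (∀ e ∈ Ends K L R, e.1 ≤ v.1))

variable {α : Type*} {K : Finset α} {L R : α → Pt}

lemma ends_L {i : α} (h : i ∈ K) : L i ∈ Ends K L R := ⟨i, h, Or.inl rfl⟩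
lemma ends_R {i : α} (h : i ∈ K) : R i ∈ Ends K L R := ⟨i, h, Or.inr rfl⟩

lemma ends_finite : (Ends K L R).Finite := by
  apply ((K.finite_toSet.image L).union (K.finite_toSet.image R)).subset
  rintro p ⟨i, hi, rfl | rfl⟩
  · left; exact ⟨i, hi, rfl⟩
  · right; exact ⟨i, hi, rfl⟩

lemma ends_mono {T : Finset α} (h : K ⊆ T) : Ends K L R ⊆ Ends T L R := by
  rintro p ⟨i, hi, h'⟩
  exact ⟨i, h hi, h'⟩

lemma GPos.mono {E F : Set Pt} (h : GPos F) (hs : E ⊆ F) : GPos E :=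
  ⟨fun p hp q hq => h.1 p (hs hp) q (hs hq),
   fun p hp q hq r hr => h.2 p (hs hp) q (hs hq) r (hs hr)⟩

lemma vis_ext (hlt : ∀ i ∈ K, (L i).1 < (R i).1) {σ : ℝ} {p q e : Pt} (hp : Vis K L R σ p)
    (hq : Vis K L R σ q) (he : e ∈ Ends K L R) (h1 : p.1 < e.1) (h2 : e.1 < q.1)
    (h3 : σ * e.2 < σ * ev p q e.1) :
    ∃ v, Vis K L R σ v ∧ p.1 < v.1 ∧ v.1 < q.1 ∧ σ * (v.2 - ev p q v.1) < 0 ∧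
      ∀ e ∈ Ends K L R, p.1 < e.1 → e.1 < q.1 →
        σ * (v.2 - ev p q v.1) ≤ σ * (e.2 - ev p q e.1) := by
  have hfin : ({v | v ∈ Ends K L R ∧ p.1 < v.1 ∧ v.1 < q.1} : Set Pt).Finite :=
    ends_finite.subset (fun v hv => hv.1)
  obtain ⟨v, ⟨hvE, hv1, hv2⟩, hmin⟩ := hfin.exists_minimalFor (fun v => σ * (v.2 - ev p q v.1)) _
    ⟨e, he, h1, h2⟩
  have hmin' : ∀ e ∈ Ends K L R, p.1 < e.1 → e.1 < q.1 →
        σ * (v.2 - ev p q v.1) ≤ σ * (e.2 - ev p q e.1) := by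
    intro e he h1 h2
    by_contra hcon
    push Not at hcon
    have := hmin (j := e) ⟨he, h1, h2⟩ hcon.le
    simp only at this
    linarith
  have hneg : σ * (v.2 - ev p q v.1) < 0 := by
    have := hmin' e he h1 h2
    linarith
  refine ⟨v, ⟨hvE, ?_⟩, hv1, hv2, hneg, hmin'⟩
  intro j hj ha hb
  have key : σ * (v.2 - ev p q v.1) ≤ σ * (ev (L j) (R j) v.1 - ev p q v.1) := by
    have hpx := ev_left p q
    have hqx := ev_right (p := p) (q := q) (by linarith)
    apply aff_le (f := fun _ => σ * (v.2 - ev p q v.1))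
      (g := fun x => σ * (ev (L j) (R j) x - ev p q x)) (isAff_const _)
      (isAff_smul σ (isAff_sub (isAff_ev _ _) (isAff_ev _ _)))
      (a := max p.1 (L j).1) (b := min q.1 (R j).1) (max_le hv1.le ha) (le_min hv2.le hb)
    · rcases le_or_gt (L j).1 p.1 with h | h
      · rw [max_eq_left h]
        have := hp.2 j hj h (by linarith)
        rw [hpx]; linarith
      · rw [max_eq_right h.le]
        simp only [ev_left]
        exact hmin' _ (ends_L hj) h (by linarith)
    · rcases le_or_gt q.1 (R j).1 with h | h
      · rw [min_eq_left h]
        have := hq.2 j hj (by linarith) h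
        rw [hqx]; linarith
      · rw [min_eq_right h.le]
        simp only [ev_right (hlt j hj).ne]
        exact hmin' _ (ends_R hj) (by linarith) h
  linarith

lemma exists_left_nbr {A : Pt → Prop} (hA : {v | A v}.Finite) {p v : Pt} (hp : A p) (h : p.1 < v.1)
    (hv : A v) : ∃ a, Adj A a v ∧ p.1 ≤ a.1 := by
  have hfin : ({a | A a ∧ a.1 < v.1} : Set Pt).Finite := hA.subset (fun a ha => ha.1)
  obtain ⟨a, ⟨ha, hav⟩, hmax⟩ := hfin.exists_maximalFor (fun a => a.1) _ ⟨p, hp, h⟩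
  refine ⟨a, ⟨ha, hv, hav, ?_⟩, ?_⟩
  · intro u hu h1 h2
    have := hmax (j := u) ⟨hu, h2⟩ h1.le
    simp only at this
    linarith
  · by_contra hcon
    push Not at hcon
    have := hmax (j := p) ⟨hp, h⟩ hcon.le
    simp only at this
    linarith

lemma exists_right_nbr {A : Pt → Prop} (hA : {v | A v}.Finite) {q v : Pt} (hq : A q) (h : v.1 < q.1)
    (hv : A v) : ∃ b, Adj A v b ∧ b.1 ≤ q.1 := by
  have hfin : ({a | A a ∧ v.1 < a.1} : Set Pt).Finite := hA.subset (fun a ha => ha.1)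
  obtain ⟨a, ⟨ha, hav⟩, hmax⟩ := hfin.exists_minimalFor (fun a => a.1) _ ⟨q, hq, h⟩
  refine ⟨a, ⟨hv, ha, hav, ?_⟩, ?_⟩
  · intro u hu h1 h2
    have := hmax (j := u) ⟨hu, h1⟩ h2.le
    simp only at this
    linarith
  · by_contra hcon
    push Not at hcon
    have := hmax (j := q) ⟨hq, h⟩ hcon.le
    simp only at this
    linarith

lemma vis_finite {σ : ℝ} : {v | Vis K L R σ v}.Finite := ends_finite.subset (fun _ hv => hv.1)

lemma on_ends {E : Set Pt} (hE : GPos E) {p q e : Pt} (hp : p ∈ E) (hq : q ∈ E) (hpq : p.1 < q.1)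
    (he : e ∈ E) (h1 : p.1 ≤ e.1) (h2 : e.1 ≤ q.1) : ev p q e.1 = e.2 ∨ (p.1 < e.1 ∧ e.1 < q.1) := by
  rcases h1.eq_or_lt with h | h
  · left; rw [← hE.1 p hp e he h, ev_left]
  · rcases h2.eq_or_lt with h' | h'
    · left; rw [hE.1 e he q hq h', ev_right hpq.ne]
    · right; exact ⟨h, h'⟩

lemma L0 (hlt : ∀ i ∈ K, (L i).1 < (R i).1) (hE : GPos (Ends K L R)) {p q e : Pt}
    (h : Adj (Vis K L R 1) p q) (he : e ∈ Ends K L R) (h1 : p.1 ≤ e.1) (h2 : e.1 ≤ q.1) :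
    ev p q e.1 ≤ e.2 := by
  obtain ⟨hp, hq, hpq, hn⟩ := h
  rcases on_ends hE hp.1 hq.1 hpq he h1 h2 with h | ⟨h3, h4⟩
  · exact h.le
  · by_contra hcon
    push Not at hcon
    obtain ⟨v, hv, a1, a2, -⟩ := vis_ext hlt hp hq he h3 h4 (by simpa using hcon)
    exact hn v hv a1 a2

/-- The slope form of evaluation, from the right end point. -/
lemma ev_from_right {a v : Pt} (h : a.1 ≠ v.1) (x : ℝ) : ev a v x = v.2 + slp a v * (x - v.1) := by
  have := ev_right h
  unfold ev at this ⊢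
  linarith

lemma LLow (hlt : ∀ i ∈ K, (L i).1 < (R i).1) (hE : GPos (Ends K L R)) {p q e : Pt}
    (h : Adj (LL K L R) p q) (he : e ∈ Ends K L R) (h1 : p.1 ≤ e.1) (h2 : e.1 ≤ q.1) :
    ev p q e.1 ≤ e.2 := by
  obtain ⟨hp, hq, hpq, hn⟩ := h
  rcases on_ends hE hp.1.1 hq.1.1 hpq he h1 h2 with h | ⟨h3, h4⟩
  · exact h.le
  by_contra hcon
  push Not at hcon
  obtain ⟨v, hv, a1, a2, hneg, hmin⟩ := vis_ext hlt hp.1 hq.1 he h3 h4 (by simpa using hcon)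
  apply hn v ⟨hv, ?_⟩ a1 a2
  by_cases hup : Vis K L R (-1) v
  swap
  · exact Or.inl hup
  right; left
  obtain ⟨a, ha, hpa⟩ := exists_left_nbr vis_finite hp.1 a1 hv
  obtain ⟨b, hb, hbq⟩ := exists_right_nbr vis_finite hq.1 a2 hv
  refine ⟨hup, hv, a, b, ha, hb, ?_⟩
  obtain ⟨haV, -, hav, -⟩ := ha
  obtain ⟨-, hbV, hvb, -⟩ := hb
  have da : v.2 - ev p q v.1 ≤ a.2 - ev p q a.1 := by
    rcases on_ends hE hp.1.1 hq.1.1 hpq haV.1 hpa (by linarith) with h | ⟨h3, h4⟩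
    · linarith
    · have := hmin a haV.1 h3 h4; linarith
  have db : v.2 - ev p q v.1 ≤ b.2 - ev p q b.1 := by
    rcases on_ends hE hp.1.1 hq.1.1 hpq hbV.1 (by linarith) hbq with h | ⟨h3, h4⟩
    · linarith
    · have := hmin b hbV.1 h3 h4; linarith
  have sa : slp a v ≤ slp p q := by
    unfold slp
    rw [div_le_iff₀ (by linarith)]
    unfold ev at da
    change v.2 - a.2 ≤ slp p q * (v.1 - a.1)
    linarith
  have sb : slp p q ≤ slp v b := by
    unfold slp
    rw [le_div_iff₀ (by linarith)]
    unfold ev at db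
    change slp p q * (b.1 - v.1) ≤ b.2 - v.2
    linarith
  apply lt_of_le_of_ne (sa.trans sb)
  intro heq
  have nav : a ≠ v := fun h => by rw [h] at hav; exact lt_irrefl _ hav
  have nvb : v ≠ b := fun h => by rw [h] at hvb; exact lt_irrefl _ hvb
  have nab : a ≠ b := fun h => by rw [h] at hav; linarith
  apply hE.ne_ev haV.1 hv.1 hbV.1 nav nab nvb
  rw [ev_from_right hav.ne, heq]
  have := ev_right hvb.ne
  unfold ev at this
  linarith

lemma UUp (hlt : ∀ i ∈ K, (L i).1 < (R i).1) (hE : GPos (Ends K L R)) {p q e : Pt}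
    (h : Adj (UU K L R) p q) (he : e ∈ Ends K L R) (h1 : p.1 ≤ e.1) (h2 : e.1 ≤ q.1) :
    e.2 ≤ ev p q e.1 := by
  obtain ⟨hp, hq, hpq, hn⟩ := h
  rcases on_ends hE hp.1.1 hq.1.1 hpq he h1 h2 with h | ⟨h3, h4⟩
  · exact h.ge
  by_contra hcon
  push Not at hcon
  obtain ⟨v, hv, a1, a2, hneg, hmin⟩ := vis_ext hlt hp.1 hq.1 he h3 h4 (by linarith)
  apply hn v ⟨hv, ?_⟩ a1 a2
  rintro ⟨-, hvd, a, b, ha, hb, hslp⟩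
  have hav := ha.2.2.1
  have hvb := hb.2.2.1
  have sa : slp p q ≤ slp a v := by
    rcases lt_or_ge a.1 p.1 with h | h
    · have h5 := L0 hlt hE ha hp.1.1 h.le a1.le
      rw [ev_from_right hav.ne] at h5
      unfold ev at hneg
      by_contra hcon
      push Not at hcon
      nlinarith
    · have : a.2 - ev p q a.1 ≤ v.2 - ev p q v.1 := by
        rcases on_ends hE hp.1.1 hq.1.1 hpq ha.1.1 h (by linarith) with h | ⟨h3, h4⟩
        · linarith
        · have := hmin a ha.1.1 h3 h4; linarith
      unfold slp
      rw [le_div_iff₀ (by linarith)]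
      unfold ev at this
      change slp p q * (v.1 - a.1) ≤ v.2 - a.2
      linarith
  have sb : slp v b ≤ slp p q := by
    rcases lt_or_ge q.1 b.1 with h | h
    · have h5 := L0 hlt hE hb hq.1.1 a2.le h.le
      rw [ev_from_right hpq.ne] at hneg
      unfold ev at h5
      by_contra hcon
      push Not at hcon
      nlinarith
    · have : b.2 - ev p q b.1 ≤ v.2 - ev p q v.1 := by
        rcases on_ends hE hp.1.1 hq.1.1 hpq hb.2.1.1 (by linarith) h with h | ⟨h3, h4⟩
        · linarith
        · have := hmin b hb.2.1.1 h3 h4; linarith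
      unfold slp
      rw [div_le_iff₀ (by linarith)]
      unfold ev at this
      change b.2 - v.2 ≤ slp p q * (b.1 - v.1)
      linarith
  linarith

/-- Comparabilities between the lower path, the upper path and the hairs. -/
lemma below_LU (hlt : ∀ i ∈ K, (L i).1 < (R i).1) (hE : GPos (Ends K L R)) {p q r s : Pt}
    (h : Adj (LL K L R) p q) (h' : Adj (UU K L R) r s) : Below p q r s := by
  apply below_of_ends h.2.2.1 h'.2.2.1
  · exact UUp hlt hE h' h.1.1.1
  · exact UUp hlt hE h' h.2.1.1.1
  · exact LLow hlt hE h h'.1.1.1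
  · exact LLow hlt hE h h'.2.1.1.1

lemma below_LH (hlt : ∀ i ∈ K, (L i).1 < (R i).1) (hE : GPos (Ends K L R)) {p q : Pt} {j : α}
    (h : Adj (LL K L R) p q) (hj : j ∈ K) : Below p q (L j) (R j) := by
  apply below_of_ends h.2.2.1 (hlt j hj)
  · intro a b; simpa using h.1.1.2 j hj a b
  · intro a b; simpa using h.2.1.1.2 j hj a b
  · exact LLow hlt hE h (ends_L hj)
  · exact LLow hlt hE h (ends_R hj)

lemma below_HU (hlt : ∀ i ∈ K, (L i).1 < (R i).1) (hE : GPos (Ends K L R)) {p q : Pt} {j : α}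
    (h : Adj (UU K L R) p q) (hj : j ∈ K) : Below (L j) (R j) p q := by
  apply below_of_ends (hlt j hj) h.2.2.1
  · exact UUp hlt hE h (ends_L hj)
  · exact UUp hlt hE h (ends_R hj)
  · intro a b; have := h.1.1.2 j hj a b; linarith
  · intro a b; have := h.2.1.1.2 j hj a b; linarith

lemma below_adj {A : Pt → Prop} (hx : ∀ p q, A p → A q → p.1 = q.1 → p = q) {p q r s : Pt}
    (h : Adj A p q) (h' : Adj A r s) (hps : p ≠ s) (hqr : q ≠ r) (hpr : p ≠ r) : Below p q r s := by
  intro x h1 h2 h3 h4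
  exfalso
  rcases lt_trichotomy p.1 r.1 with g | g | g
  · rcases lt_trichotomy r.1 q.1 with k | k | k
    · exact h.2.2.2 r h'.1 g k
    · exact hqr (hx _ _ h.2.1 h'.1 k.symm)
    · linarith
  · exact hpr (hx _ _ h.1 h'.1 g)
  · rcases lt_trichotomy p.1 s.1 with k | k | k
    · exact h'.2.2.2 p h.1 g k
    · exact hps (hx _ _ h.1 h'.2.1 k)
    · linarith

end

noncomputable section
open Set

structure Cfg {α : Type*} (T : Finset α) (L R : α → Pt) (κ : α → ℝ) : Prop where
  l_lt : ∀ i ∈ T, (L i).1 < κ i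
  r_gt : ∀ i ∈ T, κ i < (R i).1
  gp : GPos (Ends T L R)
  disj : ∀ i ∈ T, ∀ j ∈ T, i ≠ j → Disjoint (Seg (L i) (R i)) (Seg (L j) (R j))
  sep : ∀ i ∈ T, ∀ j ∈ T, κ i < κ j → (R i).1 < (L j).1
  ord : ∀ i ∈ T, ∀ j ∈ T, κ i = κ j → (L i).1 < (L j).1 →
    ev (L i) (R i) (κ i) < ev (L j) (R j) (κ i)

def PreMax {α : Type*} (T : Finset α) (L R : α → Pt) (κ : α → ℝ) (i : α) : Prop :=
  ∀ j ∈ T, κ j = κ i → (L j).1 < (L i).1 → (R j).1 ≤ (R i).1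

def SufMax {α : Type*} (T : Finset α) (L R : α → Pt) (κ : α → ℝ) (i : α) : Prop :=
  ∀ j ∈ T, κ j = κ i → (L i).1 < (L j).1 → (R j).1 ≤ (R i).1

structure IsUp {α : Type*} (T : Finset α) (L R : α → Pt) (κ : α → ℝ) (i k : α) : Prop where
  mi : i ∈ T
  mo : k ∈ T
  ka : κ k = κ i
  la : (L i).1 < (L k).1
  rh : (R i).1 < (R k).1
  btw : ∀ t ∈ T, κ t = κ i → (L i).1 < (L t).1 → (L t).1 < (L k).1 → (R t).1 < (R i).1

structure IsDn {α : Type*} (T : Finset α) (L R : α → Pt) (κ : α → ℝ) (i k : α) : Prop where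
  mi : i ∈ T
  mo : k ∈ T
  ka : κ k = κ i
  la : (L k).1 < (L i).1
  rh : (R i).1 < (R k).1
  btw : ∀ t ∈ T, κ t = κ i → (L k).1 < (L t).1 → (L t).1 < (L i).1 → (R t).1 < (R i).1

structure CEd {α : Type*} (T : Finset α) (L R : α → Pt) (κ : α → ℝ) (p q e f : α) : Prop where
  dn : IsDn T L R κ p e
  up : IsUp T L R κ p f
  or : q = e ∨ q = f
  le : (R q).1 ≤ (R e).1
  lf : (R q).1 ≤ (R f).1

def CE {α : Type*} (T : Finset α) (L R : α → Pt) (κ : α → ℝ) (p q : α) : Prop :=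
  ∃ e f, CEd T L R κ p q e f

variable {α : Type*} {K T : Finset α} {L R : α → Pt} {κ : α → ℝ}

namespace Cfg


lemma hlt (C : Cfg T L R κ) {i : α} (hi : i ∈ T) : (L i).1 < (R i).1 := (C.l_lt i hi).trans (C.r_gt i hi)

lemma linj (C : Cfg T L R κ) {i j : α} (hi : i ∈ T) (hj : j ∈ T) (h : L i = L j) : i = j := by
  by_contra hne
  have := Set.disjoint_left.1 (C.disj i hi j hj hne) (left_mem_segment ℝ (L i) (R i))
  apply this
  rw [h]; exact left_mem_segment ℝ _ _

lemma rinj (C : Cfg T L R κ) {i j : α} (hi : i ∈ T) (hj : j ∈ T) (h : R i = R j) : i = j := by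
  by_contra hne
  have := Set.disjoint_left.1 (C.disj i hi j hj hne) (right_mem_segment ℝ (L i) (R i))
  apply this
  rw [h]; exact right_mem_segment ℝ _ _

lemma lr (C : Cfg T L R κ) {i j : α} (hi : i ∈ T) (hj : j ∈ T) : L i ≠ R j := by
  intro h
  by_cases hne : i = j
  · subst hne
    have := C.hlt hi
    rw [h] at this
    exact lt_irrefl _ this
  · have := Set.disjoint_left.1 (C.disj i hi j hj hne) (left_mem_segment ℝ (L i) (R i))
    apply this
    rw [h]; exact right_mem_segment ℝ _ _

lemma lxinj (C : Cfg T L R κ) {i j : α} (hi : i ∈ T) (hj : j ∈ T) (h : (L i).1 = (L j).1) : i = j :=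
  C.linj hi hj (C.gp.1 _ (ends_L hi) _ (ends_L hj) h)

lemma rxinj (C : Cfg T L R κ) {i j : α} (hi : i ∈ T) (hj : j ∈ T) (h : (R i).1 = (R j).1) : i = j :=
  C.rinj hi hj (C.gp.1 _ (ends_R hi) _ (ends_R hj) h)

lemma same (C : Cfg T L R κ) {i j : α} (hi : i ∈ T) (hj : j ∈ T) {x : ℝ} (h1 : (L i).1 ≤ x) (h2 : x ≤ (R i).1)
    (h3 : (L j).1 ≤ x) (h4 : x ≤ (R j).1) : κ i = κ j := by
  rcases lt_trichotomy (κ i) (κ j) with h | h | h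
  · have := C.sep i hi j hj h; linarith
  · exact h
  · have := C.sep j hj i hi h; linarith

lemma ordx (C : Cfg T L R κ) {i j : α} (hi : i ∈ T) (hj : j ∈ T) (hl : (L i).1 < (L j).1) {x : ℝ}
    (h2 : x ≤ (R i).1) (h3 : (L j).1 ≤ x) (h4 : x ≤ (R j).1) :
    ev (L i) (R i) x < ev (L j) (R j) x := by
  have hk := C.same hi hj (by linarith) h2 h3 h4
  have h0 := C.ord i hi j hj hk hl
  by_contra hcon
  push Not at hcon
  have hne : i ≠ j := fun h => by rw [h] at hl; exact lt_irrefl _ hl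
  have hcont : Continuous (fun y => ev (L j) (R j) y - ev (L i) (R i) y) :=
    isAff_cont (isAff_sub (isAff_ev _ _) (isAff_ev _ _))
  have hiv := intermediate_value_uIcc (a := κ i) (b := x) hcont.continuousOn
  have hmem : (0 : ℝ) ∈ Set.uIcc (ev (L j) (R j) (κ i) - ev (L i) (R i) (κ i))
      (ev (L j) (R j) x - ev (L i) (R i) x) := by
    rw [Set.mem_uIcc]; right; constructor <;> linarith
  obtain ⟨y, hy, hy0⟩ := hiv hmem
  have a1 := C.l_lt j hj
  have a2 := C.r_gt j hj
  have a3 := C.r_gt i hi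
  have b1 : (L j).1 ≤ y := by
    rcases Set.mem_uIcc.1 hy with h | h <;> linarith
  have b2 : y ≤ (R i).1 := by
    rcases Set.mem_uIcc.1 hy with h | h <;> linarith
  have b3 : y ≤ (R j).1 := by
    rcases Set.mem_uIcc.1 hy with h | h <;> linarith
  simp only at hy0
  apply Set.disjoint_left.1 (C.disj i hi j hj hne) (show (y, ev (L i) (R i) y) ∈ _ from ?_) ?_
  · rw [mem_Seg (C.hlt hi)]; exact ⟨by simp; linarith, b2, rfl⟩
  · rw [mem_Seg (C.hlt hj)]; exact ⟨b1, b3, by simp; linarith⟩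

lemma hle (C : Cfg T L R κ) {i j : α} (hi : i ∈ T) (hj : j ∈ T) (hl : (L i).1 ≤ (L j).1) {x : ℝ}
    (h2 : x ≤ (R i).1) (h3 : (L j).1 ≤ x) (h4 : x ≤ (R j).1) :
    ev (L i) (R i) x ≤ ev (L j) (R j) x := by
  rcases hl.eq_or_lt with h | h
  · rw [C.lxinj hi hj h]
  · exact (C.ordx hi hj h h2 h3 h4).le

lemma cover_pre (C : Cfg T L R κ) {e : α} (he : e ∈ T) : ∃ u ∈ T, κ u = κ e ∧ (L u).1 ≤ (L e).1 ∧ (R e).1 ≤ (R u).1 ∧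
    PreMax T L R κ u := by
  have hfin : ({u | u ∈ T ∧ κ u = κ e ∧ (L u).1 ≤ (L e).1} : Set α).Finite :=
    T.finite_toSet.subset (fun u hu => hu.1)
  obtain ⟨u, ⟨hu, hk, hl⟩, hmax⟩ := hfin.exists_maximalFor (fun u => (R u).1) _ ⟨e, he, rfl, le_rfl⟩
  have hmax' : ∀ t ∈ T, κ t = κ e → (L t).1 ≤ (L e).1 → (R t).1 ≤ (R u).1 := by
    intro t ht htk htl
    by_contra hcon
    push Not at hcon
    have := hmax (j := t) ⟨ht, htk, htl⟩ hcon.le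
    exact absurd this hcon.not_ge
  refine ⟨u, hu, hk, hl, hmax' e he rfl le_rfl, ?_⟩
  intro j hj hjk hjl
  exact hmax' j hj (hjk.trans hk) (hjl.le.trans hl)

lemma cover_suf (C : Cfg T L R κ) {e : α} (he : e ∈ T) : ∃ u ∈ T, κ u = κ e ∧ (L e).1 ≤ (L u).1 ∧ (R e).1 ≤ (R u).1 ∧
    SufMax T L R κ u := by
  have hfin : ({u | u ∈ T ∧ κ u = κ e ∧ (L e).1 ≤ (L u).1} : Set α).Finite :=
    T.finite_toSet.subset (fun u hu => hu.1)
  obtain ⟨u, ⟨hu, hk, hl⟩, hmax⟩ := hfin.exists_maximalFor (fun u => (R u).1) _ ⟨e, he, rfl, le_rfl⟩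
  have hmax' : ∀ t ∈ T, κ t = κ e → (L e).1 ≤ (L t).1 → (R t).1 ≤ (R u).1 := by
    intro t ht htk htl
    by_contra hcon
    push Not at hcon
    have := hmax (j := t) ⟨ht, htk, htl⟩ hcon.le
    exact absurd this hcon.not_ge
  refine ⟨u, hu, hk, hl, hmax' e he rfl le_rfl, ?_⟩
  intro j hj hjk hjl
  exact hmax' j hj (hjk.trans hk) (hl.trans hjl.le)

end Cfg

section ce
variable {p q e f : α}

lemma CEd.kq (D : CEd T L R κ p q e f) : κ q = κ p := by
  rcases D.or with h | h
  · rw [h]; exact D.dn.ka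
  · rw [h]; exact D.up.ka

lemma CEd.mq (D : CEd T L R κ p q e f) : q ∈ T := by
  rcases D.or with h | h
  · rw [h]; exact D.dn.mo
  · rw [h]; exact D.up.mo

lemma CEd.lt (D : CEd T L R κ p q e f) : (R p).1 < (R q).1 := by
  rcases D.or with h | h
  · rw [h]; exact D.dn.rh
  · rw [h]; exact D.up.rh


lemma CEd.cell (C : Cfg T L R κ) (D : CEd T L R κ p q e f) {t : α} (ht : t ∈ T) (hk : κ t = κ p) (hr : (R p).1 < (R t).1) :
    (L t).1 ≤ (L e).1 ∨ (L f).1 ≤ (L t).1 := by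
  by_contra hcon
  push Not at hcon
  rcases lt_trichotomy (L t).1 (L p).1 with h | h | h
  · have := D.dn.btw t ht hk hcon.1 h; linarith
  · rw [C.lxinj ht D.dn.mi h] at hr; exact lt_irrefl _ hr
  · have := D.up.btw t ht hk h hcon.2; linarith

lemma CEd.ke (C : Cfg T L R κ) (D : CEd T L R κ p q e f) : (L e).1 < (R p).1 := by
  have := C.l_lt e D.dn.mo
  have := C.r_gt p D.dn.mi
  have := D.dn.ka
  linarith

lemma CEd.kf (C : Cfg T L R κ) (D : CEd T L R κ p q e f) : (L f).1 < (R p).1 := by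
  have := C.l_lt f D.up.mo
  have := C.r_gt p D.dn.mi
  have := D.up.ka
  linarith

lemma CEd.kql (C : Cfg T L R κ) (D : CEd T L R κ p q e f) : (L q).1 < (R p).1 := by
  have := C.l_lt q D.mq
  have := C.r_gt p D.dn.mi
  have := D.kq
  linarith

lemma CEd.lo (C : Cfg T L R κ) (D : CEd T L R κ p q e f) {x : ℝ} (h1 : (R p).1 ≤ x) (h2 : x ≤ (R q).1) :
    ev (L e) (R e) x ≤ ev (R p) (R q) x := by
  have hpq := D.lt
  have ke := D.ke C
  have kf := D.kf C
  have := D.le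
  have := D.lf
  apply aff_le (isAff_ev _ _) (isAff_ev _ _) h1 h2
  · rw [ev_left]
    have := C.hle D.dn.mo D.dn.mi D.dn.la.le (x := (R p).1) D.dn.rh.le (C.hlt D.dn.mi).le le_rfl
    rwa [ev_right (C.hlt D.dn.mi).ne] at this
  · rw [ev_right hpq.ne]
    have := C.hle D.dn.mo D.mq (x := (R q).1)
      (by rcases D.or with h | h
          · rw [h]
          · rw [h]; exact (D.dn.la.trans D.up.la).le) D.le (C.hlt D.mq).le le_rfl
    rwa [ev_right (C.hlt D.mq).ne] at this

lemma CEd.hi (C : Cfg T L R κ) (D : CEd T L R κ p q e f) {x : ℝ} (h1 : (R p).1 ≤ x) (h2 : x ≤ (R q).1) :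
    ev (R p) (R q) x ≤ ev (L f) (R f) x := by
  have hpq := D.lt
  have ke := D.ke C
  have kf := D.kf C
  have := D.le
  have := D.lf
  apply aff_le (isAff_ev _ _) (isAff_ev _ _) h1 h2
  · rw [ev_left]
    have := C.hle D.up.mi D.up.mo D.up.la.le (x := (R p).1) le_rfl kf.le D.up.rh.le
    rwa [ev_right (C.hlt D.dn.mi).ne] at this
  · rw [ev_right hpq.ne]
    have := C.hle D.mq D.up.mo (x := (R q).1)
      (by rcases D.or with h | h
          · rw [h]; exact (D.dn.la.trans D.up.la).le
          · rw [h]) le_rfl (by linarith) D.lf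
    rwa [ev_right (C.hlt D.mq).ne] at this

lemma CEd.cmp_hair (C : Cfg T L R κ) (D : CEd T L R κ p q e f) {j : α} (hj : j ∈ T) (hne : R j ≠ R p) :
    Below (L j) (R j) (R p) (R q) ∨ Below (R p) (R q) (L j) (R j) := by
  by_cases hx : ∃ x, (R p).1 ≤ x ∧ x ≤ (R q).1 ∧ (L j).1 ≤ x ∧ x ≤ (R j).1
  swap
  · left
    intro x h1 h2 h3 h4
    exact absurd ⟨x, h3, h4, h1, h2⟩ hx
  obtain ⟨x, h1, h2, h3, h4⟩ := hx
  have ke := D.ke C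
  have kf := D.kf C
  have kql := D.kql C
  have hk : κ j = κ p := by
    rw [C.same hj D.mq h3 h4 (by linarith) h2, D.kq]
  have hr : (R p).1 < (R j).1 := by
    apply lt_of_le_of_ne (h1.trans h4)
    intro h
    exact hne (C.gp.1 _ (ends_R hj) _ (ends_R D.dn.mi) h.symm)
  have := D.le
  have := D.lf
  rcases D.cell C hj hk hr with h | h
  · left
    intro y g1 g2 g3 g4
    exact (C.hle hj D.dn.mo h g2 (by linarith) (by linarith)).trans (D.lo C g3 g4)
  · right
    intro y g1 g2 g3 g4
    exact (D.hi C g1 g2).trans (C.hle D.up.mo hj h (by linarith) g3 g4)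

lemma CEd.cmp_L (C : Cfg T L R κ) (D : CEd T L R κ p q e f) (hKT : K ⊆ T) (hpre : ∀ i ∈ T, PreMax T L R κ i → i ∈ K) {a b : Pt}
    (h : Adj (LL K L R) a b) : Below a b (R p) (R q) := by
  intro x h1 h2 h3 h4
  obtain ⟨u, hu, huk, hul, hur, hU⟩ := C.cover_pre D.dn.mo
  have huK := hpre u hu hU
  have ke := D.ke C
  have := D.le
  have := below_LH (fun i hi => C.hlt (hKT hi)) (C.gp.mono (ends_mono hKT)) h huK x h1 h2
    (by linarith) (by linarith)
  exact this.trans ((C.hle hu D.dn.mo hul (by linarith) (by linarith) (by linarith)).trans (D.lo C h3 h4))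

lemma CEd.cmp_U (C : Cfg T L R κ) (D : CEd T L R κ p q e f) (hKT : K ⊆ T) (hsuf : ∀ i ∈ T, SufMax T L R κ i → i ∈ K) {a b : Pt}
    (h : Adj (UU K L R) a b) : Below (R p) (R q) a b := by
  intro x h3 h4 h1 h2
  obtain ⟨u, hu, huk, hul, hur, hU⟩ := C.cover_suf D.up.mo
  have huK := hsuf u hu hU
  have kf := D.kf C
  have := D.lf
  have h5 : (L u).1 < x := by
    have := C.l_lt u hu
    have := C.r_gt p D.dn.mi
    have := D.up.ka
    linarith
  have := below_HU (fun i hi => C.hlt (hKT hi)) (C.gp.mono (ends_mono hKT)) h huK x h5.le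
    (by linarith) h1 h2
  exact (D.hi C h3 h4).trans ((C.hle D.up.mo hu hul (by linarith) h5.le (by linarith)).trans this)

lemma CEd.cmp_CE_aux (C : Cfg T L R κ) (D : CEd T L R κ p q e f) {p' q' e' f' : α} (D' : CEd T L R κ p' q' e' f') (hlt : (R p).1 < (R p').1) :
    Below (R p) (R q) (R p') (R q') ∨ Below (R p') (R q') (R p) (R q) := by
  by_cases hx : ∃ x, (R p).1 ≤ x ∧ x ≤ (R q).1 ∧ (R p').1 ≤ x ∧ x ≤ (R q').1
  swap
  · left
    intro x h1 h2 h3 h4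
    exact absurd ⟨x, h1, h2, h3, h4⟩ hx
  by_cases hpq : (R q).1 ≤ (R p').1
  · by_cases heq : q = p'
    · subst heq
      by_cases hy : p = q'
      · subst hy; have := D'.lt; linarith
      · left
        intro x h1 h2 h3 h4
        have : x = (R q).1 := le_antisymm h2 h3
        rw [this, ev_left, ev_right D.lt.ne]
    · exfalso
      obtain ⟨x, h1, h2, h3, h4⟩ := hx
      exact heq (C.rxinj D.mq D'.dn.mi (by linarith))
  push Not at hpq
  obtain ⟨x, h1, h2, h3, h4⟩ := hx
  have ke := D.ke C
  have kf := D.kf C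
  have kql := D.kql C
  have ke' := D'.ke C
  have kf' := D'.kf C
  have kql' := D'.kql C
  have hle := D.le
  have hlf := D.lf
  have hle' := D'.le
  have hlf' := D'.lf
  have hk : κ p' = κ p := by
    rw [← D.kq, ← D'.kq]
    exact C.same D'.mq D.mq (x := x) (by linarith) (by linarith) (by linarith) (by linarith)
  have hre := D'.dn.rh
  have hrf := D'.up.rh
  have ce := D.cell C D'.dn.mo (D'.dn.ka.trans hk) (by linarith)
  have cf := D.cell C D'.up.mo (D'.up.ka.trans hk) (by linarith)
  have cp := D.cell C D'.dn.mi hk hlt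
  rcases ce with ce | ce
  swap
  · left
    intro y g1 g2 g3 g4
    exact (D.hi C g1 g2).trans ((C.hle D.up.mo D'.dn.mo ce (by linarith) (by linarith) (by linarith)).trans
      (D'.lo C g3 g4))
  rcases cf with cf | cf
  · right
    intro y g1 g2 g3 g4
    exact (D'.hi C g1 g2).trans ((C.hle D'.up.mo D.dn.mo cf (by linarith) (by linarith) (by linarith)).trans
      (D.lo C g3 g4))
  exfalso
  have l1 := D.dn.la
  have l2 := D.up.la
  have cell' : ∀ t ∈ T, κ t = κ p → (R p').1 < (R t).1 → (L t).1 ≤ (L e').1 ∨ (L f').1 ≤ (L t).1 := by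
    intro t ht htk htr
    exact D'.cell C ht (htk.trans hk.symm) htr
  have l1' := D'.dn.la
  have l2' := D'.up.la
  rcases cell' e D.dn.mo D.dn.ka (by linarith) with h5 | h5
  · rcases cell' f D.up.mo D.up.ka (by linarith) with h6 | h6
    · linarith
    · rcases cp with h | h <;> linarith
  · linarith

end ce

lemma cmp_CE (C : Cfg T L R κ) {p q p' q' : α} (D : CE T L R κ p q) (D' : CE T L R κ p' q')
    (hne : R p ≠ R p') :
    Below (R p) (R q) (R p') (R q') ∨ Below (R p') (R q') (R p) (R q) := by
  obtain ⟨e, f, D⟩ := D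
  obtain ⟨e', f', D'⟩ := D'
  rcases lt_trichotomy (R p).1 (R p').1 with h | h | h
  · exact D.cmp_CE_aux C D' h
  · exact absurd (C.gp.1 _ (ends_R D.dn.mi) _ (ends_R D'.dn.mi) h) hne
  · exact (D'.cmp_CE_aux C D h).symm

def GE {α : Type*} (K T : Finset α) (L R : α → Pt) (κ : α → ℝ) (p q : Pt) : Prop :=
  Adj (LL K L R) p q ∨ Adj (UU K L R) p q ∨ (∃ j ∈ K, p = L j ∧ q = R j) ∨
    (∃ i ∈ K, ∃ j ∈ K, CE T L R κ i j ∧ p = R i ∧ q = R j)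

def SGE {α : Type*} (K T : Finset α) (L R : α → Pt) (κ : α → ℝ) (p q : Pt) : Prop :=
  GE K T L R κ p q ∨ GE K T L R κ q p

lemma GE.mem {p q : Pt} (h : GE K T L R κ p q) : p ∈ Ends K L R ∧ q ∈ Ends K L R := by
  rcases h with h | h | ⟨j, hj, rfl, rfl⟩ | ⟨i, hi, j, hj, -, rfl, rfl⟩
  · exact ⟨h.1.1.1, h.2.1.1.1⟩
  · exact ⟨h.1.1.1, h.2.1.1.1⟩
  · exact ⟨ends_L hj, ends_R hj⟩
  · exact ⟨ends_R hi, ends_R hj⟩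

lemma GE.lt (C : Cfg T L R κ) (hKT : K ⊆ T) {p q : Pt} (h : GE K T L R κ p q) : p.1 < q.1 := by
  rcases h with h | h | ⟨j, hj, rfl, rfl⟩ | ⟨i, hi, j, hj, h, rfl, rfl⟩
  · exact h.2.2.1
  · exact h.2.2.1
  · exact C.hlt (hKT hj)
  · obtain ⟨e, f, D⟩ := h
    exact D.lt

lemma GE_NC (C : Cfg T L R κ) (hKT : K ⊆ T) (hpre : ∀ i ∈ T, PreMax T L R κ i → i ∈ K)
    (hsuf : ∀ i ∈ T, SufMax T L R κ i → i ∈ K) {p q r s : Pt} (h : GE K T L R κ p q)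
    (h' : GE K T L R κ r s) (hpr : p ≠ r) (hps : p ≠ s) (hqr : q ≠ r) (hqs : q ≠ s) :
    Disjoint (Seg p q) (Seg r s) := by
  have hE := C.gp.mono (ends_mono hKT)
  have hlt : ∀ i ∈ K, (L i).1 < (R i).1 := fun i hi => C.hlt (hKT hi)
  have key : (Below p q r s ∨ Below r s p q) → Disjoint (Seg p q) (Seg r s) := by
    rintro (hB | hB)
    · exact disj_of_below hE h.mem.1 h.mem.2 h'.mem.1 h'.mem.2 (h.lt C hKT) (h'.lt C hKT) hpr hps hqr hqs hB
    · exact (disj_of_below hE h'.mem.1 h'.mem.2 h.mem.1 h.mem.2 (h'.lt C hKT) (h.lt C hKT)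
        hpr.symm hqr.symm hps.symm hqs.symm hB).symm
  rcases h with h | h | ⟨j, hj, rfl, rfl⟩ | ⟨i, hi, j, hj, h, rfl, rfl⟩ <;>
  rcases h' with h' | h' | ⟨j', hj', rfl, rfl⟩ | ⟨i', hi', j', hj', h', rfl, rfl⟩
  · exact key (Or.inl (below_adj (fun p q hp hq => hE.1 p hp.1.1 q hq.1.1) h h' hps hqr hpr))
  · exact key (Or.inl (below_LU hlt hE h h'))
  · exact key (Or.inl (below_LH hlt hE h hj'))
  · obtain ⟨e, f, D⟩ := h'
    exact key (Or.inl (D.cmp_L C hKT hpre h))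
  · exact key (Or.inr (below_LU hlt hE h' h))
  · exact key (Or.inl (below_adj (fun p q hp hq => hE.1 p hp.1.1 q hq.1.1) h h' hps hqr hpr))
  · exact key (Or.inr (below_HU hlt hE h hj'))
  · obtain ⟨e, f, D⟩ := h'
    exact key (Or.inr (D.cmp_U C hKT hsuf h))
  · exact key (Or.inr (below_LH hlt hE h' hj))
  · exact key (Or.inl (below_HU hlt hE h' hj))
  · exact C.disj _ (hKT hj) _ (hKT hj') (fun h => hpr (by rw [h]))
  · obtain ⟨e, f, D⟩ := h'
    exact key (D.cmp_hair C (hKT hj) hqr)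
  · obtain ⟨e, f, D⟩ := h
    exact key (Or.inr (D.cmp_L C hKT hpre h'))
  · obtain ⟨e, f, D⟩ := h
    exact key (Or.inl (D.cmp_U C hKT hsuf h'))
  · obtain ⟨e, f, D⟩ := h
    exact key (D.cmp_hair C (hKT hj') hps.symm).symm
  · exact key (cmp_CE C h h' hpr)

lemma SGE_NC (C : Cfg T L R κ) (hKT : K ⊆ T) (hpre : ∀ i ∈ T, PreMax T L R κ i → i ∈ K)
    (hsuf : ∀ i ∈ T, SufMax T L R κ i → i ∈ K) (p q r s : Pt) (h : SGE K T L R κ p q)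
    (h' : SGE K T L R κ r s) (hpr : p ≠ r) (hps : p ≠ s) (hqr : q ≠ r) (hqs : q ≠ s) :
    Disjoint (Seg p q) (Seg r s) := by
  rcases h with h | h <;> rcases h' with h' | h'
  · exact GE_NC C hKT hpre hsuf h h' hpr hps hqr hqs
  · rw [Seg_symm r s]; exact GE_NC C hKT hpre hsuf h h' hps hpr hqs hqr
  · rw [Seg_symm p q]; exact GE_NC C hKT hpre hsuf h h' hqr hqs hpr hps
  · rw [Seg_symm p q, Seg_symm r s]; exact GE_NC C hKT hpre hsuf h h' hqs hqr hps hpr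

end

noncomputable section
open Set

structure Dents {α : Type*} (K T : Finset α) (L R : α → Pt) (κ : α → ℝ) (D : α → List α)
    (own : α → α) : Prop where
  KT : K ⊆ T
  pre : ∀ i ∈ T, PreMax T L R κ i → i ∈ K
  suf : ∀ i ∈ T, SufMax T L R κ i → i ∈ K
  chain : ∀ b ∈ K, (D b).IsChain (fun c d => CE T L R κ c d ∨ CE T L R κ d c)
  nodup : ∀ b ∈ K, (D b).Nodup
  mem : ∀ b ∈ K, ∀ c ∈ D b, c ∈ K ∧ ¬ PreMax T L R κ c ∧ ¬ SufMax T L R κ c ∧ own c = b ∧ κ c = κ b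
  ends : ∀ b ∈ K, D b = [] ∨ ∃ a ∈ K, κ a = κ b ∧ (L a).1 < (L b).1 ∧
    (∀ t ∈ K, κ t = κ b → (L a).1 < (L t).1 → (L t).1 < (L b).1 → False) ∧
    (D b).head? = some b ∧ (D b).getLast? = some a
  cov : ∀ c ∈ K, ¬ PreMax T L R κ c → ¬ SufMax T L R κ c → own c ∈ K ∧ c ∈ D (own c)

lemma sorted_list {A : Pt → Prop} (hA : {v | A v}.Finite)
    (hx : ∀ p q, A p → A q → p.1 = q.1 → p = q) :
    ∃ l : List Pt, (∀ v, v ∈ l ↔ A v) ∧ l.Pairwise (fun p q => p.1 < q.1) ∧ l.IsChain (Adj A) := by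
  classical
  let r : Pt → Pt → Prop := fun p q => p.1 ≤ q.1
  haveI : Std.Total r := ⟨fun p q => le_total p.1 q.1⟩
  haveI : IsTrans Pt r := ⟨fun p q s h1 h2 => le_trans (α := ℝ) h1 h2⟩
  let l := hA.toFinset.toList.insertionSort r
  have hmem : ∀ v, v ∈ l ↔ A v := by
    intro v; simp [l]
  have hnd : l.Nodup := (List.perm_insertionSort r _).nodup_iff.2 (Finset.nodup_toList _)
  have hsort : l.Pairwise r := List.pairwise_insertionSort r _
  have hlt : l.Pairwise (fun p q => p.1 < q.1) := by
    have := hsort.and hnd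
    refine List.Pairwise.imp_of_mem ?_ this
    rintro p q hp hq ⟨h1, h2⟩
    exact lt_of_le_of_ne h1 (fun h => h2 (hx p q ((hmem p).1 hp) ((hmem q).1 hq) h))
  refine ⟨l, hmem, hlt, ?_⟩
  rw [List.isChain_iff_getElem]
  intro i hi
  rw [List.pairwise_iff_getElem] at hlt
  refine ⟨(hmem _).1 (List.getElem_mem _), (hmem _).1 (List.getElem_mem _),
    hlt _ _ (by omega) hi (by omega), ?_⟩
  intro v hv h1 h2
  obtain ⟨k, hk, rfl⟩ := List.getElem_of_mem ((hmem v).2 hv)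
  rcases lt_trichotomy k i with h | h | h
  · have := hlt _ _ hk (by omega) h; linarith
  · subst h; exact lt_irrefl _ h1
  · rcases Nat.lt_or_ge (i + 1) k with h' | h'
    · have := hlt _ _ hi hk h'; linarith
    · have : k = i + 1 := by omega
      subst this; exact lt_irrefl _ h2

lemma sorted_shape {l : List Pt} (hl : l.Pairwise (fun p q => p.1 < q.1)) {m M : Pt} (hm : m ∈ l)
    (hM : M ∈ l) (hne : m ≠ M) (h1 : ∀ v ∈ l, m.1 ≤ v.1) (h2 : ∀ v ∈ l, v.1 ≤ M.1) :
    ∃ mid, l = m :: (mid ++ [M]) := by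
  cases l with
  | nil => simp at hm
  | cons a l =>
    have ha : m = a := by
      rcases List.mem_cons.1 hm with h | h
      · exact h
      · have := (List.pairwise_cons.1 hl).1 m h
        have := h1 a (by simp); linarith
    subst ha
    have hl' := (List.pairwise_cons.1 hl).2
    have hM' : M ∈ l := by
      rcases List.mem_cons.1 hM with h | h
      · exact absurd h.symm hne
      · exact h
    have hne' : l ≠ [] := List.ne_nil_of_mem hM'
    obtain ⟨mid, b, rfl⟩ := List.eq_nil_or_concat l |>.resolve_left hne'
    simp only [List.concat_eq_append] at *
    refine ⟨mid, ?_⟩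
    have : M = b := by
      rcases List.mem_append.1 hM' with h | h
      · have := (List.pairwise_append.1 hl').2.2 M h b (by simp)
        have := h2 b (by simp); linarith
      · simpa using h
    rw [this]

lemma flat_chain {Q B : Pt → Pt → Prop} {ins : Pt → List Pt}
    (h1 : ∀ p q, B p q → ins p = [] → Q p q) (h2 : ∀ p, (p :: ins p).IsChain Q)
    (h3 : ∀ p q, B p q → ∀ z, (ins p).getLast? = some z → Q z q) (l : List Pt)
    (hl : l.IsChain B) : (l.flatMap (fun v => v :: ins v)).IsChain Q := by
  induction l with
  | nil => simp
  | cons p l ih =>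
    rw [List.flatMap_cons]
    cases l with
    | nil => simpa using h2 p
    | cons q l =>
      rw [List.isChain_cons_cons] at hl
      rw [List.isChain_append]
      refine ⟨h2 p, ih hl.2, ?_⟩
      intro x hx y hy
      simp only [List.flatMap_cons, List.cons_append, List.head?_cons, Option.mem_def,
        Option.some.injEq] at hy
      subst hy
      cases hins : ins p with
      | nil => rw [hins] at hx; simp at hx; subst hx; exact h1 _ _ hl.1 hins
      | cons u w =>
        apply h3 p q hl.1
        rw [hins] at hx
        simpa [hins] using hx

lemma chain_mp {Q N : Pt → Pt → Prop} {l : List Pt} (h1 : l.IsChain N)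
    (h2 : l.IsChain (fun p q => N p q → Q p q)) : l.IsChain Q := by
  rw [List.isChain_iff_getElem] at *
  intro i hi
  exact h2 i hi (h1 i hi)

variable {α : Type*} {K T : Finset α} {L R : α → Pt} {κ : α → ℝ} {D : α → List α} {own : α → α}

lemma visL (C : Cfg T L R κ) (hKT : K ⊆ T) {i : α} (hi : i ∈ K) : Vis K L R (-1) (L i) := by
  refine ⟨ends_L hi, ?_⟩
  intro j hj h1 h2
  have h3 := C.hle (hKT hj) (hKT hi) h1 h2 le_rfl (C.hlt (hKT hi)).le
  rw [ev_left] at h3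
  linarith

lemma visR_pre (C : Cfg T L R κ) (hKT : K ⊆ T) {i : α} (hi : i ∈ K) (hp : PreMax T L R κ i) :
    Vis K L R 1 (R i) := by
  refine ⟨ends_R hi, ?_⟩
  intro j hj h1 h2
  have hk := C.same (hKT hi) (hKT hj) (C.hlt (hKT hi)).le le_rfl h1 h2
  rcases lt_trichotomy (L i).1 (L j).1 with h | h | h
  · have h3 := C.hle (hKT hi) (hKT hj) h.le le_rfl h1 h2
    rw [ev_right (C.hlt (hKT hi)).ne] at h3
    linarith
  · rw [← C.lxinj (hKT hi) (hKT hj) h, ev_right (C.hlt (hKT hi)).ne]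
  · have := hp j (hKT hj) hk.symm h
    rw [C.rxinj (hKT hi) (hKT hj) (le_antisymm h2 this), ev_right (C.hlt (hKT hj)).ne]

lemma visR_suf (C : Cfg T L R κ) (hKT : K ⊆ T) {i : α} (hi : i ∈ K) (hp : SufMax T L R κ i) :
    Vis K L R (-1) (R i) := by
  refine ⟨ends_R hi, ?_⟩
  intro j hj h1 h2
  have hk := C.same (hKT hi) (hKT hj) (C.hlt (hKT hi)).le le_rfl h1 h2
  rcases lt_trichotomy (L i).1 (L j).1 with h | h | h
  · have := hp j (hKT hj) hk.symm h
    rw [C.rxinj (hKT hi) (hKT hj) (le_antisymm h2 this), ev_right (C.hlt (hKT hj)).ne]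
  · rw [← C.lxinj (hKT hi) (hKT hj) h, ev_right (C.hlt (hKT hi)).ne]
  · have h3 := C.hle (hKT hj) (hKT hi) h.le h2 (C.hlt (hKT hi)).le le_rfl
    rw [ev_right (C.hlt (hKT hi)).ne] at h3
    linarith

lemma not_visR1 (C : Cfg T L R κ) (hKT : K ⊆ T) (hpre : ∀ i ∈ T, PreMax T L R κ i → i ∈ K)
    {c : α} (hc : c ∈ K) (hp : ¬ PreMax T L R κ c) : ¬ Vis K L R 1 (R c) ∧ ¬ Vis K L R 1 (L c) := by
  obtain ⟨u, hu, hk, hl, hr, hU⟩ := C.cover_pre (hKT hc)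
  have hlt : (L u).1 < (L c).1 := lt_of_le_of_ne hl (fun h => hp (C.lxinj hu (hKT hc) h ▸ hU))
  have h0 := C.hlt (hKT hc)
  constructor
  · intro hv
    have h1 := hv.2 u (hpre u hu hU) (by linarith) hr
    have h2 := C.ordx hu (hKT hc) hlt hr h0.le le_rfl
    rw [ev_right h0.ne] at h2; linarith
  · intro hv
    have h1 := hv.2 u (hpre u hu hU) (by linarith) (by linarith)
    have h2 := C.ordx hu (hKT hc) hlt (by linarith) le_rfl h0.le
    rw [ev_left] at h2; linarith

lemma not_visR2 (C : Cfg T L R κ) (hKT : K ⊆ T) (hsuf : ∀ i ∈ T, SufMax T L R κ i → i ∈ K)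
    {c : α} (hc : c ∈ K) (hp : ¬ SufMax T L R κ c) : ¬ Vis K L R (-1) (R c) := by
  obtain ⟨u, hu, hk, hl, hr, hU⟩ := C.cover_suf (hKT hc)
  have hlt : (L c).1 < (L u).1 := lt_of_le_of_ne hl (fun h => hp (C.lxinj (hKT hc) hu h ▸ hU))
  have h0 := C.hlt (hKT hc)
  have h5 := C.l_lt u hu
  have h6 := C.r_gt c (hKT hc)
  intro hv
  have h1 := hv.2 u (hsuf u hu hU) (by linarith) hr
  have h2 := C.ordx (hKT hc) hu hlt le_rfl (by linarith) hr
  rw [ev_right h0.ne] at h2; linarith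

end

noncomputable section
open Set

open Classical in
def ins {α : Type*} (K : Finset α) (L R : α → Pt) (D : α → List α) (v : Pt) : List Pt :=
  if h : ∃ b ∈ K, v = L b then (D h.choose).map R else []

def Inn {α : Type*} (T : Finset α) (L R : α → Pt) (κ : α → ℝ) (c : α) : Prop :=
  ¬ PreMax T L R κ c ∧ ¬ SufMax T L R κ c

variable {α : Type*} {K T : Finset α} {L R : α → Pt} {κ : α → ℝ} {D : α → List α} {own : α → α}

lemma ins_L (C : Cfg T L R κ) (hKT : K ⊆ T) {b : α} (hb : b ∈ K) : ins K L R D (L b) = (D b).map R := by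
  have h : ∃ b' ∈ K, L b = L b' := ⟨b, hb, rfl⟩
  unfold ins
  rw [dif_pos h]
  have := C.linj (hKT hb) (hKT h.choose_spec.1) h.choose_spec.2
  rw [← this]

lemma ins_cases (C : Cfg T L R κ) (hKT : K ⊆ T) (v : Pt) :
    ins K L R D v = [] ∨ ∃ b ∈ K, v = L b ∧ D b ≠ [] ∧ ins K L R D v = (D b).map R := by
  by_cases h : ∃ b ∈ K, v = L b
  · obtain ⟨b, hb, rfl⟩ := h
    rw [ins_L C hKT hb]
    by_cases h : D b = []
    · left; simp [h]
    · right; exact ⟨b, hb, rfl, h, rfl⟩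
  · left; unfold ins; rw [dif_neg h]

section

lemma Dents.inn (C : Cfg T L R κ) (N : Dents K T L R κ D own) {b c : α} (hb : b ∈ K) (hc : c ∈ D b) : c ∈ K ∧ Inn T L R κ c :=
  ⟨(N.mem b hb c hc).1, (N.mem b hb c hc).2.1, (N.mem b hb c hc).2.2.1⟩

lemma Dents.uu (C : Cfg T L R κ) (N : Dents K T L R κ D own) {c : α} (hc : c ∈ K) (hi : Inn T L R κ c) : UU K L R (L c) :=
  ⟨visL C N.KT hc, fun h => (not_visR1 C N.KT N.pre hc hi.1).2 h.2.1⟩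

lemma Dents.nuu (C : Cfg T L R κ) (N : Dents K T L R κ D own) {c : α} (hc : c ∈ K) (hi : Inn T L R κ c) : ¬ UU K L R (R c) :=
  fun h => not_visR2 C N.KT N.suf hc hi.2 h.1

lemma Dents.nll (C : Cfg T L R κ) (N : Dents K T L R κ D own) {c : α} (hc : c ∈ K) (hi : Inn T L R κ c) : ¬ LL K L R (R c) :=
  fun h => (not_visR1 C N.KT N.pre hc hi.1).1 h.1

lemma Dents.ends2 (C : Cfg T L R κ) (N : Dents K T L R κ D own) {b : α} (hb : b ∈ K) (h : D b ≠ []) : ∃ a ∈ K, κ a = κ b ∧ (L a).1 < (L b).1 ∧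
    (∀ t ∈ K, κ t = κ b → (L a).1 < (L t).1 → (L t).1 < (L b).1 → False) ∧
    (D b).head? = some b ∧ (D b).getLast? = some a ∧ Inn T L R κ a ∧ Inn T L R κ b ∧ own a = b ∧
    own b = b := by
  obtain ⟨a, ha, h1, h2, h3, h4, h5⟩ := (N.ends b hb).resolve_left h
  have ha' := N.mem b hb a (List.mem_of_getLast? h5)
  have hb' := N.mem b hb b (List.mem_of_head? h4)
  exact ⟨a, ha, h1, h2, h3, h4, h5, ⟨ha'.2.1, ha'.2.2.1⟩, ⟨hb'.2.1, hb'.2.2.1⟩, ha'.2.2.2.1,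
    hb'.2.2.2.1⟩

lemma Dents.window (C : Cfg T L R κ) (N : Dents K T L R κ D own) {a b : α} (ha : a ∈ K) (hb : b ∈ K) (hk : κ a = κ b) (hl : (L a).1 < (L b).1)
    (hn : ∀ t ∈ K, κ t = κ b → (L a).1 < (L t).1 → (L t).1 < (L b).1 → False)
    (hai : Inn T L R κ a) {q : Pt} (hq : Adj (UU K L R) q (L b)) : q = L a := by
  have hE := C.gp.mono (ends_mono N.KT)
  have hU := N.uu C ha hai
  have h1 : (L a).1 ≤ q.1 := by
    by_contra hcon
    push Not at hcon
    exact hq.2.2.2 _ hU hcon hl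
  rcases h1.eq_or_lt with h | h
  · exact (hE.1 _ hU.1.1 _ hq.1.1.1 h).symm
  exfalso
  have h2 := hq.2.2.1
  have a1 := C.l_lt b (N.KT hb)
  have a2 := C.r_gt a (N.KT ha)
  obtain ⟨t, ht, rfl | rfl⟩ := hq.1.1.1
  · have := C.same (N.KT ht) (N.KT ha) (x := (L t).1) le_rfl (C.hlt (N.KT ht)).le h1 (by linarith)
    exact hn t ht (this.trans hk) h h2
  · have := C.same (N.KT ht) (N.KT ha) (x := (R t).1) (C.hlt (N.KT ht)).le le_rfl h1 (by linarith)
    have := C.r_gt t (N.KT ht)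
    linarith

/-- generic chain lemma for the upper boundary with dents -/
lemma Dents.upchain (C : Cfg T L R κ) (N : Dents K T L R κ D own) {Q : Pt → Pt → Prop} (q1 : ∀ p q, Adj (UU K L R) q p → Q p q)
    (q2 : ∀ b ∈ K, D b ≠ [] → Q (L b) (R b))
    (q3 : ∀ b ∈ K, ∀ c ∈ D b, ∀ d ∈ D b, CE T L R κ c d ∨ CE T L R κ d c → Q (R c) (R d))
    (q4 : ∀ b ∈ K, ∀ a ∈ K, D b ≠ [] → Inn T L R κ a → Inn T L R κ b → own a = b → κ a = κ b →
      (L a).1 < (L b).1 →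
      (∀ t ∈ K, κ t = κ b → (L a).1 < (L t).1 → (L t).1 < (L b).1 → False) → Q (R a) (L a))
    (l : List Pt) (hl : l.IsChain (fun p q => Adj (UU K L R) q p)) :
    (l.flatMap (fun v => v :: ins K L R D v)).IsChain Q := by
  apply flat_chain _ _ _ l hl
  · intro p q h _; exact q1 p q h
  · intro p
    rcases ins_cases (D := D) C N.KT p with h | ⟨b, hb, rfl, hne, h⟩
    · rw [h]; simp
    · rw [h, List.isChain_cons]
      obtain ⟨a, ha, h1, h2, h3, h4, h5, -⟩ := N.ends2 C hb hne
      constructor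
      · intro y hy
        rw [List.head?_map, h4] at hy
        simp at hy; subst hy
        exact q2 b hb hne
      · rw [List.isChain_map]
        exact List.IsChain.imp_of_mem_imp (fun c d hc hd h => q3 b hb c hc d hd h) (N.chain b hb)
  · intro p q h z hz
    rcases ins_cases (D := D) C N.KT p with h' | ⟨b, hb, rfl, hne, h'⟩
    · rw [h'] at hz; simp at hz
    · obtain ⟨a, ha, h1, h2, h3, h4, h5, h6, h7, h8, -⟩ := N.ends2 C hb hne
      rw [h', List.getLast?_map, h5] at hz
      simp at hz; subst hz
      rw [N.window C ha hb h1 h2 h3 h6 h]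
      exact q4 b hb a ha hne h6 h7 h8 h1 h2 h3

end

end

noncomputable section
open Set

variable {α : Type*} {K T : Finset α} {L R : α → Pt} {κ : α → ℝ} {D : α → List α} {own : α → α}

def flat {α : Type*} (K : Finset α) (L R : α → Pt) (D : α → List α) (l : List Pt) : List Pt :=
  l.flatMap (fun v => v :: ins K L R D v)

lemma ext_min (hlt : ∀ i ∈ K, (L i).1 < (R i).1) (hE : GPos (Ends K L R)) {m : Pt}
    (hm : m ∈ Ends K L R) (h : ∀ e ∈ Ends K L R, m.1 ≤ e.1) : UU K L R m ∧ LL K L R m := by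
  have hv : ∀ σ, Vis K L R σ m := by
    intro σ
    refine ⟨hm, ?_⟩
    intro j hj h1 h2
    have := hE.1 _ hm _ (ends_L hj) (le_antisymm (h _ (ends_L hj)) h1)
    rw [this, ev_left]
  refine ⟨⟨hv _, ?_⟩, hv _, Or.inr (Or.inr (Or.inl h))⟩
  rintro ⟨-, -, a, b, ha, -⟩
  have := ha.2.2.1
  have := h a ha.1.1
  linarith

lemma ext_max (hlt : ∀ i ∈ K, (L i).1 < (R i).1) (hE : GPos (Ends K L R)) {m : Pt}
    (hm : m ∈ Ends K L R) (h : ∀ e ∈ Ends K L R, e.1 ≤ m.1) : UU K L R m ∧ LL K L R m := by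
  have hv : ∀ σ, Vis K L R σ m := by
    intro σ
    refine ⟨hm, ?_⟩
    intro j hj h1 h2
    have := hE.1 _ hm _ (ends_R hj) (le_antisymm h2 (h _ (ends_R hj)))
    rw [this, ev_right (hlt j hj).ne]
  refine ⟨⟨hv _, ?_⟩, hv _, Or.inr (Or.inr (Or.inr h))⟩
  rintro ⟨-, -, a, b, -, ha, -⟩
  have := ha.2.2.1
  have := h b ha.2.1.1
  linarith

section

lemma Dents.mem_flat (C : Cfg T L R κ) (N : Dents K T L R κ D own) {l : List Pt} {v : Pt} : v ∈ flat K L R D l ↔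
    v ∈ l ∨ ∃ b ∈ K, L b ∈ l ∧ ∃ c ∈ D b, v = R c := by
  unfold flat
  simp only [List.mem_flatMap, List.mem_cons]
  constructor
  · rintro ⟨u, hu, rfl | h⟩
    · exact Or.inl hu
    · rcases ins_cases (D := D) C N.KT u with h' | ⟨b, hb, rfl, hne, h'⟩
      · rw [h'] at h; simp at h
      · rw [h'] at h
        obtain ⟨c, hc, rfl⟩ := List.mem_map.1 h
        exact Or.inr ⟨b, hb, hu, c, hc, rfl⟩
  · rintro (h | ⟨b, hb, hbl, c, hc, rfl⟩)
    · exact ⟨v, h, Or.inl rfl⟩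
    · refine ⟨L b, hbl, Or.inr ?_⟩
      rw [ins_L C N.KT hb]
      exact List.mem_map_of_mem hc

lemma Dents.flat_nodup (C : Cfg T L R κ) (N : Dents K T L R κ D own) {l : List Pt} (hl : l.Nodup) (hU : ∀ v ∈ l, UU K L R v) :
    (flat K L R D l).Nodup := by
  have key : ∀ v w, w ∈ ins K L R D v → ∃ b ∈ K, v = L b ∧ ∃ c ∈ D b, w = R c := by
    intro v w hw
    rcases ins_cases (D := D) C N.KT v with h' | ⟨b, hb, rfl, hne, h'⟩
    · rw [h'] at hw; simp at hw
    · rw [h'] at hw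
      obtain ⟨c, hc, rfl⟩ := List.mem_map.1 hw
      exact ⟨b, hb, rfl, c, hc, rfl⟩
  unfold flat
  rw [List.nodup_flatMap]
  constructor
  · intro v hv
    rw [List.nodup_cons]
    constructor
    · intro h
      obtain ⟨b, hb, -, c, hc, h2⟩ := key v v h
      obtain ⟨hcK, hci⟩ := N.inn C hb hc
      exact N.nuu C hcK hci (h2 ▸ hU v hv)
    · rcases ins_cases (D := D) C N.KT v with h' | ⟨b, hb, rfl, hne, h'⟩
      · rw [h']; simp
      · rw [h']
        apply List.Nodup.map_on _ (N.nodup b hb)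
        intro x hx y hy h
        exact C.rinj (N.KT (N.inn C hb hx).1) (N.KT (N.inn C hb hy).1) h
  · refine List.Pairwise.imp_of_mem ?_ hl
    intro v w hv hw hne
    simp only [Function.onFun]
    rw [List.disjoint_left]
    intro x hx hx'
    rcases List.mem_cons.1 hx with h | h <;> rcases List.mem_cons.1 hx' with h' | h'
    · exact hne (h.symm.trans h')
    · obtain ⟨b, hb, -, c, hc, h2⟩ := key _ _ h'
      obtain ⟨hcK, hci⟩ := N.inn C hb hc
      exact N.nuu C hcK hci (h2 ▸ h ▸ hU v hv)
    · obtain ⟨b, hb, -, c, hc, h2⟩ := key _ _ h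
      obtain ⟨hcK, hci⟩ := N.inn C hb hc
      exact N.nuu C hcK hci (h2 ▸ h' ▸ hU w hw)
    · obtain ⟨b, hb, e, c, hc, h2⟩ := key _ _ h
      obtain ⟨b', hb', e', c', hc', h2'⟩ := key _ _ h'
      have e1 := N.mem b hb c hc
      have e2 := N.mem b' hb' c' hc'
      have := C.rinj (N.KT e1.1) (N.KT e2.1) (h2.symm.trans h2')
      subst this
      apply hne
      rw [e, e', ← e1.2.2.2.1, ← e2.2.2.2.1]

lemma Dents.all_cov (C : Cfg T L R κ) (N : Dents K T L R κ D own) {v : Pt} (hv : v ∈ Ends K L R) : LL K L R v ∨ UU K L R v ∨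
    ∃ b ∈ K, UU K L R (L b) ∧ ∃ c ∈ D b, v = R c := by
  by_cases h1 : Vis K L R (-1) v
  · by_cases h2 : Low K L R v
    · exact Or.inl ⟨h2.2.1, Or.inr (Or.inl h2)⟩
    · exact Or.inr (Or.inl ⟨h1, h2⟩)
  by_cases h2 : Vis K L R 1 v
  · exact Or.inl ⟨h2, Or.inl h1⟩
  right; right
  obtain ⟨c, hc, rfl | rfl⟩ := hv
  · exact absurd (visL C N.KT hc) h1
  · have e1 : ¬ PreMax T L R κ c := fun h => h2 (visR_pre C N.KT hc h)
    have e2 : ¬ SufMax T L R κ c := fun h => h1 (visR_suf C N.KT hc h)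
    obtain ⟨h3, h4⟩ := N.cov c hc e1 e2
    obtain ⟨a, -, -, -, -, -, -, -, hI, -⟩ := N.ends2 C h3 (List.ne_nil_of_mem h4)
    exact ⟨own c, h3, N.uu C h3 hI, c, h4, rfl⟩

lemma Dents.cycle (C : Cfg T L R κ) (N : Dents K T L R κ D own) (hK : K.Nonempty) : ∃ (m M : Pt) (mid ur : List Pt),
    (m :: (mid ++ [M])).IsChain (Adj (LL K L R)) ∧
    (M :: ur).IsChain (fun p q => Adj (UU K L R) q p) ∧
    (mid ++ flat K L R D (M :: ur)).getLast? = some m ∧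
    (mid ++ flat K L R D (M :: ur)).Nodup ∧
    (∀ v, v ∈ mid ++ flat K L R D (M :: ur) ↔ v ∈ Ends K L R) ∧
    (∀ v, v ∈ M :: ur ↔ UU K L R v) ∧
    (∀ v ∈ Ends K L R, m.1 ≤ v.1) ∧ (∀ v ∈ Ends K L R, v.1 ≤ M.1) ∧ UU K L R m := by
  have hE := C.gp.mono (ends_mono N.KT)
  have hlt : ∀ i ∈ K, (L i).1 < (R i).1 := fun i hi => C.hlt (N.KT hi)
  obtain ⟨i0, hi0⟩ := hK
  obtain ⟨m, hm, hmin⟩ := (ends_finite (K := K) (L := L) (R := R)).exists_minimalFor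
    (fun v => v.1) _ ⟨_, ends_L hi0⟩
  obtain ⟨M, hM, hmax⟩ := (ends_finite (K := K) (L := L) (R := R)).exists_maximalFor
    (fun v => v.1) _ ⟨_, ends_L hi0⟩
  have hmin' : ∀ v ∈ Ends K L R, m.1 ≤ v.1 := fun v hv => by
    rcases le_total m.1 v.1 with h | h
    · exact h
    · exact hmin (j := v) hv h
  have hmax' : ∀ v ∈ Ends K L R, v.1 ≤ M.1 := fun v hv => by
    rcases le_total v.1 M.1 with h | h
    · exact h
    · exact hmax (j := v) hv h
  have hmM : m ≠ M := by
    intro h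
    have := hmin' _ (ends_L hi0)
    have := hmax' _ (ends_R hi0)
    have := hlt i0 hi0
    rw [h] at *
    linarith
  obtain ⟨umin, lmin⟩ := ext_min hlt hE hm hmin'
  obtain ⟨umax, lmax⟩ := ext_max hlt hE hM hmax'
  obtain ⟨ll, l1, l2, l3⟩ := sorted_list (A := LL K L R)
    (ends_finite.subset (fun v (hv : LL K L R v) => hv.1.1)) (fun p q hp hq => hE.1 p hp.1.1 q hq.1.1)
  obtain ⟨lu, u1, u2, u3⟩ := sorted_list (A := UU K L R)
    (ends_finite.subset (fun v (hv : UU K L R v) => hv.1.1)) (fun p q hp hq => hE.1 p hp.1.1 q hq.1.1)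
  obtain ⟨mid, hmid⟩ := sorted_shape l2 ((l1 m).2 lmin) ((l1 M).2 lmax) hmM
    (fun v hv => hmin' v ((l1 v).1 hv).1.1) (fun v hv => hmax' v ((l1 v).1 hv).1.1)
  obtain ⟨umid, humid⟩ := sorted_shape u2 ((u1 m).2 umin) ((u1 M).2 umax) hmM
    (fun v hv => hmin' v ((u1 v).1 hv).1.1) (fun v hv => hmax' v ((u1 v).1 hv).1.1)
  have hrev : M :: (umid.reverse ++ [m]) = lu.reverse := by rw [humid]; simp
  have umem : ∀ v, v ∈ M :: (umid.reverse ++ [m]) ↔ UU K L R v := by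
    intro v; rw [hrev, List.mem_reverse, u1]
  have und : (M :: (umid.reverse ++ [m])).Nodup := by
    rw [hrev, List.nodup_reverse]
    exact u2.imp (fun {p q} h h' => by rw [h'] at h; exact lt_irrefl _ h)
  have lnd : (m :: (mid ++ [M])).Nodup := by
    rw [← hmid]
    exact l2.imp (fun {p q} h h' => by rw [h'] at h; exact lt_irrefl _ h)
  have midm : ∀ v, v ∈ mid ↔ LL K L R v ∧ v ≠ m ∧ v ≠ M := by
    intro v
    rw [← l1, hmid]
    have e1 := (List.nodup_cons.1 lnd).1
    have e2 := (List.nodup_append.1 (List.nodup_cons.1 lnd).2).2.2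
    simp only [List.mem_cons, List.mem_append, List.not_mem_nil, or_false] at *
    constructor
    · intro h
      refine ⟨Or.inr (Or.inl h), ?_, ?_⟩
      · rintro rfl; exact e1 (Or.inl h)
      · rintro rfl; exact e2 v h v rfl rfl
    · rintro ⟨h | h | h, h2, h3⟩
      · exact absurd h h2
      · exact h
      · exact absurd h h3
  have insm : ins K L R D m = [] := by
    rcases ins_cases (D := D) C N.KT m with h' | ⟨b, hb, rfl, hne, h'⟩
    · exact h'
    · obtain ⟨a, ha, -, h, -⟩ := N.ends2 C hb hne
      have := hmin' _ (ends_L ha)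
      linarith
  have hflat : flat K L R D (M :: (umid.reverse ++ [m])) = flat K L R D (M :: umid.reverse) ++ [m] := by
    simp [flat, insm]
  refine ⟨m, M, mid, umid.reverse ++ [m], ?_, ?_, ?_, ?_, ?_, umem, hmin', hmax', umin⟩
  · rw [← hmid]; exact l3
  · rw [hrev, List.isChain_reverse]; exact u3
  · rw [hflat]; simp
  · rw [List.nodup_append]
    refine ⟨(List.nodup_append.1 (List.nodup_cons.1 lnd).2).1,
      N.flat_nodup C und (fun v hv => (umem v).1 hv), ?_⟩
    rintro v hv w hw rfl
    obtain ⟨g1, g2, g3⟩ := (midm v).1 hv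
    rcases (N.mem_flat C).1 hw with h | ⟨b, hb, -, c, hc, rfl⟩
    · have hu := (umem v).1 h
      rcases g1.2 with h | h | h | h
      · exact h hu.1
      · exact hu.2 h
      · exact g2 (hE.1 _ g1.1.1 _ hm (le_antisymm (h _ hm) (hmin' _ g1.1.1)))
      · exact g3 (hE.1 _ g1.1.1 _ hM (le_antisymm (hmax' _ g1.1.1) (h _ hM)))
    · obtain ⟨hcK, hci⟩ := N.inn C hb hc
      exact N.nll C hcK hci g1
  · intro v
    rw [List.mem_append, N.mem_flat C]
    constructor
    · rintro (h | h | ⟨b, hb, -, c, hc, rfl⟩)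
      · exact ((midm v).1 h).1.1.1
      · exact ((umem v).1 h).1.1
      · exact ends_R (N.inn C hb hc).1
    · intro hv
      rcases N.all_cov C hv with h | h | ⟨b, hb, h1, h2⟩
      · by_cases h3 : v = m
        · right; left; exact (umem v).2 (h3 ▸ umin)
        by_cases h4 : v = M
        · right; left; exact (umem v).2 (h4 ▸ umax)
        left; exact (midm v).2 ⟨h, h3, h4⟩
      · right; left; exact (umem v).2 h
      · right; right; exact ⟨b, hb, (umem _).2 h1, h2⟩

end
end

noncomputable section
open Set

variable {α : Type*} {K T : Finset α} {L R : α → Pt} {κ : α → ℝ} {D : α → List α} {own : α → α}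

def NH {α : Type*} (L R : α → Pt) (s : α) (p q : Pt) : Prop :=
  ¬ ((p = L s ∧ q = R s) ∨ (p = R s ∧ q = L s))

open Classical in
def phi {α : Type*} (K : Finset α) (L R : α → Pt) (κ : α → ℝ) (own : α → α) (s : α) (v : Pt) : ZMod 2 :=
  if UU K L R v then (if v.1 ≤ κ s then 1 else 0) else
    if ∃ c ∈ K, v = R c ∧ (κ c < κ s ∨ (κ c = κ s ∧ (L (own c)).1 < (L s).1)) then 1 else 0

section

lemma Dents.avoid (C : Cfg T L R κ) (N : Dents K T L R κ D own) {s : α} (hs : s ∈ K) {p q w : Pt} (h : SGE K T L R κ p q) (hn : NH L R s p q)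
    (hw : w ∈ Seg (L s) (R s)) (hwL : w ≠ L s) (hwR : w ≠ R s) : w ∉ Seg p q := by
  have hE := C.gp.mono (ends_mono N.KT)
  have hpq : p ∈ Ends K L R ∧ q ∈ Ends K L R ∧ p ≠ q := by
    rcases h with h | h
    · exact ⟨h.mem.1, h.mem.2, fun e => by have := h.lt C N.KT; rw [e] at this; exact lt_irrefl _ this⟩
    · exact ⟨h.mem.2, h.mem.1, fun e => by have := h.lt C N.KT; rw [e] at this; exact lt_irrefl _ this⟩
  obtain ⟨hp, hq, hne⟩ := hpq
  have hLR : L s ≠ R s := C.lr (N.KT hs) (N.KT hs)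
  have key : ∀ a b c : Pt, a ∈ Ends K L R → b ∈ Ends K L R → c ∈ Ends K L R → a ≠ b → a ≠ c → b ≠ c →
      w ∈ Seg a b → w ∈ Seg a c → w = a := by
    intro a b c ha hb hc h1 h2 h3 w1 w2
    have := inter_share hE ha hb hc h1 h2 h3
    have hw : w ∈ Seg a b ∩ Seg a c := ⟨w1, w2⟩
    rw [this] at hw
    exact hw
  have hw' : w ∈ Seg (R s) (L s) := by rw [Seg_symm]; exact hw
  have key2 : ∀ x ∈ Ends K L R, ¬ (L s = x ∧ R s = x) := by
    rintro x - ⟨h1, h2⟩; exact hLR (h1.trans h2.symm)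
  intro hwp
  have hwp' : w ∈ Seg q p := by rw [Seg_symm]; exact hwp
  unfold NH at hn
  by_cases h1 : p = L s
  · subst h1
    exact hwL (key _ _ _ hp (ends_R hs) hq hLR hne (fun e => hn (Or.inl ⟨rfl, e.symm⟩)) hw hwp)
  by_cases h2 : p = R s
  · subst h2
    exact hwR (key _ _ _ hp (ends_L hs) hq hLR.symm hne (fun e => hn (Or.inr ⟨rfl, e.symm⟩)) hw' hwp)
  by_cases h3 : q = L s
  · subst h3
    exact hwL (key _ _ _ hq (ends_R hs) hp hLR hne.symm (fun e => h2 e.symm) hw hwp')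
  by_cases h4 : q = R s
  · subst h4
    exact hwR (key _ _ _ hq (ends_L hs) hp hLR.symm hne.symm (fun e => h1 e.symm) hw' hwp')
  have := SGE_NC C N.KT N.pre N.suf p q (L s) (R s) h
    (Or.inl (Or.inr (Or.inr (Or.inl ⟨s, hs, rfl, rfl⟩)))) h1 h2 h3 h4
  exact Set.disjoint_left.1 this hwp hw

lemma hbL (C : Cfg T L R κ) {c s : α} (hc : c ∈ T) (hs : s ∈ T) : (L c).1 ≤ κ s ↔ κ c ≤ κ s := by
  have h1 := C.l_lt c hc
  have h2 := C.l_lt s hs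
  constructor
  · intro h
    by_contra hcon
    push Not at hcon
    have := C.sep s hs c hc hcon
    have := C.r_gt s hs
    linarith
  · intro h; linarith

lemma hbR (C : Cfg T L R κ) {c s : α} (hc : c ∈ T) (hs : s ∈ T) : (R c).1 ≤ κ s ↔ κ c < κ s := by
  have h1 := C.r_gt c hc
  have h2 := C.l_lt s hs
  constructor
  · intro h; linarith
  · intro h
    have := C.sep c hc s hs h
    linarith

lemma ab_hair (C : Cfg T L R κ) {c s : α} (hc : c ∈ T) (hs : s ∈ T) (hk : κ c = κ s) (hne : c ≠ s) :
    ab (L c) (R c) (κ s, ev (L s) (R s) (κ s)) = if (L s).1 < (L c).1 then 1 else 0 := by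
  unfold ab
  simp only
  rcases lt_trichotomy (L s).1 (L c).1 with h | h | h
  · have := C.ord s hs c hc hk.symm h
    rw [if_pos this, if_pos h]
  · exact absurd (C.lxinj hs hc h).symm hne
  · have := C.ord c hc s hs hk h
    rw [hk] at this
    rw [if_neg (not_lt.2 this.le), if_neg (not_lt.2 h.le)]

lemma ab_symm {p q w : Pt} (h : p.1 ≠ q.1) : ab p q w = ab q p w := by
  unfold ab; rw [ev_symm h]

lemma phi_uu (C : Cfg T L R κ) (N : Dents K T L R κ D own) {s : α} {v : Pt} (h : UU K L R v) (w : Pt) (hw : w.1 = κ s) :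
    phi K L R κ own s v = hb v w := by
  unfold phi hb; rw [if_pos h, hw]

lemma phi_R (C : Cfg T L R κ) (N : Dents K T L R κ D own) {s c : α} (hc : c ∈ K) (hi : Inn T L R κ c) : phi K L R κ own s (R c) =
    if κ c < κ s ∨ (κ c = κ s ∧ (L (own c)).1 < (L s).1) then 1 else 0 := by
  unfold phi; rw [if_neg (N.nuu C hc hi)]
  congr 1
  apply propext
  constructor
  · rintro ⟨c', hc', h, h'⟩
    rwa [C.rinj (N.KT hc) (N.KT hc') h]
  · intro h; exact ⟨c, hc, rfl, h⟩

/-- A hair edge: parity -/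
lemma Dents.fhair (C : Cfg T L R κ) (N : Dents K T L R κ D own) {s c : α} (hs : s ∈ K) (hc : c ∈ K) (hne : c ≠ s) :
    Fpar (κ s, ev (L s) (R s) (κ s)) (L c) (R c) =
      if κ c = κ s ∧ (L s).1 < (L c).1 then 1 else 0 := by
  unfold Fpar hb
  simp only [hbL C (N.KT hc) (N.KT hs), hbR C (N.KT hc) (N.KT hs)]
  rcases lt_trichotomy (κ c) (κ s) with h | h | h
  · rw [if_pos h.le, if_pos h, if_neg (fun h' => h.ne h'.1), CharTwo.add_self_eq_zero, zero_mul]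
  · rw [if_pos h.le, if_neg (by rw [h]; exact lt_irrefl _), ab_hair C (N.KT hc) (N.KT hs) h hne]
    simp [h]
  · rw [if_neg h.not_ge, if_neg h.not_gt, if_neg (fun h' => h.ne' h'.1)]
    simp

lemma Dents.parity (C : Cfg T L R κ) (N : Dents K T L R κ D own) {s : α} (hs : s ∈ K) (hD : D s = []) (l : List Pt)
    (hl : l.IsChain (fun p q => Adj (UU K L R) q p)) :
    (flat K L R D l).IsChain (fun p q => NH L R s p q →
      Fpar (κ s, ev (L s) (R s) (κ s)) p q = phi K L R κ own s p + phi K L R κ own s q) := by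
  have hE := C.gp.mono (ends_mono N.KT)
  have hlt : ∀ i ∈ K, (L i).1 < (R i).1 := fun i hi => C.hlt (N.KT hi)
  have hz1 := C.l_lt s (N.KT hs)
  have hz2 := C.r_gt s (N.KT hs)
  set z : Pt := (κ s, ev (L s) (R s) (κ s)) with hz
  apply N.upchain C _ _ _ _ l hl
  · intro p q hpq hn
    rw [phi_uu C N hpq.1 z rfl, phi_uu C N hpq.2.1 z rfl]
    unfold Fpar
    by_cases h0 : hb p z + hb q z = 0
    · rw [h0, zero_mul]
    have hqp := hpq.2.2.1
    have hb' : q.1 ≤ z.1 ∧ z.1 < p.1 := by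
      rcases between_of_hb h0 with h | h
      · linarith
      · exact h
    have h1 := below_HU hlt hE hpq hs z.1 hz1.le hz2.le hb'.1 hb'.2.le
    have hzS : z ∈ Seg (L s) (R s) := (mem_Seg (hlt s hs)).2 ⟨hz1.le, hz2.le, rfl⟩
    have hzL : z ≠ L s := fun e => by rw [← e] at hz1; exact lt_irrefl _ hz1
    have hzR : z ≠ R s := fun e => by rw [← e] at hz2; exact lt_irrefl _ hz2
    have h2 := N.avoid C hs (Or.inr (Or.inr (Or.inl hpq))) hn hzS hzL hzR
    have h3 : z.2 ≠ ev q p z.1 := by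
      intro h
      apply h2
      rw [Seg_symm, mem_Seg hqp]
      exact ⟨hb'.1, hb'.2.le, h⟩
    have h4 : z.2 < ev q p z.1 := lt_of_le_of_ne h1 h3
    have : ab p q z = 1 := by
      rw [ab_symm hqp.ne']; unfold ab; rw [if_pos h4]
    rw [this, mul_one]
  · intro b hb0 hne hn
    obtain ⟨a, ha, h1, h2, h3, h4, h5, h6, h7, h8, h9⟩ := N.ends2 C hb0 hne
    have hbs : b ≠ s := by rintro rfl; exact hne hD
    rw [N.fhair C hs hb0 hbs, phi_uu C N (N.uu C hb0 h7) z rfl, phi_R C N hb0 h7, h9]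
    unfold hb
    simp only [hz, hbL C (N.KT hb0) (N.KT hs)]
    rcases lt_trichotomy (κ b) (κ s) with h | h | h
    · rw [if_neg (fun h' => h.ne h'.1), if_pos h.le, if_pos (Or.inl h), CharTwo.add_self_eq_zero]
    · rcases lt_trichotomy (L b).1 (L s).1 with g | g | g
      · rw [if_neg (fun h' => g.not_gt h'.2), if_pos h.le, if_pos (Or.inr ⟨h, g⟩),
          CharTwo.add_self_eq_zero]
      · exact absurd (C.lxinj (N.KT hb0) (N.KT hs) g) hbs
      · rw [if_pos ⟨h, g⟩, if_pos h.le, if_neg, add_zero]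
        rintro (h' | h')
        · exact h'.ne h
        · exact g.not_gt h'.2
    · rw [if_neg (fun h' => h.ne' h'.1), if_neg h.not_ge, if_neg, add_zero]
      rintro (h' | h')
      · exact h.not_gt h'
      · exact h.ne' h'.1
  · intro b hb0 c hc d hd _ _
    have ec := N.mem b hb0 c hc
    have ed := N.mem b hb0 d hd
    have hk : κ c = κ d := by rw [ec.2.2.2.2, ed.2.2.2.2]
    have ho : own c = own d := by rw [ec.2.2.2.1, ed.2.2.2.1]
    rw [phi_R C N ec.1 ⟨ec.2.1, ec.2.2.1⟩, phi_R C N ed.1 ⟨ed.2.1, ed.2.2.1⟩, hk, ho,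
      CharTwo.add_self_eq_zero]
    unfold Fpar hb
    simp only [hz, hbR C (N.KT ec.1) (N.KT hs), hbR C (N.KT ed.1) (N.KT hs), hk,
      CharTwo.add_self_eq_zero, zero_mul]
  · intro b hb0 a ha hne hai hbi ho hk hl hbt hn
    have hbs : b ≠ s := by rintro rfl; exact hne hD
    have has : a ≠ s := by rintro rfl; exact hn (Or.inr ⟨rfl, rfl⟩)
    have hsw : Fpar z (R a) (L a) = Fpar z (L a) (R a) := by
      unfold Fpar; rw [ab_symm (hlt a ha).ne', add_comm]
    rw [hsw, N.fhair C hs ha has, phi_uu C N (N.uu C ha hai) z rfl, phi_R C N ha hai, ho]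
    unfold hb
    simp only [hz, hbL C (N.KT ha) (N.KT hs)]
    rcases lt_trichotomy (κ a) (κ s) with h | h | h
    · rw [if_neg (fun h' => h.ne h'.1), if_pos (Or.inl h), if_pos h.le, CharTwo.add_self_eq_zero]
    · rcases lt_trichotomy (L a).1 (L s).1 with g | g | g
      · have : (L b).1 < (L s).1 := by
          rcases lt_trichotomy (L b).1 (L s).1 with g' | g' | g'
          · exact g'
          · exact absurd (C.lxinj (N.KT hb0) (N.KT hs) g') hbs
          · exact (hbt s hs (h.symm.trans hk) g g').elim
        rw [if_neg (fun h' => g.not_gt h'.2), if_pos (Or.inr ⟨h, this⟩), if_pos h.le,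
          CharTwo.add_self_eq_zero]
      · exact absurd (C.lxinj (N.KT ha) (N.KT hs) g) has
      · rw [if_pos ⟨h, g⟩, if_pos h.le, if_neg, zero_add]
        rintro (h' | h')
        · exact h'.ne h
        · linarith [h'.2]
    · rw [if_neg (fun h' => h.ne' h'.1), if_neg h.not_ge, if_neg, add_zero]
      rintro (h' | h')
      · exact h.not_gt h'
      · exact h.ne' h'.1

lemma Dents.parityL (C : Cfg T L R κ) (N : Dents K T L R κ D own) {s : α} (hs : s ∈ K) (l : List Pt) (hl : l.IsChain (Adj (LL K L R))) :
    csum (Fpar (κ s, ev (L s) (R s) (κ s))) l = 0 := by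
  have hE := C.gp.mono (ends_mono N.KT)
  have hlt : ∀ i ∈ K, (L i).1 < (R i).1 := fun i hi => C.hlt (N.KT hi)
  have hz1 := C.l_lt s (N.KT hs)
  have hz2 := C.r_gt s (N.KT hs)
  apply csum_zero
  refine hl.imp ?_
  intro p q h
  set z : Pt := (κ s, ev (L s) (R s) (κ s)) with hz
  unfold Fpar
  by_cases h0 : hb p z + hb q z = 0
  · rw [h0, zero_mul]
  have hpq := h.2.2.1
  have hb' : p.1 ≤ z.1 ∧ z.1 < q.1 := by
    rcases between_of_hb h0 with h | h
    · exact h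
    · linarith
  have h1 := below_LH hlt hE h hs z.1 hb'.1 hb'.2.le hz1.le hz2.le
  have : ab p q z = 0 := by
    unfold ab; rw [if_neg (not_lt.2 h1)]
  rw [this, mul_zero]

end
end

noncomputable section
open Set

variable {α : Type*} {K T : Finset α} {L R : α → Pt} {κ : α → ℝ} {D : α → List α} {own : α → α}

lemma block_flat (l : List Pt) (v : Pt) (hv : v ∈ l) :
    (v :: ins K L R D v) <:+: flat K L R D l := by
  obtain ⟨l1, l2, rfl⟩ := List.append_of_mem hv
  unfold flat
  rw [List.flatMap_append, List.flatMap_cons]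
  exact ⟨_, _, List.append_assoc _ _ _⟩

theorem Dents.polygon (C : Cfg T L R κ) (N : Dents K T L R κ D own) (hK : 2 ≤ K.card) :
    ∃ P : SimplePolygon, Set.range P.vtx = Ends K L R ∧
      ∀ s ∈ K, Seg (L s) (R s) ⊆ P.closedRegion := by
  classical
  have hE := C.gp.mono (ends_mono N.KT)
  have hlt : ∀ i ∈ K, (L i).1 < (R i).1 := fun i hi => C.hlt (N.KT hi)
  obtain ⟨m, M, mid, ur, hc1, hc2, hlast, hnd, hmem, hU, hmin, hmax, hUm⟩ :=
    N.cycle C (Finset.card_pos.1 (by omega))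
  obtain ⟨i, hi, j, hj, hij⟩ := Finset.one_lt_card.1 (by omega : 1 < K.card)
  set W := mid ++ flat K L R D (M :: ur) with hW
  have hlen : 3 ≤ W.length := by
    have h1 : ({L i, R i, L j} : Finset Pt) ⊆ W.toFinset := by
      intro v hv
      rw [List.mem_toFinset, hmem]
      simp only [Finset.mem_insert, Finset.mem_singleton] at hv
      rcases hv with rfl | rfl | rfl
      · exact ends_L hi
      · exact ends_R hi
      · exact ends_L hj
    have h2 : ({L i, R i, L j} : Finset Pt).card = 3 := by
      rw [Finset.card_eq_three]
      exact ⟨_, _, _, C.lr (N.KT hi) (N.KT hi), fun h => hij (C.linj (N.KT hi) (N.KT hj) h),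
        (C.lr (N.KT hj) (N.KT hi)).symm, rfl⟩
    have := Finset.card_le_card h1
    rw [h2] at this
    exact this.trans (List.toFinset_card_le _)
  obtain ⟨rest, hrest⟩ : ∃ rest, flat K L R D (M :: ur) = M :: rest := by
    unfold flat; rw [List.flatMap_cons]; exact ⟨_, rfl⟩
  have hmW : m :: W = (m :: mid) ++ M :: rest := by rw [hW, hrest]; rfl
  have hflat : (flat K L R D (M :: ur)).IsChain (SGE K T L R κ) := by
    apply N.upchain C _ _ _ _ _ hc2
    · intro p q h; exact Or.inr (Or.inr (Or.inl h))
    · intro b hb _; exact Or.inl (Or.inr (Or.inr (Or.inl ⟨b, hb, rfl, rfl⟩)))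
    · intro b hb c hc d hd h
      have e1 := (N.mem b hb c hc).1
      have e2 := (N.mem b hb d hd).1
      rcases h with h | h
      · exact Or.inl (Or.inr (Or.inr (Or.inr ⟨c, e1, d, e2, h, rfl, rfl⟩)))
      · exact Or.inr (Or.inr (Or.inr (Or.inr ⟨d, e2, c, e1, h, rfl, rfl⟩)))
    · intro b hb a ha _ _ _ _ _ _ _
      exact Or.inr (Or.inr (Or.inr (Or.inl ⟨a, ha, rfl, rfl⟩)))
  have hch : (m :: W).IsChain (SGE K T L R κ) := by
    rw [hmW, List.isChain_split]
    rw [hrest] at hflat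
    refine ⟨?_, hflat⟩
    exact hc1.imp (fun p q h => Or.inl (Or.inl h))
  obtain ⟨P, hP1, hP2, hP3⟩ := polygon_of_list hE (SGE_NC C N.KT N.pre N.suf) W hnd hlen
    (fun p hp => (hmem p).1 hp) m hlast hch
  have hrange : Set.range P.vtx = Ends K L R := by
    rw [hP1]; ext v; exact hmem v
  refine ⟨P, hrange, ?_⟩
  have hSGE : ∀ i, SGE K T L R κ (P.vtx i) (P.vtx (i + 1)) := (hP2 _).2 hch
  intro s hs
  by_cases hN : ∀ i, NH L R s (P.vtx i) (P.vtx (i + 1))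
  swap
  · push Not at hN
    obtain ⟨i, hi⟩ := hN
    unfold NH at hi
    push Not at hi
    intro w hw
    left
    unfold SimplePolygon.edgeUnion
    rw [Set.mem_iUnion]
    refine ⟨i, ?_⟩
    rcases hi with ⟨h1, h2⟩ | ⟨h1, h2⟩
    · rw [h1, h2]; exact hw
    · rw [h1, h2, Seg_symm]; exact hw
  have hNc : (m :: W).IsChain (NH L R s) := (hP2 _).1 hN
  have hNf : (flat K L R D (M :: ur)).IsChain (NH L R s) := by
    rw [hmW, List.isChain_split] at hNc
    rw [hrest]; exact hNc.2
  have hDs : D s = [] := by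
    by_contra hne
    obtain ⟨a, ha, h1, h2, h3, h4, h5, h6, h7, -⟩ := N.ends2 C hs hne
    have h8 := block_flat (K := K) (L := L) (R := R) (D := D) _ _ ((hU _).2 (N.uu C hs h7))
    obtain ⟨l2, l3, hl23⟩ := h8
    rw [← hl23] at hNf
    have h9 := hNf.left_of_append.right_of_append
    rw [ins_L C N.KT hs, List.isChain_cons] at h9
    apply h9.1 (R s) (by rw [List.head?_map, h4]; rfl)
    exact Or.inl ⟨rfl, rfl⟩
  have hz1 := C.l_lt s (N.KT hs)
  have hz2 := C.r_gt s (N.KT hs)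
  set z : Pt := (κ s, ev (L s) (R s) (κ s)) with hz
  have hsum : csum (Fpar z) (m :: W) = 1 := by
    rw [hmW, csum_append]
    have e1 : csum (Fpar z) (m :: mid ++ [M]) = 0 := N.parityL C hs _ hc1
    rw [e1, zero_add]
    have e2 := chain_mp hNf (N.parity C hs hDs _ hc2)
    rw [hrest] at e2
    have hl : (M :: rest).getLast? = some m := by
      rw [hW, hrest] at hlast
      rw [List.getLast?_append] at hlast
      simpa using hlast
    rw [csum_tel _ _ _ e2 hl, phi_uu C N hUm z rfl, phi_uu C N ((hU M).1 (by simp)) z rfl]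
    unfold hb
    rw [if_neg, if_pos, zero_add]
    · have := hmin _ (ends_L hs); linarith
    · have := hmax _ (ends_R hs); simp only [hz]; linarith
  have hav : ∀ w ∈ Seg (L s) (R s), w ≠ L s → w ≠ R s → w ∉ P.edgeUnion := by
    intro w hw h1 h2 h3
    unfold SimplePolygon.edgeUnion at h3
    rw [Set.mem_iUnion] at h3
    obtain ⟨i, hi⟩ := h3
    exact N.avoid C hs (hSGE i) (hN i) hw h1 h2 hi
  have hvert : ∀ v ∈ Ends K L R, v ∈ P.edgeUnion := by
    intro v hv
    rw [← hrange] at hv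
    obtain ⟨i, rfl⟩ := hv
    unfold SimplePolygon.edgeUnion
    rw [Set.mem_iUnion]
    exact ⟨i, left_mem_segment ℝ _ _⟩
  have hzS : z ∈ Seg (L s) (R s) := (mem_Seg (hlt s hs)).2 ⟨hz1.le, hz2.le, rfl⟩
  have hzL : z ≠ L s := fun e => by rw [← e] at hz1; exact lt_irrefl _ hz1
  have hzR : z ≠ R s := fun e => by rw [← e] at hz2; exact lt_irrefl _ hz2
  have hbd := hP3 z (hav z hzS hzL hzR) hsum
  intro w hw
  by_cases hwL : w = L s
  · left; rw [hwL]; exact hvert _ (ends_L hs)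
  by_cases hwR : w = R s
  · left; rw [hwR]; exact hvert _ (ends_R hs)
  right
  refine ⟨hav w hw hwL hwR, ?_⟩
  have hsub : Seg z w ⊆ (P.edgeUnion)ᶜ := by
    intro u hu
    have h1 : Seg z w ⊆ Seg (L s) (R s) := (convex_segment (L s) (R s)).segment_subset hzS hw
    have hx := (mem_Seg (hlt s hs)).1 hw
    have hlw : (L s).1 < w.1 := lt_of_le_of_ne hx.1 (fun h => hwL (by
      apply Prod.ext h.symm; rw [hx.2.2, ← h, ev_left]))
    have hrw : w.1 < (R s).1 := lt_of_le_of_ne hx.2.1 (fun h => hwR (by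
      apply Prod.ext h; rw [hx.2.2, h, ev_right (hlt s hs).ne]))
    have hux : (L s).1 < u.1 ∧ u.1 < (R s).1 := by
      obtain ⟨a, b, ha, hb, hab, rfl⟩ := hu
      have h5 : (a • z + b • w).1 = a * κ s + b * w.1 := by simp [hz]
      rw [h5]
      have hconv := (convex_Ioo (L s).1 (R s).1) (x := κ s) ⟨hz1, hz2⟩ (y := w.1) ⟨hlw, hrw⟩ ha hb hab
      simpa using hconv
    exact hav u (h1 hu) (fun e => by rw [e] at hux; exact lt_irrefl _ hux.1)
      (fun e => by rw [e] at hux; exact lt_irrefl _ hux.2)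
  have hpc : IsPreconnected (Seg z w) := (convex_segment z w).isPreconnected
  have h1 := hpc.subset_connectedComponentIn (left_mem_segment ℝ z w) hsub
  rw [← connectedComponentIn_eq (h1 (right_mem_segment ℝ z w))]
  exact hbd

end

noncomputable section
open Set

section comb
variable {α : Type*}

lemma sorted_fin (S : Finset α) (f : α → ℝ) (hf : ∀ a ∈ S, ∀ b ∈ S, f a = f b → a = b) :
    ∃ l : List α, (∀ v, v ∈ l ↔ v ∈ S) ∧ l.Pairwise (fun p q => f p < f q) ∧
      l.IsChain (fun p q => p ∈ S ∧ q ∈ S ∧ f p < f q ∧ ∀ v ∈ S, f p < f v → f v < f q → False) := by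
  classical
  let r : α → α → Prop := fun p q => f p ≤ f q
  haveI : Std.Total r := ⟨fun p q => le_total (f p) (f q)⟩
  haveI : IsTrans α r := ⟨fun p q s h1 h2 => le_trans (α := ℝ) h1 h2⟩
  let l := S.toList.insertionSort r
  have hmem : ∀ v, v ∈ l ↔ v ∈ S := by
    intro v; simp [l]
  have hnd : l.Nodup := (List.perm_insertionSort r _).nodup_iff.2 (Finset.nodup_toList _)
  have hsort : l.Pairwise r := List.pairwise_insertionSort r _
  have hlt : l.Pairwise (fun p q => f p < f q) := by
    have := hsort.and hnd
    refine List.Pairwise.imp_of_mem ?_ this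
    rintro p q hp hq ⟨h1, h2⟩
    exact lt_of_le_of_ne h1 (fun h => h2 (hf p ((hmem p).1 hp) q ((hmem q).1 hq) h))
  refine ⟨l, hmem, hlt, ?_⟩
  rw [List.isChain_iff_getElem]
  intro i hi
  rw [List.pairwise_iff_getElem] at hlt
  refine ⟨(hmem _).1 (List.getElem_mem _), (hmem _).1 (List.getElem_mem _),
    hlt _ _ (by omega) hi (by omega), ?_⟩
  intro v hv h1 h2
  obtain ⟨k, hk, rfl⟩ := List.getElem_of_mem ((hmem v).2 hv)
  rcases lt_trichotomy k i with h | h | h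
  · have := hlt _ _ hk (by omega) h; linarith
  · subst h; exact lt_irrefl _ h1
  · rcases Nat.lt_or_ge (i + 1) k with h' | h'
    · have := hlt _ _ hi hk h'; linarith
    · have : k = i + 1 := by omega
      subst this; exact lt_irrefl _ h2

structure UpR (T : Finset α) (κ lam rho : α → ℝ) (i k : α) : Prop where
  mi : i ∈ T
  mo : k ∈ T
  ka : κ k = κ i
  la : lam i < lam k
  rh : rho i < rho k
  btw : ∀ t ∈ T, κ t = κ i → lam i < lam t → lam t < lam k → rho t < rho i

def Pm (T : Finset α) (κ lam rho : α → ℝ) (i : α) : Prop :=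
  ∀ j ∈ T, κ j = κ i → lam j < lam i → rho j ≤ rho i

def Par (T : Finset α) (κ lam rho : α → ℝ) (p q : α) : Prop :=
  ∃ e f, UpR T κ (-lam) rho p e ∧ UpR T κ lam rho p f ∧ (q = e ∨ q = f) ∧ rho q ≤ rho e ∧
    rho q ≤ rho f

variable {T : Finset α} {κ lam rho : α → ℝ}

lemma UpR.uniq {i k k' : α} (hl : ∀ a ∈ T, ∀ b ∈ T, lam a = lam b → a = b)
    (h : UpR T κ lam rho i k) (h' : UpR T κ lam rho i k') : k = k' := by
  rcases lt_trichotomy (lam k) (lam k') with g | g | g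
  · have := h'.btw k h.mo h.ka h.la g
    have := h.rh; linarith
  · exact hl _ h.mo _ h'.mo g
  · have := h.btw k' h'.mo h'.ka h'.la g
    have := h'.rh; linarith

lemma exists_max_btw (hr : ∀ a ∈ T, ∀ b ∈ T, rho a = rho b → a = b) {k0 x y : ℝ} {t0 : α}
    (h0 : t0 ∈ T) (hk : κ t0 = k0) (hx : x < lam t0) (hy : lam t0 < y) :
    ∃ t ∈ T, κ t = k0 ∧ x < lam t ∧ lam t < y ∧ rho t0 ≤ rho t ∧
      ∀ t' ∈ T, κ t' = k0 → x < lam t' → lam t' < y → t' ≠ t → rho t' < rho t := by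
  have hfin : ({u | u ∈ T ∧ κ u = k0 ∧ x < lam u ∧ lam u < y} : Set α).Finite :=
    T.finite_toSet.subset (fun u hu => hu.1)
  obtain ⟨t, ⟨ht, h1, h2, h3⟩, hmax⟩ := hfin.exists_maximalFor rho _ ⟨t0, h0, hk, hx, hy⟩
  have key : ∀ t' ∈ T, κ t' = k0 → x < lam t' → lam t' < y → rho t' ≤ rho t := by
    intro t' g1 g2 g3 g4
    rcases le_total (rho t') (rho t) with h | h
    · exact h
    · exact hmax (j := t') ⟨g1, g2, g3, g4⟩ h
  refine ⟨t, ht, h1, h2, h3, key t0 h0 hk hx hy, ?_⟩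
  intro t' g1 g2 g3 g4 g5
  exact lt_of_le_of_ne (key t' g1 g2 g3 g4) (fun h => g5 (hr _ g1 _ ht h))

lemma exists_dn (hr : ∀ a ∈ T, ∀ b ∈ T, rho a = rho b → a = b) {k : α} (hk : k ∈ T)
    (h : ¬ Pm T κ lam rho k) : ∃ e, UpR T κ (-lam) rho k e := by
  unfold Pm at h
  push Not at h
  obtain ⟨j, hj, h1, h2, h3⟩ := h
  have hfin : ({u | u ∈ T ∧ κ u = κ k ∧ lam u < lam k ∧ rho k < rho u} : Set α).Finite :=
    T.finite_toSet.subset (fun u hu => hu.1)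
  obtain ⟨e, ⟨he, g1, g2, g3⟩, hmax⟩ := hfin.exists_maximalFor lam _ ⟨j, hj, h1, h2, h3⟩
  refine ⟨e, hk, he, g1, by simpa using g2, g3, ?_⟩
  intro t ht htk a b
  simp only [Pi.neg_apply, neg_lt_neg_iff] at a b
  by_contra hcon
  push Not at hcon
  have hne : rho k ≠ rho t := fun h => by rw [hr _ hk _ ht h] at a; exact lt_irrefl _ a
  have := hmax (j := t) ⟨ht, htk, a, lt_of_le_of_ne hcon hne⟩ b.le
  linarith

/-- If there is no child of `k` strictly between `e` and the child `b`, then `e` is the lower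
bounding element of `b`. -/
lemma dn_of_gap (hl : ∀ a ∈ T, ∀ b ∈ T, lam a = lam b → a = b)
    (hr : ∀ a ∈ T, ∀ b ∈ T, rho a = rho b → a = b) {k e b : α} (hb : UpR T κ lam rho b k)
    (he : e ∈ T) (hke : κ e = κ k) (hle : lam e < lam b) (hre : rho b < rho e)
    (hlt : ∀ t ∈ T, κ t = κ k → lam e < lam t → lam t < lam b → rho t < rho k)
    (hgap : ∀ t, UpR T κ lam rho t k → lam e < lam t → lam t < lam b → False) :
    UpR T κ (-lam) rho b e := by
  refine ⟨hb.mi, he, hke.trans hb.ka, by simpa using hle, hre, ?_⟩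
  intro t0 ht0 hk0 a0 b0
  simp only [Pi.neg_apply, neg_lt_neg_iff] at a0 b0
  by_contra hcon
  obtain ⟨t, ht, htk, h1, h2, h3, h4⟩ := exists_max_btw hr ht0 hk0 b0 a0
  have hne : t0 ≠ b := fun h => by rw [h] at a0; exact lt_irrefl _ a0
  have hbt : rho b < rho t := by
    apply lt_of_lt_of_le _ h3
    apply lt_of_le_of_ne (not_lt.1 hcon)
    intro h
    exact hne (hr _ hb.mi _ ht0 h).symm
  apply hgap t _ h1 h2
  refine ⟨ht, hb.mo, hb.ka.trans htk.symm, h2.trans hb.la, hlt t ht (htk.trans hb.ka.symm) h1 h2, ?_⟩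
  intro t' g1 g2 g3 g4
  rcases lt_trichotomy (lam t') (lam b) with g | g | g
  · exact h4 t' g1 (g2.trans htk) (h1.trans g3) g (fun e => by rw [e] at g3; exact lt_irrefl _ g3)
  · rw [hl _ g1 _ hb.mi g]; exact hbt
  · exact (hb.btw t' g1 (g2.trans htk) g g4).trans hbt

lemma star (hl : ∀ a ∈ T, ∀ b ∈ T, lam a = lam b → a = b)
    (hr : ∀ a ∈ T, ∀ b ∈ T, rho a = rho b → a = b) {k : α} (hk : k ∈ T) (hP : ¬ Pm T κ lam rho k)
    (hch : ∃ i, UpR T κ lam rho i k) :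
    ∃ c : List α, (k :: c).Nodup ∧ (∀ i, i ∈ c ↔ UpR T κ lam rho i k) ∧
      (∀ i ∈ c, ¬ Pm T κ lam rho i) ∧
      (k :: c).IsChain (fun p q => Par T κ lam rho p q ∨ Par T κ lam rho q p) ∧
      ∃ a, (k :: c).getLast? = some a ∧ a ∈ T ∧ κ a = κ k ∧ lam a < lam k ∧
        ∀ t ∈ T, κ t = κ k → lam a < lam t → lam t < lam k → False := by
  classical
  let S := T.filter (fun i => UpR T κ lam rho i k)
  have hS : ∀ i, i ∈ S ↔ UpR T κ lam rho i k := by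
    intro i; simp only [S, Finset.mem_filter]
    exact ⟨fun h => h.2, fun h => ⟨h.mi, h⟩⟩
  obtain ⟨c, c1, c2, c3⟩ := sorted_fin S lam (fun a ha b hb => hl a ((hS a).1 ha).mi b ((hS b).1 hb).mi)
  have c1' : ∀ i, i ∈ c ↔ UpR T κ lam rho i k := fun i => (c1 i).trans (hS i)
  obtain ⟨e, he⟩ := exists_dn (lam := lam) hr hk hP
  have hek : lam e < lam k := by simpa using he.la
  have hebtw : ∀ t ∈ T, κ t = κ k → lam e < lam t → lam t < lam k → rho t < rho k := by
    intro t ht htk h1 h2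
    exact he.btw t ht htk (by simpa using h2) (by simpa using h1)
  have hei : ∀ i, UpR T κ lam rho i k → lam e < lam i := by
    intro i hi
    rcases lt_trichotomy (lam e) (lam i) with h | h | h
    · exact h
    · rw [hl _ he.mo _ hi.mi h] at he
      have := he.rh; have := hi.rh; linarith
    · have := hi.btw e he.mo (he.ka.trans hi.ka) h hek
      have := he.rh; have := hi.rh; linarith
  have hcne : c ≠ [] := by
    obtain ⟨i, hi⟩ := hch
    exact List.ne_nil_of_mem ((c1' i).2 hi)
  refine ⟨c, ?_, c1', ?_, ?_, ?_⟩
  · rw [List.nodup_cons]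
    constructor
    · intro h; exact lt_irrefl _ ((c1' k).1 h).la
    · exact c2.imp (fun {p q} h h' => by rw [h'] at h; exact lt_irrefl _ h)
  · intro i hi h
    have hi := (c1' i).1 hi
    have := h e he.mo (he.ka.trans hi.ka) (hei i hi)
    have := he.rh; have := hi.rh; linarith
  · rw [List.isChain_cons]
    constructor
    · intro y hy
      right
      have hyc := (c1' y).1 (List.mem_of_head? hy)
      have hmin : ∀ t, UpR T κ lam rho t k → lam y ≤ lam t := by
        intro t ht
        have := (c1' t).2 ht
        obtain ⟨c', rfl⟩ : ∃ c', c = y :: c' := by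
          cases c with
          | nil => simp at hy
          | cons u v => simp at hy; exact ⟨v, by rw [hy]⟩
        rcases List.mem_cons.1 this with h | h
        · rw [h]
        · exact ((List.pairwise_cons.1 c2).1 t h).le
      refine ⟨e, k, ?_, hyc, Or.inr rfl, he.rh.le, le_rfl⟩
      apply dn_of_gap hl hr hyc he.mo he.ka (hei y hyc) (hyc.rh.trans he.rh)
      · intro t ht htk h1 h2; exact hebtw t ht htk h1 (h2.trans hyc.la)
      · intro t ht h1 h2; exact absurd (hmin t ht) (not_le.2 h2)
    · refine c3.imp ?_
      rintro a b ⟨ha, hb, hab, hn⟩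
      right
      have ha := (hS a).1 ha
      have hb := (hS b).1 hb
      have hk' : κ a = κ b := ha.ka.symm.trans hb.ka
      refine ⟨a, k, ?_, hb, Or.inl rfl, le_rfl, ha.rh.le⟩
      apply dn_of_gap hl hr hb ha.mi ha.ka.symm hab (ha.btw b hb.mi hk'.symm hab hb.la)
      · intro t ht htk h1 h2
        exact (ha.btw t ht (htk.trans ha.ka) h1 (h2.trans hb.la)).trans ha.rh
      · intro t ht h1 h2; exact hn t ((hS t).2 ht) h1 h2
  · obtain ⟨c', a, hca⟩ := (List.eq_nil_or_concat c).resolve_left hcne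
    rw [List.concat_eq_append] at hca
    subst hca
    have ha := (c1' a).1 (by simp)
    refine ⟨a, by rw [← List.cons_append, List.getLast?_append]; simp, ha.mi, ha.ka.symm, ha.la, ?_⟩
    intro t0 ht0 hk0 h1 h2
    obtain ⟨t, ht, htk, g1, g2, g3, g4⟩ := exists_max_btw hr ht0 hk0 h1 h2
    have hU : UpR T κ lam rho t k := by
      refine ⟨ht, hk, htk.symm, g2, (ha.btw t ht (htk.trans ha.ka) g1 g2).trans ha.rh, ?_⟩
      intro t' f1 f2 f3 f4
      exact g4 t' f1 (f2.trans htk) (g1.trans f3) f4 (fun e => by rw [e] at f3; exact lt_irrefl _ f3)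
    have := (c1' t).2 hU
    rcases List.mem_append.1 this with h | h
    · have := (List.pairwise_append.1 c2).2.2 t h a (by simp)
      linarith
    · simp at h; rw [h] at g1; exact lt_irrefl _ g1

lemma two_col (hl : ∀ a ∈ T, ∀ b ∈ T, lam a = lam b → a = b) :
    ∃ col : α → Bool, ∀ i k, UpR T κ lam rho i k → col i ≠ col k := by
  classical
  let r := UpR T κ lam rho
  have htr : ∀ a b, Relation.TransGen r a b → b ∈ T ∧ lam a < lam b := by
    intro a b h
    induction h with
    | single h => exact ⟨h.mo, h.la⟩
    | tail _ h ih => exact ⟨h.mo, ih.2.trans h.la⟩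
  let n : α → ℕ := fun i => (T.filter (fun k => Relation.TransGen r i k)).card
  refine ⟨fun i => decide (n i % 2 = 0), ?_⟩
  intro i k h
  have : n i = n k + 1 := by
    have : T.filter (fun j => Relation.TransGen r i j) =
        insert k (T.filter (fun j => Relation.TransGen r k j)) := by
      ext j
      simp only [Finset.mem_filter, Finset.mem_insert]
      constructor
      · rintro ⟨hj, hij⟩
        obtain ⟨b, hb, hbj⟩ := Relation.TransGen.head'_iff.1 hij
        rw [hb.uniq hl h] at hbj
        rcases Relation.reflTransGen_iff_eq_or_transGen.1 hbj with h' | h'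
        · exact Or.inl h'
        · exact Or.inr ⟨hj, h'⟩
      · rintro (h' | ⟨h1, h2⟩)
        · rw [h']; exact ⟨h.mo, Relation.TransGen.single h⟩
        · exact ⟨h1, Relation.TransGen.head h h2⟩
    simp only [n]
    rw [this, Finset.card_insert_of_notMem]
    intro hmem
    exact lt_irrefl _ (htr _ _ (Finset.mem_filter.1 hmem).2).2
  intro hc
  have := (decide_eq_decide).1 hc
  omega

end comb
end

noncomputable section
open Set

variable {α : Type*} {K T : Finset α} {L R : α → Pt} {κ : α → ℝ}

def Good {α : Type*} (K : Finset α) (L R : α → Pt) : Prop :=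
  ∃ P : SimplePolygon, Set.range P.vtx = Ends K L R ∧ ∀ s ∈ K, Seg (L s) (R s) ⊆ P.closedRegion

lemma Cfg.mono (C : Cfg T L R κ) (h : K ⊆ T) : Cfg K L R κ :=
  ⟨fun i hi => C.l_lt i (h hi), fun i hi => C.r_gt i (h hi), C.gp.mono (ends_mono h),
   fun i hi j hj => C.disj i (h hi) j (h hj), fun i hi j hj => C.sep i (h hi) j (h hj),
   fun i hi j hj => C.ord i (h hi) j (h hj)⟩

lemma good_of_ext (C : Cfg K L R κ) (h : ∀ i ∈ K, PreMax K L R κ i ∨ SufMax K L R κ i)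
    (h2 : 2 ≤ K.card) : Good K L R := by
  have N : Dents K K L R κ (fun _ => []) id := by
    refine ⟨subset_rfl, fun i hi _ => hi, fun i hi _ => hi, ?_, ?_, ?_, ?_, ?_⟩
    · intros; simp
    · intros; simp
    · intro b hb c hc; simp at hc
    · intros; left; rfl
    · intro c hc h3 h4
      rcases h c hc with h | h
      · exact absurd h h3
      · exact absurd h h4
  exact N.polygon C h2

/-- A dent list `l` with first element `b` and last element `a`. -/
structure DList {α : Type*} (T : Finset α) (L R : α → Pt) (κ : α → ℝ) (l : List α) : Prop where
  chain : l.IsChain (fun c d => CE T L R κ c d ∨ CE T L R κ d c)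
  nodup : l.Nodup
  mem : ∀ c ∈ l, c ∈ T ∧ Inn T L R κ c
  ends : ∃ a b, κ a = κ b ∧ (L a).1 < (L b).1 ∧ (∀ c ∈ l, κ c = κ b) ∧
    (∀ t ∈ T, κ t = κ b → (L a).1 < (L t).1 → (L t).1 < (L b).1 → False) ∧
    l.head? = some b ∧ l.getLast? = some a

lemma star_good (C : Cfg T L R κ) (Z : Finset α) (ℓ : α → List α) (hℓ : ∀ z ∈ Z, DList T L R κ (ℓ z))
    (hdis : ∀ z ∈ Z, ∀ z' ∈ Z, ∀ c, c ∈ ℓ z → c ∈ ℓ z' → z = z') :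
    ∃ K ⊆ T, (∀ z ∈ Z, ∀ c ∈ ℓ z, c ∈ K) ∧ (2 ≤ K.card → Good K L R) := by
  classical
  let K := T.filter (fun i => PreMax T L R κ i ∨ SufMax T L R κ i ∨ ∃ z ∈ Z, i ∈ ℓ z)
  have hKT : K ⊆ T := Finset.filter_subset _ _
  have hmK : ∀ z ∈ Z, ∀ c ∈ ℓ z, c ∈ K := by
    intro z hz c hc
    exact Finset.mem_filter.2 ⟨((hℓ z hz).mem c hc).1, Or.inr (Or.inr ⟨z, hz, hc⟩)⟩
  refine ⟨K, hKT, hmK, ?_⟩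
  intro h2
  let D : α → List α := fun b => if h : ∃ z ∈ Z, (ℓ z).head? = some b then ℓ h.choose else []
  have hD : ∀ z ∈ Z, ∀ b, (ℓ z).head? = some b → D b = ℓ z := by
    intro z hz b hb
    have h : ∃ z ∈ Z, (ℓ z).head? = some b := ⟨z, hz, hb⟩
    simp only [D]
    rw [dif_pos h]
    rw [hdis _ h.choose_spec.1 z hz b (List.mem_of_head? h.choose_spec.2) (List.mem_of_head? hb)]
  have hDc : ∀ b, D b = [] ∨ ∃ z ∈ Z, (ℓ z).head? = some b ∧ D b = ℓ z := by
    intro b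
    by_cases h : ∃ z ∈ Z, (ℓ z).head? = some b
    · obtain ⟨z, hz, hb⟩ := h
      exact Or.inr ⟨z, hz, hb, hD z hz b hb⟩
    · left; simp only [D]; rw [dif_neg h]
  let own : α → α := fun c => if h : ∃ z ∈ Z, c ∈ ℓ z then ((ℓ h.choose).head?).getD c else c
  have hown : ∀ z ∈ Z, ∀ c ∈ ℓ z, ∀ b, (ℓ z).head? = some b → own c = b := by
    intro z hz c hc b hb
    have h : ∃ z ∈ Z, c ∈ ℓ z := ⟨z, hz, hc⟩
    simp only [own]
    rw [dif_pos h, hdis _ h.choose_spec.1 z hz c h.choose_spec.2 hc, hb]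
    rfl
  have N : Dents K T L R κ D own := by
    refine ⟨hKT, ?_, ?_, ?_, ?_, ?_, ?_, ?_⟩
    · intro i hi h; exact Finset.mem_filter.2 ⟨hi, Or.inl h⟩
    · intro i hi h; exact Finset.mem_filter.2 ⟨hi, Or.inr (Or.inl h)⟩
    · intro b _
      rcases hDc b with h | ⟨z, hz, hb, h⟩
      · rw [h]; simp
      · rw [h]; exact (hℓ z hz).chain
    · intro b _
      rcases hDc b with h | ⟨z, hz, hb, h⟩
      · rw [h]; simp
      · rw [h]; exact (hℓ z hz).nodup
    · intro b _ c hc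
      rcases hDc b with h | ⟨z, hz, hb, h⟩
      · rw [h] at hc; simp at hc
      · rw [h] at hc
        have hm := (hℓ z hz).mem c hc
        obtain ⟨a, b', e1, e2, e3, e4, e5, e6⟩ := (hℓ z hz).ends
        rw [hb] at e5
        have : b = b' := by simpa using e5
        subst this
        exact ⟨hmK z hz c hc, hm.2.1, hm.2.2, hown z hz c hc b hb, e3 c hc⟩
    · intro b _
      rcases hDc b with h | ⟨z, hz, hb, h⟩
      · exact Or.inl h
      · right
        obtain ⟨a, b', e1, e2, e3, e4, e5, e6⟩ := (hℓ z hz).ends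
        rw [hb] at e5
        have : b = b' := by simpa using e5
        subst this
        refine ⟨a, hmK z hz a (List.mem_of_getLast? e6), e1, e2, ?_, ?_, ?_⟩
        · intro t ht; exact e4 t (hKT ht)
        · rw [h]; exact hb
        · rw [h]; exact e6
    · intro c hc h3 h4
      obtain ⟨z, hz, hcz⟩ := ((Finset.mem_filter.1 hc).2.resolve_left h3).resolve_left h4
      obtain ⟨a, b, e1, e2, e3, e4, e5, e6⟩ := (hℓ z hz).ends
      rw [hown z hz c hcz b e5, hD z hz b e5]
      exact ⟨hmK z hz b (List.mem_of_head? e5), hcz⟩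
  exact N.polygon C h2

def lamf {α : Type*} (L : α → Pt) : α → ℝ := fun i => (L i).1

lemma isUp_iff {i k : α} : IsUp T L R κ i k ↔ UpR T κ (lamf L) (lamf R) i k :=
  ⟨fun h => ⟨h.mi, h.mo, h.ka, h.la, h.rh, h.btw⟩, fun h => ⟨h.mi, h.mo, h.ka, h.la, h.rh, h.btw⟩⟩

lemma isDn_iff {i k : α} : IsDn T L R κ i k ↔ UpR T κ (-lamf L) (lamf R) i k := by
  constructor
  · intro h
    refine ⟨h.mi, h.mo, h.ka, by simpa [lamf] using h.la, h.rh, ?_⟩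
    intro t ht hk a b
    exact h.btw t ht hk (by simpa [lamf] using b) (by simpa [lamf] using a)
  · intro h
    refine ⟨h.mi, h.mo, h.ka, by simpa [lamf] using h.la, h.rh, ?_⟩
    intro t ht hk a b
    exact h.btw t ht hk (by simpa [lamf] using b) (by simpa [lamf] using a)

lemma sufMax_iff {i : α} : SufMax T L R κ i ↔ Pm T κ (-lamf L) (lamf R) i := by
  constructor
  · intro h j hj hk a; exact h j hj hk (by simpa [lamf] using a)
  · intro h j hj hk a; exact h j hj hk (by simpa [lamf] using a)

lemma par_up {p q : α} (h : Par T κ (lamf L) (lamf R) p q) : CE T L R κ p q := by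
  obtain ⟨e, f, h1, h2, h3, h4, h5⟩ := h
  exact ⟨e, f, isDn_iff.2 h1, isUp_iff.2 h2, h3, h4, h5⟩

lemma par_dn {p q : α} (h : Par T κ (-lamf L) (lamf R) p q) : CE T L R κ p q := by
  obtain ⟨e, f, h1, h2, h3, h4, h5⟩ := h
  rw [neg_neg] at h1
  exact ⟨f, e, isDn_iff.2 h2, isUp_iff.2 h1, h3.symm, h5, h4⟩

/-- common part: for a side `lam` which is plus or minus the left coordinate -/
lemma side (C : Cfg T L R κ) {lam : α → ℝ} (hl : ∀ a ∈ T, ∀ b ∈ T, lam a = lam b → a = b)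
    (hlists : ∀ k ∈ T, Inn T L R κ k → (∃ i, UpR T κ lam (lamf R) i k) →
      ∃ l, DList T L R κ l ∧ ∀ i, i ∈ l ↔ i = k ∨ UpR T κ lam (lamf R) i k) :
    ∃ K1 ⊆ T, ∃ K2 ⊆ T, (2 ≤ K1.card → Good K1 L R) ∧ (2 ≤ K2.card → Good K2 L R) ∧
      ∀ i k, UpR T κ lam (lamf R) i k → Inn T L R κ k → i ∈ K1 ∨ i ∈ K2 := by
  classical
  obtain ⟨col, hcol⟩ := two_col (T := T) (κ := κ) (lam := lam) (rho := lamf R) hl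
  have main : ∀ β : Bool, ∃ K ⊆ T, (2 ≤ K.card → Good K L R) ∧
      ∀ i k, UpR T κ lam (lamf R) i k → Inn T L R κ k → col k = β → i ∈ K := by
    intro β
    let Z := T.filter (fun k => Inn T L R κ k ∧ (∃ i, UpR T κ lam (lamf R) i k) ∧ col k = β)
    have hZ : ∀ k ∈ Z, ∃ l, DList T L R κ l ∧ ∀ i, i ∈ l ↔ i = k ∨ UpR T κ lam (lamf R) i k := by
      intro k hk
      have hk := Finset.mem_filter.1 hk
      exact hlists k hk.1 hk.2.1 hk.2.2.1
    choose! ℓ h1 h2 using hZ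
    obtain ⟨K, hKT, g1, g2⟩ := star_good C Z ℓ h1 (by
      intro z hz z' hz' c hc hc'
      have cz := (Finset.mem_filter.1 hz).2.2.2
      have cz' := (Finset.mem_filter.1 hz').2.2.2
      rcases (h2 z hz c).1 hc with h | h <;> rcases (h2 z' hz' c).1 hc' with h' | h'
      · exact h.symm.trans h'
      · subst h; exact absurd (cz.trans cz'.symm) (hcol _ _ h')
      · subst h'; exact absurd (cz'.trans cz.symm) (hcol _ _ h)
      · exact h.uniq hl h')
    refine ⟨K, hKT, g2, ?_⟩
    intro i k hik hI hc
    have hkZ : k ∈ Z := Finset.mem_filter.2 ⟨hik.mo, hI, ⟨i, hik⟩, hc⟩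
    exact g1 k hkZ i ((h2 k hkZ i).2 (Or.inr hik))
  obtain ⟨K1, a1, b1, c1⟩ := main true
  obtain ⟨K2, a2, b2, c2⟩ := main false
  refine ⟨K1, a1, K2, a2, b1, b2, ?_⟩
  intro i k h1 h2
  cases h : col k with
  | true => left; exact c1 i k h1 h2 h
  | false => right; exact c2 i k h1 h2 h

lemma lists_up (C : Cfg T L R κ) (k : α) (hk : k ∈ T) (hI : Inn T L R κ k)
    (hch : ∃ i, UpR T κ (lamf L) (lamf R) i k) :
    ∃ l, DList T L R κ l ∧ ∀ i, i ∈ l ↔ i = k ∨ UpR T κ (lamf L) (lamf R) i k := by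
  obtain ⟨c, c1, c2, c3, c4, a, h1, h2, h3, h4, h5⟩ := star (T := T) (κ := κ) (lam := lamf L)
    (rho := lamf R) (fun a ha b hb h => C.lxinj ha hb h) (fun a ha b hb h => C.rxinj ha hb h) hk hI.1 hch
  refine ⟨k :: c, ⟨?_, c1, ?_, a, k, h3, h4, ?_, h5, rfl, h1⟩, ?_⟩
  · exact c4.imp (fun p q h => h.imp par_up par_up)
  · intro i hi
    rcases List.mem_cons.1 hi with h | h
    · rw [h]; exact ⟨hk, hI⟩
    · have hu := (c2 i).1 h
      refine ⟨hu.mi, c3 i h, ?_⟩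
      intro hs
      have := hs k hk hu.ka hu.la
      have := hu.rh
      unfold lamf at this
      linarith
  · intro i hi
    rcases List.mem_cons.1 hi with h | h
    · rw [h]
    · exact ((c2 i).1 h).ka.symm
  · intro i; rw [List.mem_cons, c2]

lemma lists_dn (C : Cfg T L R κ) (k : α) (hk : k ∈ T) (hI : Inn T L R κ k)
    (hch : ∃ i, UpR T κ (-lamf L) (lamf R) i k) :
    ∃ l, DList T L R κ l ∧ ∀ i, i ∈ l ↔ i = k ∨ UpR T κ (-lamf L) (lamf R) i k := by
  obtain ⟨c, c1, c2, c3, c4, a, h1, h2, h3, h4, h5⟩ := star (T := T) (κ := κ) (lam := -lamf L)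
    (rho := lamf R) (fun a ha b hb h => C.lxinj ha hb (by simpa [lamf] using h))
    (fun a ha b hb h => C.rxinj ha hb h) hk (fun h => hI.2 (sufMax_iff.2 h)) hch
  have hkap : ∀ i ∈ (k :: c), κ i = κ k := by
    intro i hi
    rcases List.mem_cons.1 hi with h | h
    · rw [h]
    · exact ((c2 i).1 h).ka.symm
  refine ⟨(k :: c).reverse, ⟨?_, ?_, ?_, k, a, h3.symm, ?_, ?_, ?_, ?_, ?_⟩, ?_⟩
  · rw [List.isChain_reverse]
    exact c4.imp (fun p q h => (h.imp par_dn par_dn).symm)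
  · rw [List.nodup_reverse]; exact c1
  · intro i hi
    rw [List.mem_reverse] at hi
    rcases List.mem_cons.1 hi with h | h
    · rw [h]; exact ⟨hk, hI⟩
    · have hu := (c2 i).1 h
      refine ⟨hu.mi, ?_, fun h' => c3 i h (sufMax_iff.1 h')⟩
      intro hs
      have := hs k hk hu.ka (by simpa [lamf] using hu.la)
      have := hu.rh
      unfold lamf at this
      linarith
  · simpa [lamf] using h4
  · intro i hi
    rw [hkap i (List.mem_reverse.1 hi), h3]
  · intro t ht htk g1 g2
    exact h5 t ht (htk.trans h3) (by simpa [lamf] using g2) (by simpa [lamf] using g1)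
  · rw [List.head?_reverse]; exact h1
  · rw [List.getLast?_reverse]; rfl
  · intro i; rw [List.mem_reverse, List.mem_cons, c2]

theorem select (C : Cfg T L R κ) : ∃ K ⊆ T, T.card ≤ 8 * K.card ∧ (2 ≤ K.card → Good K L R) := by
  classical
  obtain ⟨K1, a1, K2, a2, g1, g2, hup⟩ := side C (lam := lamf L) (fun a ha b hb h => C.lxinj ha hb h)
    (lists_up C)
  obtain ⟨K3, a3, K4, a4, g3, g4, hdn⟩ := side C (lam := -lamf L)
    (fun a ha b hb h => C.lxinj ha hb (by simpa [lamf] using h)) (lists_dn C)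
  let A := T.filter (fun i => PreMax T L R κ i)
  let B := T.filter (fun i => SufMax T L R κ i)
  have hA : A ⊆ T := Finset.filter_subset _ _
  have hB : B ⊆ T := Finset.filter_subset _ _
  have gA : 2 ≤ A.card → Good A L R := good_of_ext (C.mono hA) (fun i hi => Or.inl (fun j hj =>
    (Finset.mem_filter.1 hi).2 j (hA hj)))
  have gB : 2 ≤ B.card → Good B L R := good_of_ext (C.mono hB) (fun i hi => Or.inr (fun j hj =>
    (Finset.mem_filter.1 hi).2 j (hB hj)))
  let X := T.filter (fun i => Inn T L R κ i ∧ (∀ k, IsUp T L R κ i k → ¬ Inn T L R κ k) ∧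
    (∀ k, IsDn T L R κ i k → ¬ Inn T L R κ k))
  have hex : ∀ i ∈ X, ∃ k, IsUp T L R κ i k := by
    intro i hi
    have hi := Finset.mem_filter.1 hi
    obtain ⟨e, he⟩ := exists_dn (T := T) (κ := κ) (lam := -lamf L) (rho := lamf R)
      (fun a ha b hb h => C.rxinj ha hb h) hi.1 (fun h => hi.2.1.2 (sufMax_iff.2 h))
    rw [neg_neg] at he
    exact ⟨e, isUp_iff.2 he⟩
  have hex2 : ∀ i ∈ X, ∃ k, IsDn T L R κ i k := by
    intro i hi
    have hi := Finset.mem_filter.1 hi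
    obtain ⟨e, he⟩ := exists_dn (T := T) (κ := κ) (lam := lamf L) (rho := lamf R)
      (fun a ha b hb h => C.rxinj ha hb h) hi.1 hi.2.1.1
    exact ⟨e, isDn_iff.2 he⟩
  choose! u hu using hex
  have hni : ∀ k ∈ T, ¬ Inn T L R κ k → k ∈ A ∪ B := by
    intro k hk h
    unfold Inn at h
    rw [Finset.mem_union]
    by_cases h1 : PreMax T L R κ k
    · left; exact Finset.mem_filter.2 ⟨hk, h1⟩
    · right
      refine Finset.mem_filter.2 ⟨hk, ?_⟩
      by_contra h2; exact h ⟨h1, h2⟩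
  have hXle : X.card ≤ (A ∪ B).card := by
    apply Finset.card_le_card_of_injOn u
    · intro i hi
      have hi' := Finset.mem_filter.1 hi
      exact hni _ (hu i hi).mo (hi'.2.2.1 _ (hu i hi))
    · have key : ∀ i ∈ X, ∀ i' ∈ X, u i = u i' → (L i').1 < (L i).1 → False := by
        intro i hi i' hi' he hlt
        have U1 := hu i hi
        have U2 := hu i' hi'
        rw [← he] at U2
        obtain ⟨d, hd⟩ := hex2 i hi
        have hiX := (Finset.mem_filter.1 hi).2
        have hi'X := (Finset.mem_filter.1 hi').2
        have hk : κ i = κ i' := U1.ka.symm.trans U2.ka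
        have hr : (R i).1 < (R i').1 := U2.btw i U1.mi hk hlt U1.la
        have hdl := hd.la
        apply hiX.2.2 d hd
        rcases lt_trichotomy (L d).1 (L i').1 with h | h | h
        · have := hd.btw i' U2.mi hk.symm h hlt
          linarith
        · rw [C.lxinj hd.mo U2.mi h]; exact hi'X.1
        · have hla := U1.la
          have hdr := U2.btw d hd.mo (hd.ka.trans hk) h (hdl.trans hla)
          have hu2 := U2.rh
          constructor
          · intro hp
            have := hp i' U2.mi (hk.symm.trans hd.ka.symm) h
            linarith
          · intro hp
            have := hp (u i) U1.mo (U1.ka.trans hd.ka.symm) (hdl.trans hla)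
            linarith
      intro i hi i' hi' he
      rcases lt_trichotomy (L i).1 (L i').1 with h | h | h
      · exact (key i' hi' i hi he.symm h).elim
      · exact C.lxinj (hu i hi).mi (hu i' hi').mi h
      · exact (key i hi i' hi' he h).elim
  have hcov : T ⊆ A ∪ B ∪ (K1 ∪ K2 ∪ (K3 ∪ K4)) ∪ X := by
    intro i hi
    by_cases hI : Inn T L R κ i
    swap
    · have := hni i hi hI
      exact Finset.mem_union_left _ (Finset.mem_union_left _ this)
    by_cases h1 : ∃ k, IsUp T L R κ i k ∧ Inn T L R κ k
    · obtain ⟨k, hk, hkI⟩ := h1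
      have := hup i k (isUp_iff.1 hk) hkI
      exact Finset.mem_union_left _ (Finset.mem_union_right _ (Finset.mem_union_left _ (by
        first | exact this | exact Finset.mem_union.2 this)))
    by_cases h2 : ∃ k, IsDn T L R κ i k ∧ Inn T L R κ k
    · obtain ⟨k, hk, hkI⟩ := h2
      have := hdn i k (isDn_iff.1 hk) hkI
      exact Finset.mem_union_left _ (Finset.mem_union_right _ (Finset.mem_union_right _ (by
        first | exact this | exact Finset.mem_union.2 this)))
    push Not at h1 h2
    have : i ∈ X := Finset.mem_filter.2 ⟨hi, hI, h1, h2⟩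
    exact Finset.mem_union_right _ this
  have hcard := Finset.card_le_card hcov
  have e1 := Finset.card_union_le (A ∪ B ∪ (K1 ∪ K2 ∪ (K3 ∪ K4))) X
  have e2 := Finset.card_union_le (A ∪ B) (K1 ∪ K2 ∪ (K3 ∪ K4))
  have e3 := Finset.card_union_le (K1 ∪ K2) (K3 ∪ K4)
  have e4 := Finset.card_union_le K1 K2
  have e5 := Finset.card_union_le K3 K4
  have e6 := Finset.card_union_le A B
  by_contra hcon
  push Not at hcon
  have n1 : 8 * A.card < T.card := by
    by_contra h; obtain ⟨h1, h2⟩ := hcon A hA (not_lt.1 h); exact h2 (gA h1)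
  have n2 : 8 * B.card < T.card := by
    by_contra h; obtain ⟨h1, h2⟩ := hcon B hB (not_lt.1 h); exact h2 (gB h1)
  have n3 : 8 * K1.card < T.card := by
    by_contra h; obtain ⟨h1, h2⟩ := hcon K1 a1 (not_lt.1 h); exact h2 (g1 h1)
  have n4 : 8 * K2.card < T.card := by
    by_contra h; obtain ⟨h1, h2⟩ := hcon K2 a2 (not_lt.1 h); exact h2 (g2 h1)
  have n5 : 8 * K3.card < T.card := by
    by_contra h; obtain ⟨h1, h2⟩ := hcon K3 a3 (not_lt.1 h); exact h2 (g3 h1)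
  have n6 : 8 * K4.card < T.card := by
    by_contra h; obtain ⟨h1, h2⟩ := hcon K4 a4 (not_lt.1 h); exact h2 (g4 h1)
  omega

end

noncomputable section
open Set

section
variable {β : Type*}

lemma low_part (S : Finset β) (f : β → ℝ) (hf : ∀ a ∈ S, ∀ b ∈ S, f a = f b → a = b) (k : ℕ)
    (hk : k ≤ S.card) : ∃ A ⊆ S, A.card = k ∧ ∀ a ∈ A, ∀ b ∈ S, b ∉ A → f a < f b := by
  classical
  induction k with
  | zero => exact ⟨∅, by simp, by simp, by simp⟩
  | succ k ih =>
    obtain ⟨A, hA, hc, hlt⟩ := ih (by omega)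
    have hne : (S \ A).Nonempty := by
      rw [← Finset.card_pos, Finset.card_sdiff_of_subset hA]; omega
    obtain ⟨m, hm, hmin⟩ := Finset.exists_min_image (S \ A) f hne
    have hm' := Finset.mem_sdiff.1 hm
    refine ⟨insert m A, ?_, ?_, ?_⟩
    · intro x hx
      rcases Finset.mem_insert.1 hx with h | h
      · rw [h]; exact hm'.1
      · exact hA h
    · rw [Finset.card_insert_of_notMem hm'.2, hc]
    · intro a ha b hb hbA
      rw [Finset.mem_insert, not_or] at hbA
      rcases Finset.mem_insert.1 ha with h | h
      · rw [h]
        refine lt_of_le_of_ne (hmin b (Finset.mem_sdiff.2 ⟨hb, hbA.2⟩)) ?_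
        intro e; exact hbA.1 (hf m hm'.1 b hb e).symm
      · exact hlt a h b hb hbA.2

/-- monotone and antitone subsets with large product of sizes -/
lemma er_sz (M : Finset β) (l g : β → ℝ) (hl : ∀ a ∈ M, ∀ b ∈ M, l a = l b → a = b)
    (hg : ∀ a ∈ M, ∀ b ∈ M, g a = g b → a = b) :
    ∃ U ⊆ M, ∃ D ⊆ M, (∀ i ∈ U, ∀ j ∈ U, l i < l j → g i < g j) ∧
      (∀ i ∈ D, ∀ j ∈ D, l i < l j → g j < g i) ∧ M.card ≤ U.card * D.card := by
  classical
  let Ch : β → Finset (Finset β) := fun i => M.powerset.filter (fun U =>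
    i ∈ U ∧ (∀ a ∈ U, ∀ b ∈ U, l a < l b → g a < g b) ∧ ∀ a ∈ U, l a ≤ l i)
  let f : β → ℕ := fun i => (Ch i).sup Finset.card
  have hch : ∀ i ∈ M, {i} ∈ Ch i := by
    intro i hi
    simp [Ch, hi]
  have hf : ∀ i ∈ M, ∃ U ∈ Ch i, f i = U.card := fun i hi =>
    Finset.exists_mem_eq_sup _ ⟨_, hch i hi⟩ _
  have hinc : ∀ i ∈ M, ∀ j ∈ M, l i < l j → g i < g j → f i < f j := by
    intro i hi j hj h1 h2
    obtain ⟨U, hU, e⟩ := hf i hi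
    obtain ⟨hUM, hiU, hUm, hUl⟩ := Finset.mem_filter.1 hU
    rw [Finset.mem_powerset] at hUM
    have hjU : j ∉ U := fun h => absurd (hUl j h) (not_le.2 h1)
    have hUi : ∀ a ∈ U, g a ≤ g i := by
      intro a ha
      rcases (hUl a ha).lt_or_eq with h | h
      · exact (hUm a ha i hiU h).le
      · rw [hl a (hUM ha) i hi h]
    have hmem : insert j U ∈ Ch j := by
      refine Finset.mem_filter.2 ⟨?_, Finset.mem_insert_self _ _, ?_, ?_⟩
      · rw [Finset.mem_powerset]; exact Finset.insert_subset hj hUM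
      · intro a ha b hb hab
        rcases Finset.mem_insert.1 ha with ha | ha <;> rcases Finset.mem_insert.1 hb with hb | hb
        · rw [ha, hb] at hab; exact absurd hab (lt_irrefl _)
        · have := hUl b hb; rw [ha] at hab; linarith
        · rw [hb]; exact lt_of_le_of_lt (hUi a ha) h2
        · exact hUm a ha b hb hab
      · intro a ha
        rcases Finset.mem_insert.1 ha with ha | ha
        · rw [ha]
        · exact (hUl a ha).trans h1.le
    have : (insert j U).card ≤ f j := Finset.le_sup (f := Finset.card) hmem
    rw [Finset.card_insert_of_notMem hjU] at this
    omega
  have hpos : ∀ i ∈ M, 1 ≤ f i := by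
    intro i hi
    have : ({i} : Finset β).card ≤ f i := Finset.le_sup (f := Finset.card) (hch i hi)
    simpa using this
  rcases M.eq_empty_or_nonempty with rfl | hne
  · exact ⟨∅, by simp, ∅, by simp, by simp, by simp, by simp⟩
  obtain ⟨z, hz, hzmax⟩ := Finset.exists_max_image M f hne
  obtain ⟨U, hU, eU⟩ := hf z hz
  obtain ⟨hUM, hiU, hUm, hUl⟩ := Finset.mem_filter.1 hU
  rw [Finset.mem_powerset] at hUM
  have hne2 : (Finset.Icc 1 (f z)).Nonempty := by
    rw [Finset.nonempty_Icc]; exact hpos z hz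
  obtain ⟨c, hc, hcmax⟩ := Finset.exists_max_image (Finset.Icc 1 (f z))
    (fun c => (M.filter (fun i => f i = c)).card) hne2
  refine ⟨U, hUM, M.filter (fun i => f i = c), Finset.filter_subset _ _, hUm, ?_, ?_⟩
  · intro i hi j hj hij
    obtain ⟨hi, e1⟩ := Finset.mem_filter.1 hi
    obtain ⟨hj, e2⟩ := Finset.mem_filter.1 hj
    rcases lt_trichotomy (g i) (g j) with h | h | h
    · have := hinc i hi j hj hij h; omega
    · rw [hg i hi j hj h] at hij; exact absurd hij (lt_irrefl _)
    · exact h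
  · have := Finset.card_le_mul_card_image_of_maps_to (s := M) (t := Finset.Icc 1 (f z)) (f := f)
      (fun i hi => Finset.mem_Icc.2 ⟨hpos i hi, hzmax i hi⟩) _ hcmax
    rw [Nat.card_Icc, Nat.add_sub_cancel, eU, mul_comm] at this
    exact this

structure PC (l r : β → ℝ) (h : β → ℝ → ℝ) (T : Finset β) (κ : β → ℝ) : Prop where
  lk : ∀ i ∈ T, l i < κ i
  kr : ∀ i ∈ T, κ i < r i
  sep : ∀ i ∈ T, ∀ j ∈ T, κ i < κ j → r i < l j
  ord : ∀ i ∈ T, ∀ j ∈ T, κ i = κ j → l i < l j → h i (κ i) < h j (κ i)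

lemma PC.union {l r : β → ℝ} {h : β → ℝ → ℝ} {A B : Finset β} {κ κ' : β → ℝ} [DecidableEq β]
    (P : PC l r h A κ) (Q : PC l r h B κ') (x : ℝ) (hA : ∀ i ∈ A, r i < x) (hB : ∀ i ∈ B, x < l i) :
    PC l r h (A ∪ B) (fun i => if i ∈ A then κ i else κ' i) ∧ Disjoint A B := by
  have hd : ∀ i ∈ B, i ∉ A := by
    intro i hi hia
    have := hA i hia; have := hB i hi; have := P.lk i hia; have := P.kr i hia; linarith
  have hs : ∀ i ∈ A ∪ B, (i ∈ A ∧ (if i ∈ A then κ i else κ' i) = κ i ∧ κ i < x) ∨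
      (i ∈ B ∧ (if i ∈ A then κ i else κ' i) = κ' i ∧ x < κ' i) := by
    intro i hi
    rcases Finset.mem_union.1 hi with hi | hi
    · left; exact ⟨hi, if_pos hi, (P.kr i hi).trans (hA i hi)⟩
    · right; exact ⟨hi, if_neg (hd i hi), (hB i hi).trans (Q.lk i hi)⟩
  refine ⟨⟨?_, ?_, ?_, ?_⟩, ?_⟩
  · intro i hi
    rcases hs i hi with ⟨h1, h2, h3⟩ | ⟨h1, h2, h3⟩
    · simp only [h2]; exact P.lk i h1
    · simp only [h2]; exact Q.lk i h1
  · intro i hi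
    rcases hs i hi with ⟨h1, h2, h3⟩ | ⟨h1, h2, h3⟩
    · simp only [h2]; exact P.kr i h1
    · simp only [h2]; exact Q.kr i h1
  · intro i hi j hj
    rcases hs i hi with ⟨h1, h2, h3⟩ | ⟨h1, h2, h3⟩ <;>
      rcases hs j hj with ⟨g1, g2, g3⟩ | ⟨g1, g2, g3⟩ <;> simp only [h2, g2] <;> intro hk
    · exact P.sep i h1 j g1 hk
    · exact (hA i h1).trans (hB j g1)
    · linarith
    · exact Q.sep i h1 j g1 hk
  · intro i hi j hj
    rcases hs i hi with ⟨h1, h2, h3⟩ | ⟨h1, h2, h3⟩ <;>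
      rcases hs j hj with ⟨g1, g2, g3⟩ | ⟨g1, g2, g3⟩ <;> simp only [h2, g2] <;> intro hk
    · exact P.ord i h1 j g1 hk
    · linarith
    · linarith
    · exact Q.ord i h1 j g1 hk
  · rw [Finset.disjoint_left]; exact fun i hi hb => hd i hb hi

lemma recur (l r : β → ℝ) (h : β → ℝ → ℝ) (n : ℕ) : ∀ S : Finset β, S.card = n →
    (∀ i ∈ S, l i < r i) → (∀ i ∈ S, ∀ j ∈ S, l i = l j → i = j) →
    (∀ i ∈ S, ∀ j ∈ S, r i = r j → i = j) →
    (∀ i ∈ S, ∀ j ∈ S, i ≠ j → ∀ x, l i < x → x < r i → l j < x → x < r j → h i x ≠ h j x) →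
    ∃ A ⊆ S, ∃ B ⊆ S, (∃ κ, PC l r h A κ) ∧ (∃ κ, PC l r (fun i x => - h i x) B κ) ∧
      n ≤ (A.card + B.card) ^ 2 := by
  classical
  induction n using Nat.strong_induction_on with
  | _ n ih =>
  intro S hS hlr hl hr hh
  have pempty : ∀ h', PC l r h' ∅ (fun _ => 0) := fun h' => ⟨by simp, by simp, by simp, by simp⟩
  rcases Nat.lt_or_ge n 2 with hn | hn
  · refine ⟨S, subset_rfl, ∅, by simp, ⟨fun i => (l i + r i) / 2, ?_⟩, ⟨_, pempty _⟩, ?_⟩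
    · have hu : ∀ i ∈ S, ∀ j ∈ S, i = j := Finset.card_le_one.1 (by omega)
      refine ⟨fun i hi => by have := hlr i hi; linarith, fun i hi => by have := hlr i hi; linarith, ?_, ?_⟩
      · intro i hi j hj hk; rw [hu i hi j hj] at hk; exact absurd hk (lt_irrefl _)
      · intro i hi j hj _ hk; rw [hu i hi j hj] at hk; exact absurd hk (lt_irrefl _)
    · rw [hS, Finset.card_empty]; interval_cases n <;> simp
  obtain ⟨A, hA, hAc, hAlt⟩ := low_part S r hr (n / 2) (by omega)
  have hAne : A.Nonempty := by rw [← Finset.card_pos]; omega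
  obtain ⟨a, ha, hamax⟩ := Finset.exists_max_image A r hAne
  have hne : (S \ A).Nonempty := by
    rw [← Finset.card_pos, Finset.card_sdiff_of_subset hA]; omega
  obtain ⟨b, hb⟩ := hne
  have hb' := Finset.mem_sdiff.1 hb
  let F := (S.image l ∪ S.image r).filter (fun v => r a < v)
  have hF : F.Nonempty := ⟨r b, Finset.mem_filter.2 ⟨Finset.mem_union_right _
    (Finset.mem_image_of_mem _ hb'.1), hAlt a ha b hb'.1 hb'.2⟩⟩
  obtain ⟨y, hy, hymin⟩ := Finset.exists_min_image F id hF
  have hay : r a < y := (Finset.mem_filter.1 hy).2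
  set x := (r a + y) / 2 with hx
  have hsplit : ∀ v, v ∈ S.image l ∪ S.image r → v ≤ r a ∨ x < v := by
    intro v hv
    by_cases hva : v ≤ r a
    · exact Or.inl hva
    · right
      have := hymin v (Finset.mem_filter.2 ⟨hv, not_le.1 hva⟩)
      simp only [id] at this
      linarith
  have hxa : r a < x := by linarith
  have hAx : ∀ i ∈ A, r i < x := fun i hi => lt_of_le_of_lt (hamax i hi) hxa
  have hNx : ∀ i ∈ S, i ∉ A → x < r i := by
    intro i hi hiA
    rcases hsplit (r i) (Finset.mem_union_right _ (Finset.mem_image_of_mem _ hi)) with h1 | h1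
    · exact absurd (hAlt a ha i hi hiA) (not_lt.2 h1)
    · exact h1
  let M := (S \ A).filter (fun i => l i < x)
  let B := (S \ A).filter (fun i => ¬ l i < x)
  have hMB : M.card + B.card = (S \ A).card := Finset.card_filter_add_card_filter_not _
  rw [Finset.card_sdiff_of_subset hA, hS, hAc] at hMB
  have hMS : M ⊆ S := fun i hi => (Finset.mem_sdiff.1 (Finset.mem_filter.1 hi).1).1
  have hBS : B ⊆ S := fun i hi => (Finset.mem_sdiff.1 (Finset.mem_filter.1 hi).1).1
  have hMl : ∀ i ∈ M, l i < x := fun i hi => (Finset.mem_filter.1 hi).2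
  have hMr : ∀ i ∈ M, x < r i := fun i hi => hNx i (hMS hi) (Finset.mem_sdiff.1 (Finset.mem_filter.1 hi).1).2
  have hBl : ∀ i ∈ B, x < l i := by
    intro i hi
    rcases hsplit (l i) (Finset.mem_union_left _ (Finset.mem_image_of_mem _ (hBS hi))) with h1 | h1
    · exact absurd (lt_of_le_of_lt h1 hxa) (Finset.mem_filter.1 hi).2
    · exact h1
  by_cases hm : n ≤ 4 * M.card
  · obtain ⟨U, hU, D, hD, hUi, hDi, hc⟩ := er_sz M l (fun i => h i x)
      (fun i hi j hj => hl i (hMS hi) j (hMS hj)) (by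
        intro i hi j hj e
        by_contra hij
        exact hh i (hMS hi) j (hMS hj) hij x (hMl i hi) (hMr i hi) (hMl j hj) (hMr j hj) e)
    refine ⟨U, hU.trans hMS, D, hD.trans hMS, ⟨fun _ => x, ?_⟩, ⟨fun _ => x, ?_⟩, ?_⟩
    · exact ⟨fun i hi => hMl i (hU hi), fun i hi => hMr i (hU hi),
        fun i hi j hj e => absurd e (lt_irrefl _), fun i hi j hj _ e => hUi i hi j hj e⟩
    · exact ⟨fun i hi => hMl i (hD hi), fun i hi => hMr i (hD hi),
        fun i hi j hj e => absurd e (lt_irrefl _), fun i hi j hj _ e => neg_lt_neg (hDi i hi j hj e)⟩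
    · have : 4 * (U.card * D.card) ≤ (U.card + D.card) ^ 2 := by
        zify; nlinarith [sq_nonneg ((U.card : ℤ) - D.card)]
      omega
  · have hsub : ∀ S' ⊆ S, S'.card < n → _ := fun S' hS' hlt => ih S'.card hlt S' rfl
      (fun i hi => hlr i (hS' hi)) (fun i hi j hj => hl i (hS' hi) j (hS' hj))
      (fun i hi j hj => hr i (hS' hi) j (hS' hj)) (fun i hi j hj => hh i (hS' hi) j (hS' hj))
    obtain ⟨A1, hA1, B1, hB1, ⟨κ1, p1⟩, ⟨μ1, q1⟩, c1⟩ := hsub A hA (by omega)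
    obtain ⟨A2, hA2, B2, hB2, ⟨κ2, p2⟩, ⟨μ2, q2⟩, c2⟩ := hsub B hBS (by omega)
    obtain ⟨P, dP⟩ := p1.union p2 x (fun i hi => hAx i (hA1 hi)) (fun i hi => hBl i (hA2 hi))
    obtain ⟨Q, dQ⟩ := q1.union q2 x (fun i hi => hAx i (hB1 hi)) (fun i hi => hBl i (hB2 hi))
    refine ⟨A1 ∪ A2, Finset.union_subset (hA1.trans hA) (hA2.trans hBS), B1 ∪ B2,
      Finset.union_subset (hB1.trans hA) (hB2.trans hBS), ⟨_, P⟩, ⟨_, Q⟩, ?_⟩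
    rw [Finset.card_union_of_disjoint dP, Finset.card_union_of_disjoint dQ]
    have h1 : n ≤ 4 * A.card := by omega
    have h2 : n ≤ 4 * B.card := by omega
    have e1 : n ≤ 4 * (A1.card + B1.card) ^ 2 := by omega
    have e2 : n ≤ 4 * (A2.card + B2.card) ^ 2 := by omega
    rcases le_total (A1.card + B1.card) (A2.card + B2.card) with hle | hle
    · nlinarith
    · nlinarith
end
end

noncomputable section
open Set

section
variable {α : Type*} {K T S : Finset α} {L R : α → Pt} {κ : α → ℝ}

lemma Seg_map (φ : Pt ≃L[ℝ] Pt) (a b : Pt) : Seg (φ a) (φ b) = φ '' Seg a b := by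
  unfold Seg
  exact (image_segment ℝ φ.toLinearEquiv.toLinearMap.toAffineMap a b).symm

def SimplePolygon.map (φ : Pt ≃L[ℝ] Pt) (P : SimplePolygon) : SimplePolygon where
  k := P.k
  three_le := P.three_le
  vtx := fun i => φ (P.vtx i)
  inj := φ.injective.comp P.inj
  edge_inter := by
    intro i j hij
    rw [Seg_map, Seg_map, ← image_inter φ.injective, image_nonempty]
    exact P.edge_inter i j hij
  edge_consec := by
    intro i
    rw [Seg_map, Seg_map, ← image_inter φ.injective, P.edge_consec i, image_singleton]

lemma map_edgeUnion (φ : Pt ≃L[ℝ] Pt) (P : SimplePolygon) :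
    (P.map φ).edgeUnion = φ '' P.edgeUnion := by
  unfold SimplePolygon.edgeUnion
  rw [image_iUnion]
  apply iUnion_congr
  intro i
  exact Seg_map φ _ _

lemma map_closedRegion (φ : Pt ≃L[ℝ] Pt) (P : SimplePolygon) :
    φ '' P.closedRegion ⊆ (P.map φ).closedRegion := by
  rintro _ ⟨x, hx, rfl⟩
  unfold SimplePolygon.closedRegion at hx ⊢
  rw [map_edgeUnion]
  rcases hx with hx | ⟨hx, hb⟩
  · left; exact mem_image_of_mem _ hx
  · right
    refine ⟨?_, ?_⟩
    · rintro ⟨y, hy, e⟩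
      exact hx (φ.injective e ▸ hy)
    · have h1 : (φ '' P.edgeUnion)ᶜ = φ.toHomeomorph '' (P.edgeUnion)ᶜ :=
        (image_compl_eq φ.bijective).symm
      have h2 := φ.toHomeomorph.image_connectedComponentIn (s := (P.edgeUnion)ᶜ) (x := x) hx
      rw [h1]
      have h3 : φ.toHomeomorph x = φ x := rfl
      rw [h3] at h2
      rw [← h2]
      exact φ.lipschitz.isBounded_image hb

lemma Good.map (φ : Pt ≃L[ℝ] Pt) (h : Good K L R) :
    Good K (fun i => φ (L i)) (fun i => φ (R i)) := by
  obtain ⟨P, h1, h2⟩ := h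
  refine ⟨P.map φ, ?_, ?_⟩
  · have : range (P.map φ).vtx = φ '' range P.vtx := by
      rw [← range_comp]; rfl
    rw [this, h1]
    ext p
    constructor
    · rintro ⟨q, ⟨i, hi, rfl | rfl⟩, rfl⟩
      · exact ⟨i, hi, Or.inl rfl⟩
      · exact ⟨i, hi, Or.inr rfl⟩
    · rintro ⟨i, hi, rfl | rfl⟩
      · exact ⟨_, ends_L hi, rfl⟩
      · exact ⟨_, ends_R hi, rfl⟩
  · intro s hs
    rw [Seg_map]
    exact (image_mono (h2 s hs)).trans (map_closedRegion φ P)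

def flL : Pt ≃ₗ[ℝ] Pt where
  toFun p := (p.1, -p.2)
  invFun p := (p.1, -p.2)
  map_add' p q := by ext <;> simp; ring
  map_smul' c p := by ext <;> simp
  left_inv p := by simp
  right_inv p := by simp

def fl : Pt ≃L[ℝ] Pt := flL.toContinuousLinearEquiv

lemma fl_apply (p : Pt) : fl p = (p.1, -p.2) := rfl

def shL (ε : ℝ) : Pt ≃ₗ[ℝ] Pt where
  toFun p := (p.1 + ε * p.2, p.2)
  invFun p := (p.1 - ε * p.2, p.2)
  map_add' p q := by ext <;> simp; ring
  map_smul' c p := by ext <;> simp; ring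
  left_inv p := by simp
  right_inv p := by simp

def sh (ε : ℝ) : Pt ≃L[ℝ] Pt := (shL ε).toContinuousLinearEquiv

lemma sh_apply (ε : ℝ) (p : Pt) : sh ε p = (p.1 + ε * p.2, p.2) := rfl

lemma fl_fl (p : Pt) : fl (fl p) = p := by simp [fl_apply]

lemma ev_fl (p q : Pt) (x : ℝ) : ev (fl p) (fl q) x = - ev p q x := by
  simp only [ev, slp, fl_apply]; ring

lemma gpos_fl (h : GPos (Ends T L R)) : GPos (Ends T (fun i => fl (L i)) (fun i => fl (R i))) := by
  have key : ∀ p ∈ Ends T (fun i => fl (L i)) (fun i => fl (R i)), ∃ q ∈ Ends T L R, p = fl q := by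
    rintro p ⟨i, hi, rfl | rfl⟩
    · exact ⟨_, ends_L hi, rfl⟩
    · exact ⟨_, ends_R hi, rfl⟩
  constructor
  · intro p hp q hq
    obtain ⟨p, hp', rfl⟩ := key p hp
    obtain ⟨q, hq', rfl⟩ := key q hq
    intro e
    rw [h.1 p hp' q hq' e]
  · intro p hp q hq r hr h1 h2 h3
    obtain ⟨p, hp', rfl⟩ := key p hp
    obtain ⟨q, hq', rfl⟩ := key q hq
    obtain ⟨r, hr', rfl⟩ := key r hr
    have := h.2 p hp' q hq' r hr' (fun e => h1 (by rw [e])) (fun e => h2 (by rw [e])) (fun e => h3 (by rw [e]))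
    unfold NonCol at *
    intro e
    apply this
    simp only [fl_apply] at e
    linarith

structure Base {α : Type*} (S : Finset α) (L R : α → Pt) : Prop where
  lt : ∀ i ∈ S, (L i).1 < (R i).1
  gp : GPos (Ends S L R)
  disj : ∀ i ∈ S, ∀ j ∈ S, i ≠ j → Disjoint (Seg (L i) (R i)) (Seg (L j) (R j))

lemma Base.mono (B : Base S L R) (h : T ⊆ S) : Base T L R :=
  ⟨fun i hi => B.lt i (h hi), B.gp.mono (ends_mono h), fun i hi j hj => B.disj i (h hi) j (h hj)⟩

abbrev PC1 {α : Type*} (L R : α → Pt) (T : Finset α) (κ : α → ℝ) : Prop :=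
  PC (fun i => (L i).1) (fun i => (R i).1) (fun i x => ev (L i) (R i) x) T κ
abbrev PC2 {α : Type*} (L R : α → Pt) (T : Finset α) (κ : α → ℝ) : Prop :=
  PC (fun i => (L i).1) (fun i => (R i).1) (fun i x => - ev (L i) (R i) x) T κ

lemma Base.cfg (B : Base T L R) (P : PC1 L R T κ) : Cfg T L R κ :=
  ⟨P.lk, P.kr, B.gp, B.disj, P.sep, P.ord⟩

lemma Base.cfg2 (B : Base T L R) (P : PC2 L R T κ) :
    Cfg T (fun i => fl (L i)) (fun i => fl (R i)) κ := by
  refine ⟨P.lk, P.kr, gpos_fl B.gp, ?_, P.sep, ?_⟩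
  · intro i hi j hj hij
    rw [Seg_map, Seg_map]
    exact (disjoint_image_iff fl.injective).2 (B.disj i hi j hj hij)
  · intro i hi j hj h1 h2
    rw [ev_fl, ev_fl]
    exact P.ord i hi j hj h1 h2

lemma Good.unfl (h : Good K (fun i => fl (L i)) (fun i => fl (R i))) : Good K L R := by
  have := h.map fl
  simpa only [fl_fl] using this

lemma Base.hts (B : Base S L R) : ∀ i ∈ S, ∀ j ∈ S, i ≠ j → ∀ x, (L i).1 < x → x < (R i).1 →
    (L j).1 < x → x < (R j).1 → ev (L i) (R i) x ≠ ev (L j) (R j) x := by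
  intro i hi j hj hij x h1 h2 h3 h4 e
  refine Set.disjoint_left.1 (B.disj i hi j hj hij) (show (x, ev (L i) (R i) x) ∈ _ from ?_) ?_
  · exact (mem_Seg (B.lt i hi)).2 ⟨h1.le, h2.le, rfl⟩
  · exact (mem_Seg (B.lt j hj)).2 ⟨h3.le, h4.le, e⟩

lemma Base.linj (B : Base S L R) : ∀ i ∈ S, ∀ j ∈ S, (L i).1 = (L j).1 → i = j := by
  intro i hi j hj e
  by_contra hij
  have := B.gp.1 _ (ends_L hi) _ (ends_L hj) e
  refine Set.disjoint_left.1 (B.disj i hi j hj hij) (show L i ∈ _ from (left_mem_segment ℝ _ _)) ?_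
  rw [this]; exact left_mem_segment ℝ _ _

lemma Base.rinj (B : Base S L R) : ∀ i ∈ S, ∀ j ∈ S, (R i).1 = (R j).1 → i = j := by
  intro i hi j hj e
  by_contra hij
  have := B.gp.1 _ (ends_R hi) _ (ends_R hj) e
  refine Set.disjoint_left.1 (B.disj i hi j hj hij) (show R i ∈ _ from (right_mem_segment ℝ _ _)) ?_
  rw [this]; exact right_mem_segment ℝ _ _

lemma Base.lr_ne (B : Base S L R) : ∀ i ∈ S, ∀ j ∈ S, (L i).1 ≠ (R j).1 := by
  intro i hi j hj e
  by_cases hij : i = j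
  · subst hij; exact absurd e (B.lt i hi).ne
  have := B.gp.1 _ (ends_L hi) _ (ends_R hj) e
  refine Set.disjoint_left.1 (B.disj i hi j hj hij) (show L i ∈ _ from (left_mem_segment ℝ _ _)) ?_
  rw [this]; exact right_mem_segment ℝ _ _

lemma two_ext (l : α → ℝ) {i j : α} {r : α → ℝ} (hij : l i < l j) (h2 : ∀ a ∈ K, a = i ∨ a = j)
    (C : Cfg K L R κ) (hl : ∀ a, l a = (L a).1) (hc : 2 ≤ K.card) : Good K L R := by
  apply good_of_ext C _ hc
  intro a ha
  rcases h2 a ha with rfl | rfl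
  · left
    intro b hb _ h
    rw [← hl, ← hl] at h
    rcases h2 b hb with rfl | rfl <;> linarith
  · right
    intro b hb _ h
    rw [← hl, ← hl] at h
    rcases h2 b hb with rfl | rfl <;> linarith

lemma Base.two (B : Base S L R) (h2 : 2 ≤ S.card) : ∃ K ⊆ S, K.card = 2 ∧ Good K L R := by
  classical
  obtain ⟨i, hi, j, hj, hij⟩ : ∃ i ∈ S, ∃ j ∈ S, (L i).1 < (L j).1 := by
    obtain ⟨i, hi, j, hj, hij⟩ := Finset.one_lt_card.1 (show 1 < S.card by omega)
    rcases lt_trichotomy (L i).1 (L j).1 with h | h | h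
    · exact ⟨i, hi, j, hj, h⟩
    · exact absurd (B.linj i hi j hj h) hij
    · exact ⟨j, hj, i, hi, h⟩
  have hne : i ≠ j := fun e => by rw [e] at hij; exact lt_irrefl _ hij
  have hKS : ({i, j} : Finset α) ⊆ S := by
    intro a ha
    rcases Finset.mem_insert.1 ha with h | h
    · rw [h]; exact hi
    · rw [Finset.mem_singleton.1 h]; exact hj
  have hc : ({i, j} : Finset α).card = 2 := Finset.card_pair hne
  have hm : ∀ a ∈ ({i, j} : Finset α), a = i ∨ a = j := by
    intro a ha; simpa using ha
  refine ⟨{i, j}, hKS, hc, ?_⟩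
  have B' := B.mono hKS
  have li := B.lt i hi
  have lj := B.lt j hj
  rcases lt_or_ge (R i).1 (L j).1 with hs | hs
  · have P : PC1 L R {i, j} (fun a => ((L a).1 + (R a).1) / 2) := by
      refine ⟨?_, ?_, ?_, ?_⟩
      · intro a ha; have := B'.lt a ha; linarith
      · intro a ha; have := B'.lt a ha; linarith
      · intro a ha b hb
        rcases hm a ha with rfl | rfl <;> rcases hm b hb with rfl | rfl <;> intro h <;> linarith
      · intro a ha b hb
        rcases hm a ha with rfl | rfl <;> rcases hm b hb with rfl | rfl <;> intro h h' <;> linarith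
    exact two_ext (r := fun _ => 0) (fun a => (L a).1) hij hm (B'.cfg P) (fun _ => rfl) hc.ge
  · have hs' : (L j).1 < (R i).1 := lt_of_le_of_ne hs (B.lr_ne j hj i hi)
    obtain ⟨x, hx1, hx2⟩ : ∃ x, (L j).1 < x ∧ x < min (R i).1 (R j).1 := exists_between (lt_min hs' lj)
    obtain ⟨hx2, hx3⟩ := lt_min_iff.1 hx2
    have hx0 := hij.trans hx1
    rcases lt_trichotomy (ev (L i) (R i) x) (ev (L j) (R j) x) with h | h | h
    · have P : PC1 L R {i, j} (fun _ => x) := by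
        refine ⟨?_, ?_, ?_, ?_⟩
        · intro a ha; rcases hm a ha with rfl | rfl <;> assumption
        · intro a ha; rcases hm a ha with rfl | rfl <;> assumption
        · intro a _ b _ h; exact absurd h (lt_irrefl _)
        · intro a ha b hb _ h'
          rcases hm a ha with rfl | rfl <;> rcases hm b hb with rfl | rfl
          · exact absurd h' (lt_irrefl _)
          · exact h
          · exact absurd hij (not_lt.2 h'.le)
          · exact absurd h' (lt_irrefl _)
      exact two_ext (r := fun _ => 0) (fun a => (L a).1) hij hm (B'.cfg P) (fun _ => rfl) hc.ge
    · exact absurd h (B.hts i hi j hj hne x hx0 hx2 hx1 hx3)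
    · have P : PC2 L R {i, j} (fun _ => x) := by
        refine ⟨?_, ?_, ?_, ?_⟩
        · intro a ha; rcases hm a ha with rfl | rfl <;> assumption
        · intro a ha; rcases hm a ha with rfl | rfl <;> assumption
        · intro a _ b _ h; exact absurd h (lt_irrefl _)
        · intro a ha b hb _ h'
          rcases hm a ha with rfl | rfl <;> rcases hm b hb with rfl | rfl
          · exact absurd h' (lt_irrefl _)
          · exact neg_lt_neg h
          · exact absurd hij (not_lt.2 h'.le)
          · exact absurd h' (lt_irrefl _)
      exact (two_ext (r := fun _ => 0) (fun a => (L a).1) hij hm (B'.cfg2 P) (fun _ => rfl) hc.ge).unfl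

theorem Base.main (B : Base S L R) (h2 : 2 ≤ S.card) :
    ∃ K ⊆ S, S.card ≤ (16 * K.card) ^ 2 ∧ Good K L R := by
  obtain ⟨A, hA, D, hD, ⟨κ, P⟩, ⟨μ, Q⟩, hc⟩ := recur (fun i => (L i).1) (fun i => (R i).1)
    (fun i x => ev (L i) (R i) x) S.card S rfl B.lt B.linj B.rinj B.hts
  obtain ⟨K, hK, hKc, hKg⟩ : ∃ K ⊆ S, S.card ≤ (16 * K.card) ^ 2 ∧ (2 ≤ K.card → Good K L R) := by
    rcases le_total D.card A.card with h | h
    · obtain ⟨K, hK, h1, h3⟩ := select ((B.mono hA).cfg P)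
      refine ⟨K, hK.trans hA, hc.trans (Nat.pow_le_pow_left (by omega) 2), h3⟩
    · obtain ⟨K, hK, h1, h3⟩ := select ((B.mono hD).cfg2 Q)
      refine ⟨K, hK.trans hD, hc.trans (Nat.pow_le_pow_left (by omega) 2), fun h => (h3 h).unfl⟩
  rcases Nat.lt_or_ge K.card 2 with h | h
  · obtain ⟨K', hK', hc', hg'⟩ := B.two h2
    refine ⟨K', hK', hKc.trans (Nat.pow_le_pow_left (by omega) 2), hg'⟩
  · exact ⟨K, hK, hKc, hKg h⟩
end

lemma exists_shear {E : Set Pt} (hE : E.Finite) :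
    ∃ ε : ℝ, ∀ p ∈ E, ∀ q ∈ E, p.1 + ε * p.2 = q.1 + ε * q.2 → p = q := by
  have hf : ((fun z : Pt × Pt => (z.2.1 - z.1.1) / (z.1.2 - z.2.2)) '' (E ×ˢ E)).Finite :=
    (hE.prod hE).image _
  obtain ⟨ε, hε⟩ := hf.exists_notMem
  refine ⟨ε, fun p hp q hq e => ?_⟩
  by_cases h2 : p.2 = q.2
  · rw [h2] at e
    exact Prod.ext (by linarith) h2
  · exfalso
    apply hε
    refine ⟨(p, q), ⟨hp, hq⟩, ?_⟩
    have : p.2 - q.2 ≠ 0 := sub_ne_zero.2 h2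
    simp only
    field_simp
    linarith

lemma nonCol_of {p q r : Pt} (hpq : p ≠ q) (h : ¬ Collinear ℝ ({p, q, r} : Set Pt)) : NonCol p q r := by
  intro e
  apply h
  rw [collinear_iff_of_mem (p₀ := p) (by simp)]
  refine ⟨q - p, ?_⟩
  intro z hz
  simp only [mem_insert_iff, mem_singleton_iff] at hz
  rcases hz with rfl | rfl | rfl
  · exact ⟨0, by simp⟩
  · exact ⟨1, by simp⟩
  · by_cases h1 : q.1 - p.1 = 0
    · have h2 : q.2 - p.2 ≠ 0 := by
        intro h2
        exact hpq (Prod.ext (by linarith) (by linarith))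
      rw [h1, zero_mul] at e
      have h3 : z.1 - p.1 = 0 := by
        rcases mul_eq_zero.1 e.symm with h | h
        · exact h
        · exact absurd h h2
      refine ⟨(z.2 - p.2) / (q.2 - p.2), ?_⟩
      ext
      · simp [h1]; linarith
      · simp; field_simp; ring
    · refine ⟨(z.1 - p.1) / (q.1 - p.1), ?_⟩
      ext
      · simp; field_simp; ring
      · simp; field_simp; linarith

lemma segEnd_mem {S : Finset (Pt × Pt)} {p : Pt} :
    p ∈ SegEndpoints S ↔ ∃ s ∈ S, p = s.1 ∨ p = s.2 := by
  simp [SegEndpoints]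

lemma segEnd_finite (S : Finset (Pt × Pt)) : (SegEndpoints S).Finite := by
  unfold SegEndpoints
  exact S.finite_toSet.biUnion (fun s _ => by simp)

/-- There exists an absolute constant `c > 0` such that for every `n ≥ 2`,
every family of `n` pairwise disjoint segments in the plane in general position contains a
subfamily of at least `c·√n` segments that admits a circumscribing polygon. -/
theorem circumscribing_sqrt_lower_bound :
    ∃ c : ℝ, 0 < c ∧
      ∀ n : ℕ, 2 ≤ n → ∀ S : Finset (Pt × Pt), S.card = n →
        DisjointFamily S → GeneralPosition S →
        ∃ S' ⊆ S, c * Real.sqrt n ≤ (S'.card : ℝ) ∧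
          ∃ P : SimplePolygon, IsCircumscribing S' P := by
  classical
  refine ⟨1 / 16, by norm_num, ?_⟩
  intro n hn S hS hD hG
  obtain ⟨ε, hε⟩ := exists_shear (segEnd_finite S)
  let L : Pt × Pt → Pt := fun s => if (sh ε s.1).1 < (sh ε s.2).1 then sh ε s.1 else sh ε s.2
  let R : Pt × Pt → Pt := fun s => if (sh ε s.1).1 < (sh ε s.2).1 then sh ε s.2 else sh ε s.1
  have hLR : ∀ s, (L s = sh ε s.1 ∧ R s = sh ε s.2) ∨ (L s = sh ε s.2 ∧ R s = sh ε s.1) := by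
    intro s
    by_cases h : (sh ε s.1).1 < (sh ε s.2).1
    · left; exact ⟨if_pos h, if_pos h⟩
    · right; exact ⟨if_neg h, if_neg h⟩
  have hE : ∀ K : Finset (Pt × Pt), Ends K L R = sh ε '' SegEndpoints K := by
    intro K
    ext p
    constructor
    · rintro ⟨s, hs, h⟩
      rcases hLR s with ⟨e1, e2⟩ | ⟨e1, e2⟩ <;> rw [e1, e2] at h <;> rcases h with h | h
      · exact ⟨s.1, segEnd_mem.2 ⟨s, hs, Or.inl rfl⟩, h.symm⟩
      · exact ⟨s.2, segEnd_mem.2 ⟨s, hs, Or.inr rfl⟩, h.symm⟩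
      · exact ⟨s.2, segEnd_mem.2 ⟨s, hs, Or.inr rfl⟩, h.symm⟩
      · exact ⟨s.1, segEnd_mem.2 ⟨s, hs, Or.inl rfl⟩, h.symm⟩
    · rintro ⟨q, hq, rfl⟩
      obtain ⟨s, hs, h⟩ := segEnd_mem.1 hq
      refine ⟨s, hs, ?_⟩
      rcases hLR s with ⟨e1, e2⟩ | ⟨e1, e2⟩ <;> rw [e1, e2] <;> rcases h with rfl | rfl <;> simp
  have hSg : ∀ s, Seg (L s) (R s) = sh ε '' Seg s.1 s.2 := by
    intro s
    rw [← Seg_map]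
    rcases hLR s with ⟨e1, e2⟩ | ⟨e1, e2⟩ <;> rw [e1, e2]
    exact Seg_symm _ _
  have B : Base S L R := by
    refine ⟨?_, ?_, ?_⟩
    · intro s hs
      have hne : (sh ε s.1).1 ≠ (sh ε s.2).1 := fun e => hD.1 s hs
        (hε _ (segEnd_mem.2 ⟨s, hs, Or.inl rfl⟩) _ (segEnd_mem.2 ⟨s, hs, Or.inr rfl⟩) e)
      by_cases h : (sh ε s.1).1 < (sh ε s.2).1
      · simp only [L, R, if_pos h]; exact h
      · simp only [L, R, if_neg h]; exact lt_of_le_of_ne (not_lt.1 h) hne.symm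
    · rw [hE]
      constructor
      · rintro _ ⟨p, hp, rfl⟩ _ ⟨q, hq, rfl⟩ e
        rw [hε p hp q hq e]
      · rintro _ ⟨p, hp, rfl⟩ _ ⟨q, hq, rfl⟩ _ ⟨r, hr, rfl⟩ h1 h2 h3
        have h1' : p ≠ q := fun e => h1 (by rw [e])
        have := nonCol_of h1' (hG p hp q hq r hr h1' (fun e => h2 (by rw [e])) (fun e => h3 (by rw [e])))
        unfold NonCol at *
        intro e
        apply this
        simp only [sh_apply] at e
        linarith
    · intro i hi j hj hij
      rw [hSg, hSg]
      exact (disjoint_image_iff (sh ε).injective).2 (hD.2 hi hj hij)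
  obtain ⟨K, hK, hc, hg⟩ := B.main (by omega)
  refine ⟨K, hK, ?_, ?_⟩
  · rw [hS] at hc
    have h1 : (n : ℝ) ≤ (16 * (K.card : ℝ)) ^ 2 := by exact_mod_cast hc
    have h2 : Real.sqrt n ≤ 16 * (K.card : ℝ) := by
      rw [← Real.sqrt_sq (show (0 : ℝ) ≤ 16 * (K.card : ℝ) by positivity)]
      exact Real.sqrt_le_sqrt h1
    linarith
  · obtain ⟨P, h1, h2⟩ := hg
    have himg : ∀ X : Set Pt, (sh ε).symm '' (sh ε '' X) = X := fun X => by
      rw [← image_comp]; simp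
    refine ⟨P.map (sh ε).symm, ?_, ?_⟩
    · have : range (P.map (sh ε).symm).vtx = (sh ε).symm '' range P.vtx := by
        rw [← range_comp]; rfl
      rw [this, h1, hE, himg]
    · intro s hs
      have := (image_mono (h2 s hs)).trans (map_closedRegion (sh ε).symm P)
      rwa [hSg, himg] at this
end
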